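/- There exists a constant δ > 0 such that P(N = ∞) ≥ δ, where N = lim_{H→∞} N_H = Σ_{h=1}^∞ Σ_{k∈I_h∩ℤ} Σ_{x=1}^∞ 1_{A_{x,h}^{(k)}}. -/

import Mathlib

set_option autoImplicit false
namespace FavSites

def stp (c : Bool) : ℤ := if c then 1 else -1

def pos (x0 : ℤ) (b : ℕ → Bool) : ℕ → ℤ
  | 0 => x0
  | t + 1 => pos x0 b t + stp (b t)

def up (x0 : ℤ) (b : ℕ → Bool) : ℕ → ℤ → ℕ
  | 0, _ => 0
  | t + 1, y => up x0 b t y + if pos x0 b t = y ∧ b t = true then 1 else 0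

def dn (x0 : ℤ) (b : ℕ → Bool) : ℕ → ℤ → ℕ
  | 0, _ => 0
  | t + 1, y => dn x0 b t y + if pos x0 b t = y ∧ b t = false then 1 else 0

def od (x0 : ℤ) (b : ℕ → Bool) : ℕ → ℤ → ℕ
  | 0, _ => 0
  | t + 1, y => od x0 b t y + if pos x0 b t = y then 1 else 0

def lt (x0 : ℤ) (b : ℕ → Bool) : ℕ → ℤ → ℕ
  | 0, _ => 0
  | t + 1, y => lt x0 b t y + if pos x0 b (t + 1) = y then 1 else 0

def cu (f : ℕ → Bool) : ℕ → ℕ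
  | 0 => 0
  | n + 1 => cu f n + if f n = true then 1 else 0

def cd (f : ℕ → Bool) : ℕ → ℕ
  | 0 => 0
  | n + 1 => cd f n + if f n = false then 1 else 0

def sk (η : ℤ × ℕ → Bool) (y : ℤ) : ℕ → Bool := fun n => η (y, n)

def Fol (η : ℤ × ℕ → Bool) (x0 : ℤ) (b : ℕ → Bool) (t : ℕ) : Prop :=
  ∀ s, s < t → b s = η (pos x0 b s, od x0 b s (pos x0 b s))

theorem stp_true : stp true = 1 := rfl
theorem stp_false : stp false = -1 := rfl

theorem cu_add_cd (f : ℕ → Bool) (n : ℕ) : cu f n + cd f n = n := by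
  induction n with
  | zero => rfl
  | succ n ih =>
    simp only [cu, cd]; cases h : f n <;> simp <;> omega

theorem cu_mono (f : ℕ → Bool) : Monotone (cu f) :=
  monotone_nat_of_le_succ fun n => by simp only [cu]; omega

theorem cd_mono (f : ℕ → Bool) : Monotone (cd f) :=
  monotone_nat_of_le_succ fun n => by simp only [cd]; omega

theorem od_mono (x0 : ℤ) (b : ℕ → Bool) (y : ℤ) : Monotone (fun t => od x0 b t y) :=
  monotone_nat_of_le_succ fun n => by simp only [od]; omega

theorem lt_mono (x0 : ℤ) (b : ℕ → Bool) (y : ℤ) : Monotone (fun t => lt x0 b t y) :=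
  monotone_nat_of_le_succ fun n => by simp only [lt]; omega

theorem up_mono (x0 : ℤ) (b : ℕ → Bool) (y : ℤ) : Monotone (fun t => up x0 b t y) :=
  monotone_nat_of_le_succ fun n => by simp only [up]; omega

theorem dn_mono (x0 : ℤ) (b : ℕ → Bool) (y : ℤ) : Monotone (fun t => dn x0 b t y) :=
  monotone_nat_of_le_succ fun n => by simp only [dn]; omega

/-- arrivals and departures -/
theorem od_lt (x0 : ℤ) (b : ℕ → Bool) (t : ℕ) (y : ℤ) :
    od x0 b t y + (if pos x0 b t = y then 1 else 0) = lt x0 b t y + (if x0 = y then 1 else 0) := by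
  induction t with
  | zero => rfl
  | succ t ih => simp only [od, lt]; omega

theorem up_add_dn (x0 : ℤ) (b : ℕ → Bool) (t : ℕ) (y : ℤ) :
    up x0 b t y + dn x0 b t y = od x0 b t y := by
  induction t with
  | zero => rfl
  | succ t ih =>
    simp only [od, up, dn]
    cases h : b t <;> by_cases h' : pos x0 b t = y <;> simp [h'] <;> omega

theorem crossing (x0 : ℤ) (b : ℕ → Bool) (t : ℕ) (y : ℤ) :
    (up x0 b t y : ℤ) + (if y + 1 ≤ x0 then 1 else 0)
      = dn x0 b t (y + 1) + (if y + 1 ≤ pos x0 b t then 1 else 0) := by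
  induction t with
  | zero => simp [up, dn, pos]
  | succ t ih =>
    simp only [up, dn, pos]
    push_cast
    rcases Bool.eq_false_or_eq_true (b t) with h | h
    · simp only [h, stp_true]
      split_ifs at * <;> simp_all <;> omega
    · simp only [h, stp_false]
      split_ifs at * <;> simp_all <;> omega

theorem lt_eq (x0 : ℤ) (b : ℕ → Bool) (t : ℕ) (y : ℤ) :
    lt x0 b t y = up x0 b t (y - 1) + dn x0 b t (y + 1) := by
  induction t with
  | zero => rfl
  | succ t ih =>
    simp only [lt, up, dn, pos]
    rcases Bool.eq_false_or_eq_true (b t) with h | h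
    · simp only [h, stp_true]
      split_ifs at * <;> simp_all <;> omega
    · simp only [h, stp_false]
      split_ifs at * <;> simp_all <;> omega

theorem Fol.mono {η : ℤ × ℕ → Bool} {x0 : ℤ} {b : ℕ → Bool} {t s : ℕ} (h : Fol η x0 b t)
    (hs : s ≤ t) : Fol η x0 b s := fun r hr => h r (by omega)

theorem Fol.up_eq {η : ℤ × ℕ → Bool} {x0 : ℤ} {b : ℕ → Bool} {t : ℕ} (h : Fol η x0 b t) (y : ℤ) :
    up x0 b t y = cu (sk η y) (od x0 b t y) := by
  induction t with
  | zero => rfl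
  | succ t ih =>
    have h1 := ih (h.mono (Nat.le_succ t))
    have h2 := h t (Nat.lt_succ_self t)
    simp only [up, od]
    by_cases h' : pos x0 b t = y
    · subst h'
      simp only [if_true, cu, h1, true_and]
      rw [← h1, h2]; rfl
    · simp [h', h1]

theorem Fol.dn_eq {η : ℤ × ℕ → Bool} {x0 : ℤ} {b : ℕ → Bool} {t : ℕ} (h : Fol η x0 b t) (y : ℤ) :
    dn x0 b t y = cd (sk η y) (od x0 b t y) := by
  have h1 := h.up_eq y
  have h2 := up_add_dn x0 b t y
  have h3 := cu_add_cd (sk η y) (od x0 b t y)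
  omega

/-- Least action principle -/
theorem lap {η : ℤ × ℕ → Bool} {x0 : ℤ} {b : ℕ → Bool} {t : ℕ} (h : Fol η x0 b t)
    (N : ℤ → ℕ) (Y : Set ℤ)
    (hY : ∀ y ∈ Y, (if x0 = y then 1 else 0) + cu (sk η (y - 1)) (N (y - 1))
      + cd (sk η (y + 1)) (N (y + 1)) ≤ N y)
    (hN : ∀ z, z ∉ Y → od x0 b t z ≤ N z) :
    ∀ s, s ≤ t → (∀ z, od x0 b s z ≤ N z) ∧
      ∀ y ∈ Y, od x0 b s y + (if pos x0 b s = y then 1 else 0) ≤ N y := by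
  intro s
  induction s with
  | zero =>
    intro _
    refine ⟨fun z => by simp [od], fun y hy => ?_⟩
    have := hY y hy
    have h0 : od x0 b 0 y + (if pos x0 b 0 = y then 1 else 0) = if x0 = y then 1 else 0 :=
      Nat.zero_add _
    omega
  | succ s ih =>
    intro hs
    obtain ⟨h1, h2⟩ := ih (by omega)
    have key : ∀ z, od x0 b (s + 1) z ≤ N z := by
      intro z
      by_cases hz : z ∈ Y
      · simpa only [od] using h2 z hz
      · exact (od_mono x0 b z hs).trans (hN z hz)
    refine ⟨key, fun y hy => ?_⟩
    rw [od_lt, lt_eq, (h.mono hs).up_eq, (h.mono hs).dn_eq]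
    have := hY y hy
    have a1 := cu_mono (sk η (y - 1)) (key (y - 1))
    have a2 := cd_mono (sk η (y + 1)) (key (y + 1))
    omega

/-! following the stacks -/
def wst (η : ℤ × ℕ → Bool) (x0 : ℤ) : ℕ → ℤ × (ℤ → ℕ)
  | 0 => (x0, fun _ => 0)
  | t + 1 => ((wst η x0 t).1 + stp (η ((wst η x0 t).1, (wst η x0 t).2 (wst η x0 t).1)),
      fun y => (wst η x0 t).2 y + if (wst η x0 t).1 = y then 1 else 0)

def wlk (η : ℤ × ℕ → Bool) (x0 : ℤ) (t : ℕ) : Bool :=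
  η ((wst η x0 t).1, (wst η x0 t).2 (wst η x0 t).1)

theorem wst_eq (η : ℤ × ℕ → Bool) (x0 : ℤ) (t : ℕ) :
    pos x0 (wlk η x0) t = (wst η x0 t).1 ∧ ∀ y, od x0 (wlk η x0) t y = (wst η x0 t).2 y := by
  induction t with
  | zero => exact ⟨rfl, fun _ => rfl⟩
  | succ t ih =>
    refine ⟨?_, fun y => ?_⟩
    · simp only [pos, wst, ih.1]; rfl
    · simp only [od, wst, ih.1, ih.2]

theorem fol_wlk (η : ℤ × ℕ → Bool) (x0 : ℤ) (t : ℕ) : Fol η x0 (wlk η x0) t := by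
  intro s _
  rw [(wst_eq η x0 s).1, (wst_eq η x0 s).2]; rfl

/-- dependence on prefix -/
theorem pos_congr {x0 : ℤ} {b b' : ℕ → Bool} {t : ℕ} (h : ∀ s, s < t → b s = b' s) :
    pos x0 b t = pos x0 b' t := by
  induction t with
  | zero => rfl
  | succ t ih =>
    simp only [pos]
    rw [ih (fun s hs => h s (by omega)), h t (by omega)]

theorem od_congr {x0 : ℤ} {b b' : ℕ → Bool} {t : ℕ} (h : ∀ s, s < t → b s = b' s) (y : ℤ) :
    od x0 b t y = od x0 b' t y := by
  induction t with
  | zero => rfl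
  | succ t ih =>
    simp only [od]
    rw [ih (fun s hs => h s (by omega)), pos_congr (fun s hs => h s (Nat.lt_succ_of_lt hs))]

theorem up_congr {x0 : ℤ} {b b' : ℕ → Bool} {t : ℕ} (h : ∀ s, s < t → b s = b' s) (y : ℤ) :
    up x0 b t y = up x0 b' t y := by
  induction t with
  | zero => rfl
  | succ t ih =>
    simp only [up]
    rw [ih (fun s hs => h s (by omega)), pos_congr (fun s hs => h s (Nat.lt_succ_of_lt hs)),
      h t (by omega)]

theorem dn_congr {x0 : ℤ} {b b' : ℕ → Bool} {t : ℕ} (h : ∀ s, s < t → b s = b' s) (y : ℤ) :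
    dn x0 b t y = dn x0 b' t y := by
  have h1 := up_add_dn x0 b t y
  have h2 := up_add_dn x0 b' t y
  rw [up_congr h, od_congr h] at h1
  omega

theorem lt_congr {x0 : ℤ} {b b' : ℕ → Bool} {t : ℕ} (h : ∀ s, s < t → b s = b' s) (y : ℤ) :
    lt x0 b t y = lt x0 b' t y := by
  rw [lt_eq, lt_eq, up_congr h, dn_congr h]

theorem Fol.eq_wlk {η : ℤ × ℕ → Bool} {x0 : ℤ} {b : ℕ → Bool} {t : ℕ} (h : Fol η x0 b t) :
    ∀ s, s < t → b s = wlk η x0 s := by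
  intro s
  induction s using Nat.strong_induction_on with
  | _ s ih =>
    intro hs
    have h1 : ∀ r, r < s → b r = wlk η x0 r := fun r hr => ih r hr (by omega)
    rw [h s hs, fol_wlk η x0 (s + 1) s (by omega), pos_congr h1, od_congr h1]

theorem Fol.congr {η η' : ℤ × ℕ → Bool} {x0 : ℤ} {b b' : ℕ → Bool} {t : ℕ} (h : Fol η x0 b t)
    (hb : ∀ s, s < t → b s = b' s)
    (hη : ∀ s, s < t → η (pos x0 b s, od x0 b s (pos x0 b s))
      = η' (pos x0 b s, od x0 b s (pos x0 b s))) : Fol η' x0 b' t := by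
  intro s hs
  have h1 : ∀ r, r < s → b r = b' r := fun r hr => hb r (by omega)
  rw [← hb s hs, h s hs, hη s hs, pos_congr h1, od_congr h1]

end FavSites

set_option autoImplicit false
set_option linter.all false
namespace FavSites
open MeasureTheory

noncomputable def coin : Measure Bool := (2 : ENNReal)⁻¹ • Measure.count

theorem coin_singleton (c : Bool) : coin {c} = 2⁻¹ := by
  simp [coin]

instance : IsProbabilityMeasure coin := ⟨by
  have : (Set.univ : Set Bool) = {true} ∪ {false} := by ext c; cases c <;> simp
  rw [this, measure_union (by simp) (by simp), coin_singleton, coin_singleton]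
  exact ENNReal.inv_two_add_inv_two⟩

noncomputable def sg (ι : Type) : Measure (ι → Bool) := Measure.infinitePi (fun _ => coin)

instance (ι : Type) : IsProbabilityMeasure (sg ι) := by unfold sg; infer_instance

def cyl {ι : Type} (s : Finset ι) (w : ι → Bool) : Set (ι → Bool) := {η | ∀ i ∈ s, η i = w i}

theorem cyl_meas {ι : Type} (s : Finset ι) (w : ι → Bool) : MeasurableSet (cyl s w) := by
  have : cyl s w = ⋂ i ∈ s, {η | η i = w i} := by ext η; simp [cyl]
  rw [this]
  exact Finset.measurableSet_biInter _ fun i _ => (measurable_pi_apply i) (measurableSet_singleton _)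

theorem sg_cyl {ι : Type} (s : Finset ι) (w : ι → Bool) : sg ι (cyl s w) = 2⁻¹ ^ s.card := by
  have : cyl s w = Set.pi (s : Set ι) (fun i => {w i}) := by ext η; simp [cyl, Set.mem_pi]
  rw [this, sg, Measure.infinitePi_pi _ (fun i _ => measurableSet_singleton _)]
  simp [coin_singleton]

theorem eq_sg {ι : Type} (ν : Measure (ι → Bool)) [IsProbabilityMeasure ν]
    (h : ∀ s w, ν (cyl s w) = 2⁻¹ ^ s.card) : ν = sg ι := by
  classical
  apply Measure.eq_infinitePi
  intro s t _
  by_cases he : ∃ i ∈ s, t i = ∅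
  · obtain ⟨i, hi, hti⟩ := he
    have : Set.pi (s : Set ι) t = ∅ := Set.pi_eq_empty (i := i) (by simpa using hi) hti
    rw [this, measure_empty]
    exact (Finset.prod_eq_zero hi (by simp [hti])).symm
  · push Not at he
    let s' := s.filter (fun i => t i ≠ Set.univ)
    let w : ι → Bool := fun i => if true ∈ t i then true else false
    have hw : ∀ i ∈ s, t i ≠ Set.univ → t i = {w i} := by
      intro i hi hu
      have h1 := he i hi
      ext c
      simp only [w]
      by_cases h2 : true ∈ t i <;> by_cases h3 : false ∈ t i
      · exact absurd (Set.eq_univ_of_forall (by intro c; cases c <;> assumption)) hu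
      · cases c <;> simp [h2, h3]
      · cases c <;> simp [h2, h3]
      · obtain ⟨c, hc⟩ := h1
        cases c <;> simp_all
    have h1 : Set.pi (s : Set ι) t = cyl s' w := by
      ext η
      simp only [Set.mem_pi, cyl, s', Finset.mem_filter, Finset.mem_coe, Set.mem_ofPred_eq]
      constructor
      · rintro h i ⟨hi, hu⟩
        have := h i hi
        rw [hw i hi hu] at this
        exact this
      · intro h i hi
        by_cases hu : t i = Set.univ
        · rw [hu]; trivial
        · rw [hw i hi hu]; exact h i ⟨hi, hu⟩
    rw [h1, h, Finset.card_filter, ← Finset.prod_pow_eq_pow_sum]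
    apply Finset.prod_congr rfl
    intro i hi
    by_cases hu : t i = Set.univ
    · rw [hu, if_neg (by simp), pow_zero, measure_univ]
    · rw [if_pos hu, hw i hi hu, coin_singleton, pow_one]

def DepOn {ι : Type} (S : Set ι) (E : Set (ι → Bool)) : Prop :=
  ∀ η η' : ι → Bool, (∀ i ∈ S, η i = η' i) → (η ∈ E → η' ∈ E)

theorem DepOn.mono {ι : Type} {S T : Set ι} {E : Set (ι → Bool)} (h : DepOn S E) (hST : S ⊆ T) :
    DepOn T E := fun η η' hh => h η η' fun i hi => hh i (hST hi)

theorem DepOn.inter {ι : Type} {S : Set ι} {E F : Set (ι → Bool)} (h : DepOn S E)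
    (h' : DepOn S F) : DepOn S (E ∩ F) :=
  fun η η' hh hE => ⟨h η η' hh hE.1, h' η η' hh hE.2⟩

theorem DepOn.meas {ι : Type} {s : Finset ι} {E : Set (ι → Bool)} (h : DepOn (s : Set ι) E) :
    MeasurableSet E := by
  classical
  have : E = (fun η : ι → Bool => fun i : s => η i) ⁻¹'
      {u | (fun i => if hi : i ∈ s then u ⟨i, hi⟩ else false) ∈ E} := by
    ext η
    simp only [Set.mem_preimage, Set.mem_ofPred_eq]
    constructor
    · apply h; intro i hi; simp [Finset.mem_coe.1 hi]
    · apply h; intro i hi; simp [Finset.mem_coe.1 hi]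
  rw [this]
  exact (measurable_pi_lambda _ fun i => measurable_pi_apply _) (Set.toFinite _).measurableSet

open Classical in
noncomputable def mrg {ι : Type} (S : Set ι) (p : (ι → Bool) × (ι → Bool)) : ι → Bool :=
  fun i => if i ∈ S then p.1 i else p.2 i

theorem mrg_meas {ι : Type} (S : Set ι) : Measurable (mrg S) := by
  classical
  refine measurable_pi_lambda _ fun i => ?_
  by_cases h : i ∈ S
  · simp only [mrg, h, if_true]; fun_prop
  · simp only [mrg, h, if_false]; fun_prop

theorem map_mrg {ι : Type} (S : Set ι) : ((sg ι).prod (sg ι)).map (mrg S) = sg ι := by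
  classical
  have : IsProbabilityMeasure (((sg ι).prod (sg ι)).map (mrg S)) :=
    Measure.isProbabilityMeasure_map (mrg_meas S).aemeasurable
  apply eq_sg
  intro s w
  rw [Measure.map_apply (mrg_meas S) (cyl_meas s w)]
  have : mrg S ⁻¹' (cyl s w) = cyl (s.filter (· ∈ S)) w ×ˢ cyl (s.filter (· ∉ S)) w := by
    ext ⟨η, η'⟩
    simp only [Set.mem_preimage, cyl, Set.mem_ofPred_eq, mrg, Set.mem_prod, Finset.mem_filter]
    constructor
    · intro h
      refine ⟨fun i hi => ?_, fun i hi => ?_⟩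
      · simpa [hi.2] using h i hi.1
      · simpa [hi.2] using h i hi.1
    · rintro ⟨h1, h2⟩ i hi
      by_cases hS : i ∈ S
      · simpa [hS] using h1 i ⟨hi, hS⟩
      · simpa [hS] using h2 i ⟨hi, hS⟩
  rw [this, Measure.prod_prod, sg_cyl, sg_cyl, ← pow_add, Finset.card_filter_add_card_filter_not]

theorem indep {ι : Type} {S T : Set ι} (hST : Disjoint S T) {E F : Set (ι → Bool)}
    (hE : DepOn S E) (hF : DepOn T F) (mE : MeasurableSet E) (mF : MeasurableSet F) :
    (sg ι).real (E ∩ F) = (sg ι).real E * (sg ι).real F := by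
  have h1 : mrg S ⁻¹' (E ∩ F) = E ×ˢ F := by
    ext ⟨η, η'⟩
    simp only [Set.mem_preimage, Set.mem_inter_iff, Set.mem_prod]
    have a1 : ∀ i ∈ S, mrg S (η, η') i = η i := fun i hi => by simp [mrg, hi]
    have a2 : ∀ i ∈ T, mrg S (η, η') i = η' i := fun i hi => by
      simp [mrg, Set.disjoint_right.1 hST hi]
    refine and_congr ⟨hE _ _ a1, hE _ _ fun i hi => (a1 i hi).symm⟩
      ⟨hF _ _ a2, hF _ _ fun i hi => (a2 i hi).symm⟩
  have h2 : sg ι (E ∩ F) = sg ι E * sg ι F := by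
    conv_lhs => rw [← map_mrg S]
    rw [Measure.map_apply (mrg_meas S) (mE.inter mF), h1, Measure.prod_prod]
  simp only [Measure.real, h2, ENNReal.toReal_mul]

theorem map_inj {ι κ : Type} (f : κ → ι) (hf : Function.Injective f) :
    (sg ι).map (fun η k => η (f k)) = sg κ :=
  Measure.map_infinitePi_infinitePi_of_inj hf

theorem real_inj {ι κ : Type} (f : κ → ι) (hf : Function.Injective f) {E : Set (κ → Bool)}
    (mE : MeasurableSet E) : (sg ι).real {η | (fun k => η (f k)) ∈ E} = (sg κ).real E := by
  simp only [Measure.real]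
  rw [← map_inj f hf, Measure.map_apply _ mE]
  · rfl
  · exact measurable_pi_lambda _ fun i => measurable_pi_apply _

/-- reflection of all bits -/
theorem map_not {ι : Type} : (sg ι).map (fun η k => !(η k)) = sg ι := by
  have hm : Measurable (fun (η : ι → Bool) k => !(η k)) :=
    measurable_pi_lambda _ fun i => (measurable_of_finite (fun c : Bool => !c)).comp (measurable_pi_apply i)
  have : IsProbabilityMeasure ((sg ι).map (fun η k => !(η k))) :=
    Measure.isProbabilityMeasure_map hm.aemeasurable
  apply eq_sg
  intro s w
  rw [Measure.map_apply hm (cyl_meas s w), ← sg_cyl s (fun i => !(w i))]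
  congr 1
  ext η
  simp only [Set.mem_preimage, cyl, Set.mem_ofPred_eq]
  refine forall₂_congr fun i _ => ?_
  cases η i <;> cases w i <;> simp

theorem real_not {ι : Type} {E : Set (ι → Bool)} (mE : MeasurableSet E) :
    (sg ι).real {η | (fun k => !(η k)) ∈ E} = (sg ι).real E := by
  simp only [Measure.real]
  conv_rhs => rw [← map_not]
  rw [Measure.map_apply _ mE]
  · rfl
  · exact measurable_pi_lambda _ fun i =>
      (measurable_of_finite (fun c : Bool => !c)).comp (measurable_pi_apply i)

theorem real_cyl {ι : Type} (s : Finset ι) (w : ι → Bool) :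
    (sg ι).real (cyl s w) = (1 / 2 : ℝ) ^ s.card := by
  simp [Measure.real, sg_cyl]

/-- characterization by prefixes -/
theorem eq_sg_nat (ν : Measure (ℕ → Bool)) [IsProbabilityMeasure ν]
    (h : ∀ n w, ν (cyl (Finset.range n) w) = 2⁻¹ ^ n) : ν = sg ℕ := by
  classical
  apply eq_sg
  intro s w
  obtain ⟨n, hn⟩ : ∃ n, s ⊆ Finset.range n := by
    obtain ⟨n, hn⟩ := s.exists_nat_subset_range; exact ⟨n, hn⟩
  rw [← sg_cyl]
  let r : (ℕ → Bool) → (Fin n → Bool) := fun b i => b i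
  have hr : Measurable r := measurable_pi_lambda _ fun i => measurable_pi_apply _
  have key : ν.map r = (sg ℕ).map r := by
    apply Measure.ext_of_singleton
    intro u
    rw [Measure.map_apply hr (measurableSet_singleton _), Measure.map_apply hr (measurableSet_singleton _)]
    have : r ⁻¹' {u} = cyl (Finset.range n) (fun i => if hi : i < n then u ⟨i, hi⟩ else false) := by
      ext b
      simp only [Set.mem_preimage, Set.mem_singleton_iff, cyl, Set.mem_ofPred_eq, Finset.mem_range]
      constructor
      · rintro rfl i hi; simp [hi, r]
      · intro hh; ext i; simpa [r] using hh i i.2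
    rw [this, h, sg_cyl, Finset.card_range]
  have : cyl s w = r ⁻¹' {u | ∀ i : Fin n, (i : ℕ) ∈ s → u i = w i} := by
    ext b
    simp only [Set.mem_preimage, cyl, Set.mem_ofPred_eq, r]
    exact ⟨fun hh i hi => hh i hi, fun hh i hi => hh ⟨i, Finset.mem_range.1 (hn hi)⟩ hi⟩
  rw [this, ← Measure.map_apply hr (Set.toFinite _).measurableSet,
    ← Measure.map_apply hr (Set.toFinite _).measurableSet, key]

/-! the walk following the stacks is a simple random walk -/
def idx (x0 : ℤ) (w : ℕ → Bool) (s : ℕ) : ℤ × ℕ := (pos x0 w s, od x0 w s (pos x0 w s))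

theorem idx_inj (x0 : ℤ) (w : ℕ → Bool) : Function.Injective (idx x0 w) := by
  have key : ∀ s s', s < s' → idx x0 w s ≠ idx x0 w s' := by
    intro s s' hs h
    simp only [idx, Prod.mk.injEq] at h
    have h1 := od_mono x0 w (pos x0 w s) (Nat.succ_le_of_lt hs)
    simp only [Nat.succ_eq_add_one, od, if_true] at h1
    rw [← h.1] at h
    omega
  intro s s' h
  rcases Nat.lt_trichotomy s s' with h1 | h1 | h1
  · exact absurd h (key _ _ h1)
  · exact h1
  · exact absurd h.symm (key _ _ h1)

theorem fol_cyl (x0 : ℤ) (w : ℕ → Bool) (t : ℕ) :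
    {η | Fol η x0 w t} = cyl ((Finset.range t).image (idx x0 w)) (Function.extend (idx x0 w) w
      (fun _ => false)) := by
  ext η
  simp only [Set.mem_ofPred_eq, cyl, Finset.mem_image, Finset.mem_range, Fol]
  constructor
  · rintro h i ⟨s, hs, rfl⟩
    rw [(idx_inj x0 w).extend_apply, h s hs]; rfl
  · intro h s hs
    have := h _ ⟨s, hs, rfl⟩
    rw [(idx_inj x0 w).extend_apply] at this
    exact this.symm

theorem fol_meas (x0 : ℤ) (w : ℕ → Bool) (t : ℕ) : MeasurableSet {η | Fol η x0 w t} := by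
  rw [fol_cyl]; exact cyl_meas _ _

theorem fol_measure (x0 : ℤ) (w : ℕ → Bool) (t : ℕ) :
    sg (ℤ × ℕ) {η | Fol η x0 w t} = 2⁻¹ ^ t := by
  rw [fol_cyl, sg_cyl, Finset.card_image_of_injective _ (idx_inj x0 w), Finset.card_range]

theorem wlk_pre (x0 : ℤ) (w : ℕ → Bool) (n : ℕ) :
    (fun η => wlk η x0) ⁻¹' (cyl (Finset.range n) w) = {η | Fol η x0 w n} := by
  ext η
  simp only [Set.mem_preimage, cyl, Set.mem_ofPred_eq, Finset.mem_range]
  constructor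
  · intro h
    exact (fol_wlk η x0 n).congr (fun s hs => h s hs) (fun s _ => rfl)
  · intro h s hs
    exact (h.eq_wlk s hs).symm

theorem wlk_meas (x0 : ℤ) : Measurable (fun η => wlk η x0) := by
  classical
  refine measurable_pi_lambda _ fun t => ?_
  refine measurable_to_countable' fun c => ?_
  have : (fun η => wlk η x0 t) ⁻¹' {c} = ⋃ u : {u : Fin (t + 1) → Bool // u (Fin.last t) = c},
      {η | Fol η x0 (fun i => if hi : i < t + 1 then u.1 ⟨i, hi⟩ else false) (t + 1)} := by
    ext η
    simp only [Set.mem_preimage, Set.mem_singleton_iff, Set.mem_iUnion, Set.mem_ofPred_eq]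
    constructor
    · intro h
      refine ⟨⟨fun i => wlk η x0 i, h⟩, ?_⟩
      refine (fol_wlk η x0 (t + 1)).congr (fun s hs => ?_) (fun s _ => rfl)
      simp [hs]
    · rintro ⟨u, hu⟩
      have := hu.eq_wlk t (by omega)
      rw [← this]
      simp only [Nat.lt_succ_self, dif_pos]; exact u.2
  rw [this]
  exact MeasurableSet.iUnion fun u => fol_meas _ _ _

theorem map_wlk (x0 : ℤ) : (sg (ℤ × ℕ)).map (fun η => wlk η x0) = sg ℕ := by
  have : IsProbabilityMeasure ((sg (ℤ × ℕ)).map (fun η => wlk η x0)) :=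
    Measure.isProbabilityMeasure_map (wlk_meas x0).aemeasurable
  apply eq_sg_nat
  intro n w
  rw [Measure.map_apply (wlk_meas x0) (cyl_meas _ _), wlk_pre, fol_measure]

theorem real_wlk (x0 : ℤ) {E : Set (ℕ → Bool)} (mE : MeasurableSet E) :
    (sg ℕ).real E = (sg (ℤ × ℕ)).real {η | wlk η x0 ∈ E} := by
  simp only [Measure.real]
  rw [← map_wlk x0, Measure.map_apply (wlk_meas x0) mE]
  rfl

/-- strong Markov property on a prefix -/
theorem markov (t : ℕ) (w : ℕ → Bool) {F : Set (ℕ → Bool)} (mF : MeasurableSet F) :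
    (sg ℕ).real (cyl (Finset.range t) w ∩ {b | (fun i => b (t + i)) ∈ F})
      = (sg ℕ).real (cyl (Finset.range t) w) * (sg ℕ).real F := by
  rw [← real_inj (fun i => t + i) (fun i j h => Nat.add_left_cancel h) mF]
  refine indep (S := {i | i < t}) (T := {i | t ≤ i}) ?_ ?_ ?_ (cyl_meas _ _) ?_
  · rw [Set.disjoint_left]; intro i hi hi'; simp only [Set.mem_ofPred_eq] at *; omega
  · intro η η' h hE i hi
    rw [← h i (Finset.mem_range.1 hi)]; exact hE i hi
  · intro η η' h hE
    simp only [Set.mem_ofPred_eq] at *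
    convert hE using 2 with i
    exact (h _ (by simp)).symm
  · exact (measurable_pi_lambda _ fun i => measurable_pi_apply _) mF

/-! binomial -/
noncomputable def bin (n i : ℕ) : ℝ := (n.choose i : ℝ) / 2 ^ n

theorem cu_congr {f g : ℕ → Bool} {n : ℕ} (h : ∀ s, s < n → f s = g s) : cu f n = cu g n := by
  induction n with
  | zero => rfl
  | succ n ih => simp only [cu]; rw [ih (fun s hs => h s (by omega)), h n (by omega)]

theorem cd_congr {f g : ℕ → Bool} {n : ℕ} (h : ∀ s, s < n → f s = g s) : cd f n = cd g n := by
  have h1 := cu_add_cd f n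
  have h2 := cu_add_cd g n
  rw [cu_congr h] at h1
  omega

/-- any predicate on the first `n` bits is measurable -/
theorem meas_fstbits {E : Set (ℕ → Bool)} (n : ℕ)
    (h : ∀ f g : ℕ → Bool, (∀ s, s < n → f s = g s) → f ∈ E → g ∈ E) : MeasurableSet E :=
  DepOn.meas (s := Finset.range n) (fun η η' hh => h η η' (fun s hs => hh s (by simpa using hs)))

theorem cu_meas (n i : ℕ) : MeasurableSet {f : ℕ → Bool | cu f n = i} :=
  meas_fstbits n fun f g h hf => by
    simp only [Set.mem_ofPred_eq] at *; rw [← hf, cu_congr h]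

theorem bit_meas (n : ℕ) (c : Bool) : MeasurableSet {f : ℕ → Bool | f n = c} :=
  measurableSet_eq_fun (measurable_pi_apply n) measurable_const

theorem real_bit {ι : Type} (n : ι) (c : Bool) : (sg ι).real {f | f n = c} = 1 / 2 := by
  have : {f : ι → Bool | f n = c} = cyl {n} (fun _ => c) := by ext f; simp [cyl]
  rw [this, real_cyl]; simp

theorem indep_bit (n : ℕ) (c : Bool) {E : Set (ℕ → Bool)}
    (h : ∀ f g : ℕ → Bool, (∀ s, s < n → f s = g s) → f ∈ E → g ∈ E) :
    (sg ℕ).real (E ∩ {f | f n = c}) = (sg ℕ).real E / 2 := by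
  rw [indep (S := {i | i < n}) (T := {n}) (by simp) (fun η η' hh => h η η' hh)
    (fun η η' hh hE => ?_) (meas_fstbits n h) (bit_meas n c), real_bit]
  · ring
  · simp only [Set.mem_ofPred_eq] at *; rw [← hE, hh n rfl]

theorem real_cu (n i : ℕ) : (sg ℕ).real {f | cu f n = i} = bin n i := by
  induction n generalizing i with
  | zero =>
    cases i with
    | zero => simp [cu, bin]
    | succ i => simp [cu, bin]
  | succ n ih =>
    have hd : ∀ i, ∀ f g : ℕ → Bool, (∀ s, s < n → f s = g s) → f ∈ {f : ℕ → Bool | cu f n = i} →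
        g ∈ {f : ℕ → Bool | cu f n = i} := fun i f g h hf => by
      simp only [Set.mem_ofPred_eq] at *; rw [← hf, cu_congr h]
    cases i with
    | zero =>
      have : {f : ℕ → Bool | cu f (n + 1) = 0} = {f | cu f n = 0} ∩ {f | f n = false} := by
        ext f; simp only [cu, Set.mem_ofPred_eq, Set.mem_inter_iff]; cases f n <;> simp
      rw [this, indep_bit n false (hd 0), ih]
      simp [bin, pow_succ]; ring
    | succ i =>
      have : {f : ℕ → Bool | cu f (n + 1) = i + 1} = ({f | cu f n = i + 1} ∩ {f | f n = false}) ∪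
          ({f | cu f n = i} ∩ {f | f n = true}) := by
        ext f; simp only [cu, Set.mem_ofPred_eq, Set.mem_inter_iff, Set.mem_union]
        cases f n <;> simp
      rw [this, measureReal_union _ ((cu_meas n i).inter (bit_meas n true)),
        indep_bit n false (hd _), indep_bit n true (hd _), ih, ih]
      · simp only [bin, Nat.choose_succ_succ, pow_succ]; push_cast; ring
      · rw [Set.disjoint_left]; rintro f ⟨_, h1⟩ ⟨_, h2⟩
        simp only [Set.mem_ofPred_eq] at *; simp [h1] at h2

theorem sk_inj (y : ℤ) : Function.Injective (fun n : ℕ => (y, n)) := fun a b h => by simpa using h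

theorem real_sk (y : ℤ) {E : Set (ℕ → Bool)} (mE : MeasurableSet E) :
    (sg (ℤ × ℕ)).real {η | sk η y ∈ E} = (sg ℕ).real E :=
  real_inj (fun n : ℕ => (y, n)) (sk_inj y) mE

theorem sk_meas (y : ℤ) {E : Set (ℕ → Bool)} (mE : MeasurableSet E) :
    MeasurableSet {η : ℤ × ℕ → Bool | sk η y ∈ E} :=
  (measurable_pi_lambda (fun (η : ℤ × ℕ → Bool) n => η (y, n)) fun i => measurable_pi_apply _) mE

theorem sk_dep (y : ℤ) (E : Set (ℕ → Bool)) :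
    DepOn {p : ℤ × ℕ | p.1 = y} {η : ℤ × ℕ → Bool | sk η y ∈ E} := by
  intro η η' h hE
  have : sk η' y = sk η y := by funext n; exact (h (y, n) rfl).symm
  simpa only [Set.mem_ofPred_eq, this] using hE

end FavSites

set_option autoImplicit false
set_option linter.all false
namespace FavSites
open MeasureTheory

def FolAt (η : ℤ × ℕ → Bool) (x0 : ℤ) (b : ℕ → Bool) (t : ℕ) (y : ℤ) : Prop :=
  ∀ s, s < t → pos x0 b s = y → b s = η (y, od x0 b s y)

theorem Fol.at {η : ℤ × ℕ → Bool} {x0 : ℤ} {b : ℕ → Bool} {t : ℕ} (h : Fol η x0 b t) (y : ℤ) :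
    FolAt η x0 b t y := by
  intro s hs hy
  rw [h s hs, hy]

theorem FolAt.mono {η : ℤ × ℕ → Bool} {x0 : ℤ} {b : ℕ → Bool} {t s : ℕ} {y : ℤ}
    (h : FolAt η x0 b t y) (hs : s ≤ t) : FolAt η x0 b s y := fun r hr => h r (by omega)

theorem FolAt.up_eq {η : ℤ × ℕ → Bool} {x0 : ℤ} {b : ℕ → Bool} {t : ℕ} {y : ℤ}
    (h : FolAt η x0 b t y) : up x0 b t y = cu (sk η y) (od x0 b t y) := by
  induction t with
  | zero => rfl
  | succ t ih =>
    have h1 := ih (h.mono (Nat.le_succ t))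
    have h2 := h t (Nat.lt_succ_self t)
    simp only [up, od]
    by_cases h' : pos x0 b t = y
    · simp only [h', if_true, cu, true_and]
      rw [← h1, h2 h']; rfl
    · simp [h', h1]

theorem FolAt.dn_eq {η : ℤ × ℕ → Bool} {x0 : ℤ} {b : ℕ → Bool} {t : ℕ} {y : ℤ}
    (h : FolAt η x0 b t y) : dn x0 b t y = cd (sk η y) (od x0 b t y) := by
  have h1 := h.up_eq
  have h2 := up_add_dn x0 b t y
  have h3 := cu_add_cd (sk η y) (od x0 b t y)
  omega

/-- odometers cannot stay below a finitely supported function -/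
theorem exceeds (x0 : ℤ) (b : ℕ → Bool) (N : ℤ → ℕ) (F : Finset ℤ) (hF : ∀ z, z ∉ F → N z = 0)
    (h : ∀ T z, od x0 b T z ≤ N z) : False := by
  have hp : ∀ s, pos x0 b s ∈ F := by
    intro s
    by_contra hs
    have h1 := h (s + 1) (pos x0 b s)
    rw [hF _ hs] at h1
    simp [od] at h1
  have hsum : ∀ T, ∑ z ∈ F, od x0 b T z = T := by
    intro T
    induction T with
    | zero => simp [od]
    | succ T ih =>
      simp only [od, Finset.sum_add_distrib, ih, Finset.sum_ite_eq, hp T, if_true]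
  have h1 := hsum (∑ z ∈ F, N z + 1)
  have h2 : ∑ z ∈ F, od x0 b (∑ z ∈ F, N z + 1) z ≤ ∑ z ∈ F, N z :=
    Finset.sum_le_sum fun z _ => h _ z
  omega

theorem od_support (x0 : ℤ) (b : ℕ → Bool) (t : ℕ) : ∃ F : Finset ℤ, ∀ z, z ∉ F → od x0 b t z = 0 := by
  classical
  refine ⟨(Finset.range t).image (pos x0 b), ?_⟩
  intro z hz
  induction t with
  | zero => rfl
  | succ t ih =>
    simp only [Finset.mem_image, Finset.mem_range, not_exists, not_and] at *
    have h1 := hz t (by omega)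
    simp only [od, h1, if_false, ih (fun s hs => hz s (by omega))]

def Trip (x0 : ℤ) (l0 : ℤ → ℕ) (h : ℕ) (b : ℕ → Bool) (t : ℕ) (a e : ℤ) : Prop :=
  pos x0 b t = e ∧ (e = a ∨ e = a + 1 ∨ e = a + 2) ∧
  ∀ y, if (y = a ∨ y = a + 1 ∨ y = a + 2) then l0 y + lt x0 b t y = h else l0 y + lt x0 b t y < h

def FirstAt (x0 : ℤ) (l0 : ℤ → ℕ) (h : ℕ) (y : ℤ) (b : ℕ → Bool) : Prop :=
  ∃ t, (∀ s, s < t → ∀ z, l0 z + lt x0 b s z < h) ∧ h ≤ l0 y + lt x0 b t y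

theorem first_pos {x0 : ℤ} {l0 : ℤ → ℕ} {h : ℕ} {y : ℤ} {b : ℕ → Bool} {t : ℕ}
    (hl : ∀ z, l0 z < h)
    (h1 : ∀ s, s < t → ∀ z, l0 z + lt x0 b s z < h) (h2 : h ≤ l0 y + lt x0 b t y) :
    pos x0 b t = y ∧ ∀ z, z ≠ y → l0 z + lt x0 b t z < h := by
  cases t with
  | zero => simp only [lt] at h2; have := hl y; omega
  | succ t =>
    have h3 := h1 t (by omega)
    have hy : pos x0 b (t + 1) = y := by
      by_contra hne
      simp only [lt, hne, if_false] at h2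
      have := h3 y; omega
    refine ⟨hy, fun z hz => ?_⟩
    have : pos x0 b (t + 1) ≠ z := by rw [hy]; exact fun h => hz h.symm
    simp only [lt, this, if_false]
    exact h3 z

theorem first_unique {x0 : ℤ} {l0 : ℤ → ℕ} {h : ℕ} {y y' : ℤ} {b : ℕ → Bool}
    (hl : ∀ z, l0 z < h) (h1 : FirstAt x0 l0 h y b) (h2 : FirstAt x0 l0 h y' b) : y = y' := by
  obtain ⟨t, h1, h1'⟩ := h1
  obtain ⟨t', h2, h2'⟩ := h2
  have : t = t' := by
    rcases Nat.lt_trichotomy t t' with h | h | h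
    · have := h2 t h y; omega
    · exact h
    · have := h1 t' h y'; omega
  subst this
  rw [← (first_pos hl h1 h1').1, ← (first_pos hl h2 h2').1]

/-- the odometer of a walk at a time when it sits in the triple -/
theorem stop_time {x0 : ℤ} {w : ℕ → Bool} {t : ℕ} {a : ℤ} {u : ℕ}
    (he : pos x0 w t = a ∨ pos x0 w t = a + 1 ∨ pos x0 w t = a + 2)
    (hu : u ≤ up x0 w t (a + 2)) :
    ∃ s, s ≤ t ∧ up x0 w s (a + 2) = u ∧
      (pos x0 w s = a ∨ pos x0 w s = a + 1 ∨ pos x0 w s = a + 2) := by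
  rcases hu.eq_or_lt with h | h
  · exact ⟨t, le_rfl, h.symm, he⟩
  · classical
    have hex : ∃ s, u < up x0 w s (a + 2) := ⟨t, h⟩
    have h1 := Nat.find_spec hex
    have h2 : ∀ s, s < Nat.find hex → ¬ u < up x0 w s (a + 2) := fun s hs => Nat.find_min hex hs
    have h3 : Nat.find hex ≤ t := Nat.find_le h
    generalize Nat.find hex = s at *
    cases s with
    | zero => simp [up] at h1
    | succ s =>
      have h4 := h2 s (by omega)
      simp only [up] at h1
      have h5 : pos x0 w s = a + 2 := by
        by_contra hne
        simp [hne] at h1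
        omega
      refine ⟨s, by omega, ?_, Or.inr (Or.inr h5)⟩
      split_ifs at h1 <;> omega

theorem cd_ivt (f : ℕ → Bool) (n q : ℕ) (h : q ≤ cd f n) : ∃ k, k ≤ n ∧ cd f k = q := by
  induction n with
  | zero => simp only [cd] at h; exact ⟨0, le_rfl, by simp only [cd]; omega⟩
  | succ n ih =>
    by_cases h1 : q ≤ cd f n
    · obtain ⟨k, hk, hq⟩ := ih h1; exact ⟨k, by omega, hq⟩
    · refine ⟨n + 1, le_rfl, ?_⟩
      simp only [cd] at *
      split_ifs at * <;> omega

theorem core {x0 : ℤ} {l0 : ℤ → ℕ} {h : ℕ} (hl : ∀ z, l0 z < h) {η : ℤ × ℕ → Bool}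
    {b : ℕ → Bool} (hb : ∀ t, Fol η x0 b t) {w : ℕ → Bool} {t : ℕ} {a e : ℤ}
    (hw : ∀ y, y ≠ a → y ≠ a + 1 → y ≠ a + 2 → FolAt η x0 w t y)
    (hT : Trip x0 l0 h w t a e) (hj : cu (sk η a) (od x0 w t a) = up x0 w t a) (q : ℕ)
    (h1 : cu (sk η (a + 1)) (up x0 w t a + q + if a + 1 ≤ x0 then 1 else 0) ≤ q)
    (h2 : cu (sk η (a + 2)) (q + (if a + 2 ≤ x0 then 1 else 0) + up x0 w t (a + 2))
      ≤ up x0 w t (a + 2)) :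
    FirstAt x0 l0 h a b ∨ FirstAt x0 l0 h (a + 1) b ∨ FirstAt x0 l0 h (a + 2) b := by
  classical
  obtain ⟨hpe, hee, hTr⟩ := hT
  -- the target at a+2
  obtain ⟨n, hn, hcd⟩ := cd_ivt (sk η (a + 2)) (q + (if a + 2 ≤ x0 then 1 else 0) + up x0 w t (a + 2))
    (q + (if a + 2 ≤ x0 then 1 else 0)) (by
      have := cu_add_cd (sk η (a + 2)) (q + (if a + 2 ≤ x0 then 1 else 0) + up x0 w t (a + 2))
      omega)
  have hcu := cu_add_cd (sk η (a + 2)) n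
  obtain ⟨s, hst, hus, hps⟩ := stop_time (x0 := x0) (w := w) (t := t) (a := a)
    (u := cu (sk η (a + 2)) n) (by rw [hpe]; exact hee) (by omega)
  set N1 := up x0 w t a + q + (if a + 1 ≤ x0 then 1 else 0) with hN1
  let N : ℤ → ℕ := fun y => if y ≤ a then od x0 w t y else if y = a + 1 then N1
    else if y = a + 2 then n else od x0 w s y
  have Na : ∀ y, y ≤ a → N y = od x0 w t y := fun y hy => by simp [N, hy]
  have Na1 : N (a + 1) = N1 := by simp [N]
  have Na2 : N (a + 2) = n := by simp [N]
  have Na3 : ∀ y, a + 3 ≤ y → N y = od x0 w s y := fun y hy => by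
    simp only [N]
    rw [if_neg (by omega), if_neg (by omega), if_neg (by omega)]
  -- action condition
  have hY : ∀ y ∈ {y : ℤ | y ≠ a}, (if x0 = y then 1 else 0) + cu (sk η (y - 1)) (N (y - 1))
      + cd (sk η (y + 1)) (N (y + 1)) ≤ N y := by
    intro y hy
    have hy : y ≠ a := hy
    rcases lt_or_gt_of_ne hy with hlt | hgt
    · -- left of a
      rw [Na y hlt.le, Na (y - 1) (by omega), Na (y + 1) (by omega)]
      rw [← (hw (y - 1) (by omega) (by omega) (by omega)).up_eq]
      have e1 : cd (sk η (y + 1)) (od x0 w t (y + 1)) = dn x0 w t (y + 1) := by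
        by_cases hya : y + 1 = a
        · rw [hya]
          have c1 := cu_add_cd (sk η a) (od x0 w t a)
          have c2 := up_add_dn x0 w t a
          omega
        · exact (hw (y + 1) (by omega) (by omega) (by omega)).dn_eq.symm
      rw [e1]
      have c1 := od_lt x0 w t y
      have c2 := lt_eq x0 w t y
      rw [if_neg (by omega : ¬ pos x0 w t = y)] at c1
      omega
    · by_cases hy1 : y = a + 1
      · subst hy1
        rw [Na1, show a + 1 - 1 = a by ring, show a + 1 + 1 = a + 2 by ring, Na2, Na a le_rfl, hj, hcd,
          hN1]
        split_ifs <;> omega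
      by_cases hy2 : y = a + 2
      · subst hy2
        rw [Na2, show a + 2 - 1 = a + 1 by ring, show a + 2 + 1 = a + 3 by ring, Na1, Na3 (a + 3) le_rfl]
        rw [← ((hw (a + 3) (by omega) (by omega) (by omega)).mono hst).dn_eq]
        have c1 := crossing x0 w s (a + 2)
        rw [show a + 2 + 1 = a + 3 by ring, if_neg (by omega : ¬ a + 3 ≤ pos x0 w s), hus] at c1
        split_ifs at * <;> omega
      · have e1 : cu (sk η (y - 1)) (N (y - 1)) = up x0 w s (y - 1) := by
          by_cases hy3 : y = a + 3
          · subst hy3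
            rw [show a + 3 - 1 = a + 2 by ring, Na2, hus]
          · rw [Na3 _ (by omega), ((hw (y - 1) (by omega) (by omega) (by omega)).mono hst).up_eq]
        rw [e1, Na3 (y + 1) (by omega), Na3 y (by omega),
          ← ((hw (y + 1) (by omega) (by omega) (by omega)).mono hst).dn_eq]
        have c1 := od_lt x0 w s y
        have c2 := lt_eq x0 w s y
        rw [if_neg (by omega : ¬ pos x0 w s = y)] at c1
        omega
  -- odometer bound at a before reaching level h
  have hNa : ∀ z, l0 z + lt x0 w t z ≤ h := fun z => by
    have := hTr z; split_ifs at this <;> omega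
  have hota : h - 1 + (if x0 = a then 1 else 0) ≤ l0 a + od x0 w t a := by
    have c1 := od_lt x0 w t a
    have c2 := hTr a
    simp only [true_or, if_true] at c2
    have : (if pos x0 w t = a then 1 else 0) ≤ 1 := by split_ifs <;> omega
    have := hl a
    omega
  have hbd : ∀ T, l0 a + lt x0 b T a < h → ∀ z, z ∉ {y : ℤ | y ≠ a} → od x0 b T z ≤ N z := by
    intro T hT z hz
    have hz : z = a := by simpa using hz
    subst hz
    rw [Na z le_rfl]
    have c1 := od_lt x0 b T z
    omega
  -- the level h is reached
  have hreach : ∃ T, ∃ z, h ≤ l0 z + lt x0 b T z := by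
    by_contra hcon
    push Not at hcon
    obtain ⟨F1, hF1⟩ := od_support x0 w t
    obtain ⟨F2, hF2⟩ := od_support x0 w s
    refine exceeds x0 b N (F1 ∪ F2 ∪ {a + 1, a + 2}) ?_ fun T =>
      (lap (hb T) N {y | y ≠ a} hY (hbd T (hcon T a)) T le_rfl).1
    intro z hz
    simp only [Finset.mem_union, Finset.mem_insert, Finset.mem_singleton, not_or] at hz
    simp only [N]
    rw [if_neg hz.2.1, if_neg hz.2.2, hF1 z hz.1.1, hF2 z hz.1.2]
    simp
  have hT1 := Nat.find_spec hreach
  have hT2 : ∀ T, T < Nat.find hreach → ¬ ∃ z, h ≤ l0 z + lt x0 b T z :=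
    fun T hT => Nat.find_min hreach hT
  generalize Nat.find hreach = T at *
  push Not at hT2
  obtain ⟨f, hf⟩ := hT1
  have hfp := first_pos hl hT2 hf
  have hfirst : FirstAt x0 l0 h f b := ⟨T, hT2, hf⟩
  by_cases hfa : f = a
  · subst hfa; exact Or.inl hfirst
  by_cases hfa1 : f = a + 1
  · subst hfa1; exact Or.inr (Or.inl hfirst)
  by_cases hfa2 : f = a + 2
  · subst hfa2; exact Or.inr (Or.inr hfirst)
  exfalso
  have hlap := (lap (hb T) N {y | y ≠ a} hY (hbd T (hfp.2 a (Ne.symm hfa))) T le_rfl).2 f hfa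
  rw [od_lt] at hlap
  have hNf : N f ≤ od x0 w t f := by
    by_cases hlt : f ≤ a
    · rw [Na f hlt]
    · rw [Na3 f (by omega)]; exact od_mono x0 w f hst
  have c1 := od_lt x0 w t f
  rw [if_neg (by rw [hpe]; omega)] at c1
  have c2 := hTr f
  rw [if_neg (by omega)] at c2
  omega

end FavSites

set_option autoImplicit false
set_option linter.all false
namespace FavSites
open MeasureTheory

/-- central binomial probabilities -/
theorem cb_rec (n : ℕ) : bin (2 * (n + 1)) (n + 1) * (2 * n + 2) = bin (2 * n) n * (2 * n + 1) := by
  have h := Nat.succ_mul_centralBinom_succ n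
  simp only [Nat.centralBinom] at h
  have h' : ((n : ℝ) + 1) * ((2 * (n + 1)).choose (n + 1) : ℝ) = 2 * (2 * n + 1) * ((2 * n).choose n : ℝ) := by
    exact_mod_cast h
  simp only [bin]
  rw [show 2 * (n + 1) = 2 * n + 2 by ring] at *
  rw [pow_add]
  field_simp
  nlinarith

theorem bin_nonneg (n i : ℕ) : 0 ≤ bin n i := by unfold bin; positivity

theorem cb_upper (n : ℕ) : bin (2 * n) n ^ 2 * (2 * n + 1) ≤ 1 := by
  induction n with
  | zero => simp [bin]
  | succ n ih =>
    have h := cb_rec n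
    have h1 : bin (2 * (n + 1)) (n + 1) = bin (2 * n) n * (2 * n + 1) / (2 * n + 2) := by
      field_simp; linarith
    rw [h1]
    refine le_trans ?_ ih
    have h2 : 0 ≤ bin (2 * n) n ^ 2 := sq_nonneg _
    push_cast
    rw [div_pow, div_mul_eq_mul_div, div_le_iff₀ (by positivity)]
    have : ((2 : ℝ) * n + 1) ^ 2 * (2 * (n + 1) + 1) ≤ (2 * n + 1) * (2 * n + 2) ^ 2 := by
      nlinarith [(Nat.cast_nonneg n : (0:ℝ) ≤ n)]
    nlinarith

theorem cb_lower (n : ℕ) (hn : 1 ≤ n) : 1 ≤ bin (2 * n) n ^ 2 * (4 * n) := by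
  induction n, hn using Nat.le_induction with
  | base => norm_num [bin, Nat.choose]
  | succ n hn ih =>
    have h := cb_rec n
    have h1 : bin (2 * (n + 1)) (n + 1) = bin (2 * n) n * (2 * n + 1) / (2 * n + 2) := by
      field_simp; linarith
    rw [h1]
    refine le_trans ih ?_
    have h2 : 0 ≤ bin (2 * n) n ^ 2 := sq_nonneg _
    push_cast
    rw [div_pow, div_mul_eq_mul_div, le_div_iff₀ (by positivity)]
    have : (4 * n : ℝ) * (2 * n + 2) ^ 2 ≤ ((2 : ℝ) * n + 1) ^ 2 * (4 * (n + 1)) := by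
      nlinarith [(Nat.cast_nonneg n : (0:ℝ) ≤ n)]
    nlinarith

theorem bin_odd (k : ℕ) : bin (2 * k + 1) k = bin (2 * (k + 1)) (k + 1) := by
  have h : (2 * (k + 1)).choose (k + 1) = 2 * (2 * k + 1).choose k := by
    rw [show 2 * (k + 1) = (2 * k + 1) + 1 by ring, Nat.choose_succ_succ, Nat.choose_symm_half]; ring
  simp only [bin]
  rw [h, show 2 * (k + 1) = (2 * k + 1) + 1 by ring, pow_succ 2 (2 * k + 1)]
  push_cast; field_simp

theorem bin_upper_sq (n i : ℕ) : bin n i ^ 2 * (n + 1) ≤ 1 := by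
  have h1 : bin n i ≤ bin n (n / 2) := by
    unfold bin; gcongr; exact_mod_cast Nat.choose_le_middle i n
  have h2 : bin n (n / 2) ^ 2 * (n + 1) ≤ 1 := by
    rcases Nat.even_or_odd' n with ⟨k, hk | hk⟩
    · have : n / 2 = k := by omega
      rw [this, hk]; push_cast; exact cb_upper k
    · have : n / 2 = k := by omega
      rw [this, hk, bin_odd]
      have := cb_upper (k + 1)
      push_cast at *
      nlinarith [sq_nonneg (bin (2 * (k + 1)) (k + 1))]
  have h3 := bin_nonneg n i
  have : bin n i ^ 2 ≤ bin n (n / 2) ^ 2 := by gcongr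
  nlinarith

theorem bin_upper (n i : ℕ) : bin n i ≤ 1 / √((n : ℝ) + 1) := by
  have h0 : (0 : ℝ) < (n : ℝ) + 1 := by positivity
  rw [le_div_iff₀ (Real.sqrt_pos.2 h0)]
  have h := bin_upper_sq n i
  have : (bin n i * √((n : ℝ) + 1)) ^ 2 ≤ 1 := by
    rw [mul_pow, Real.sq_sqrt h0.le]; exact h
  nlinarith [mul_nonneg (bin_nonneg n i) (Real.sqrt_nonneg ((n : ℝ) + 1))]

noncomputable def bt (n i : ℕ) : ℝ := ∑ k ∈ Finset.range (i + 1), bin n k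

theorem real_cu_le (n i : ℕ) : (sg ℕ).real {f | cu f n ≤ i} = bt n i := by
  have : {f : ℕ → Bool | cu f n ≤ i} = ⋃ k ∈ Finset.range (i + 1), {f | cu f n = k} := by
    ext f; simp [Nat.lt_succ_iff]
  rw [this, measureReal_biUnion_finset]
  · simp only [real_cu]; rfl
  · intro k _ k' _ hkk
    rw [Function.onFun, Set.disjoint_left]
    intro f h1 h2
    simp only [Set.mem_ofPred_eq] at h1 h2
    omega
  · intro k _; exact cu_meas n k

theorem cu_le_meas (n i : ℕ) : MeasurableSet {f : ℕ → Bool | cu f n ≤ i} :=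
  meas_fstbits n fun f g h hf => by
    simp only [Set.mem_ofPred_eq] at *; rw [← cu_congr h]; exact hf

theorem bt_le_one (n i : ℕ) : bt n i ≤ 1 := by
  rw [← real_cu_le]; exact measureReal_le_one

theorem bt_nonneg (n i : ℕ) : 0 ≤ bt n i := Finset.sum_nonneg fun k _ => bin_nonneg n k

theorem bt_anti {n n' : ℕ} (h : n ≤ n') (i : ℕ) : bt n' i ≤ bt n i := by
  rw [← real_cu_le, ← real_cu_le]
  exact measureReal_mono fun f hf => (cu_mono f h).trans hf

theorem bt_half {n i : ℕ} (h : n ≤ 2 * i + 1) : 1 / 2 ≤ bt n i := by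
  refine le_trans ?_ (bt_anti h i)
  simp only [bt, bin]
  rw [← Finset.sum_div]
  have := Nat.sum_range_choose_halfway i
  have h2 : ∑ k ∈ Finset.range (i + 1), ((2 * i + 1).choose k : ℝ) = 4 ^ i := by exact_mod_cast this
  rw [h2, pow_succ, pow_mul, show (2 : ℝ) ^ 2 = 4 by norm_num]
  apply le_of_eq; field_simp

theorem bt_near {n i r : ℕ} (h : n ≤ 2 * i + r + 1) :
    1 / 2 - ((r + 1) / 2 : ℕ) / √((n : ℝ) + 1) ≤ bt n i := by
  have h1 := bt_half (n := n) (i := i + (r + 1) / 2) (by omega)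
  have h2 : bt n (i + (r + 1) / 2) ≤ bt n i + ((r + 1) / 2 : ℕ) / √((n : ℝ) + 1) := by
    simp only [bt]
    rw [show i + (r + 1) / 2 + 1 = (i + 1) + (r + 1) / 2 by ring, Finset.sum_range_add]
    gcongr
    calc ∑ x ∈ Finset.range ((r + 1) / 2), bin n (i + 1 + x)
        ≤ ∑ x ∈ Finset.range ((r + 1) / 2), 1 / √((n : ℝ) + 1) :=
          Finset.sum_le_sum fun x _ => bin_upper _ _
      _ = _ := by rw [Finset.sum_const, Finset.card_range, nsmul_eq_mul]; ring
  linarith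

theorem bin_mono_half {n i k : ℕ} (h : 2 * i ≤ n) (hk : k ≤ i) : bin n k ≤ bin n i := by
  induction i, hk using Nat.le_induction with
  | base => exact le_rfl
  | succ i hk ih =>
    refine (ih (by omega)).trans ?_
    unfold bin; gcongr
    exact Nat.choose_le_succ_of_lt_half_left (by omega)

theorem bin_tail {n i : ℕ} (r : ℕ) (h : 2 * i ≤ n) : bin (n + r) i ≤ bt n i * (2 / (r + 1)) := by
  have h1 : bin (n + r) i = ∑ p ∈ Finset.HasAntidiagonal.antidiagonal i, bin n p.1 * bin r p.2 := by
    simp only [bin]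
    rw [Nat.add_choose_eq]; push_cast
    rw [Finset.sum_div]
    refine Finset.sum_congr rfl fun p _ => ?_
    rw [pow_add]; field_simp
  have h2 : ∀ s, s ≤ i → bin n (i - s) * (s + 1) ≤ bt n i := by
    intro s hs
    have : bt n i = ∑ k ∈ Finset.range (i - s), bin n k + ∑ k ∈ Finset.range (s + 1), bin n (i - s + k) := by
      rw [← Finset.sum_range_add, bt]; congr 2; omega
    rw [this]
    have h3 : ∑ k ∈ Finset.range (s + 1), bin n (i - s) ≤ ∑ k ∈ Finset.range (s + 1), bin n (i - s + k) :=
      Finset.sum_le_sum fun k hk => bin_mono_half (by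
        have := Finset.mem_range.1 hk; omega) (by omega)
    rw [Finset.sum_const, Finset.card_range, nsmul_eq_mul] at h3
    push_cast at h3
    have h4 : 0 ≤ ∑ k ∈ Finset.range (i - s), bin n k := Finset.sum_nonneg fun k _ => bin_nonneg n k
    linarith
  have h3 : ∀ s : ℕ, bin r s / (s + 1) = bin (r + 1) (s + 1) * (2 / (r + 1)) := by
    intro s
    have := Nat.add_one_mul_choose_eq r s
    have h' : ((r : ℝ) + 1) * (r.choose s : ℝ) = ((r + 1).choose (s + 1) : ℝ) * (s + 1) := by
      exact_mod_cast this
    simp only [bin, pow_succ]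
    field_simp
    linarith
  rw [h1, Finset.Nat.sum_antidiagonal_eq_sum_range_succ_mk, ← Finset.sum_range_reflect]
  calc ∑ j ∈ Finset.range (i + 1), bin n (i + 1 - 1 - j) * bin r (i - (i + 1 - 1 - j))
      ≤ ∑ s ∈ Finset.range (i + 1), bt n i * (2 / (r + 1)) * bin (r + 1) (s + 1) := by
        refine Finset.sum_le_sum fun s hs => ?_
        have hs : s ≤ i := by have := Finset.mem_range.1 hs; omega
        rw [show i + 1 - 1 - s = i - s by omega, show i - (i - s) = s by omega]
        have e1 := h2 s hs
        have e2 := h3 s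
        have e3 := bin_nonneg r s
        have hp : (0 : ℝ) < (s : ℝ) + 1 := by positivity
        calc bin n (i - s) * bin r s = bin n (i - s) * (s + 1) * (bin r s / (s + 1)) := by field_simp
          _ ≤ bt n i * (bin r s / (s + 1)) := by gcongr
          _ = _ := by rw [e2]; ring
    _ = bt n i * (2 / (r + 1)) * ∑ s ∈ Finset.range (i + 1), bin (r + 1) (s + 1) := by
        rw [Finset.mul_sum]
    _ ≤ bt n i * (2 / (r + 1)) * 1 := by
        have := bt_nonneg n i
        gcongr
        refine le_trans ?_ (bt_le_one (r + 1) (i + 1))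
        rw [bt, Finset.sum_range_succ' _ (i + 1)]
        linarith [bin_nonneg (r + 1) 0]
    _ = _ := by ring

theorem binprod {m j' i1 i2 N2 d1 d2 r : ℕ} (hm : 64 ≤ m) (hr : r = Nat.sqrt m / 8)
    (hj : j' ≤ i1) (h1 : m ≤ j' + i1 + 1) (h2 : m ≤ N2 + 1) (hd1 : d1 ≤ 1) (hd2 : d2 ≤ 1) :
    bin (j' + i1) i1 * bin N2 i2 ≤
      256 / m * (bt (j' + d1 + (i1 - r)) (i1 - r) * bt (N2 + d2 - r) i2) := by
  have hs8 : 8 ≤ Nat.sqrt m := by rw [Nat.le_sqrt]; omega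
  have hs1 : Nat.sqrt m * Nat.sqrt m ≤ m := Nat.sqrt_le m
  have hs2 : m < (Nat.sqrt m + 1) * (Nat.sqrt m + 1) := Nat.lt_succ_sqrt m
  set R := Nat.sqrt m with hR
  have hr1 : 1 ≤ r := by omega
  have hRm : 8 * R ≤ m := by nlinarith
  have hri : r ≤ i1 := by omega
  set q : ℝ := √(m : ℝ) with hq
  have hqsq : q ^ 2 = m := Real.sq_sqrt (by positivity)
  have hm' : (64 : ℝ) ≤ m := by exact_mod_cast hm
  have hq8 : 8 ≤ q := by
    rw [hq]; apply Real.le_sqrt_of_sq_le; linarith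
  have hRq : (R : ℝ) ≤ q := by
    apply Real.le_sqrt_of_sq_le
    have : ((R * R : ℕ) : ℝ) ≤ m := by exact_mod_cast hs1
    push_cast at this; nlinarith
  have hRq2 : q < R + 1 := by
    have : (m : ℝ) < (R + 1) * (R + 1) := by exact_mod_cast hs2
    by_contra hcon
    push Not at hcon
    nlinarith [(Nat.cast_nonneg R : (0:ℝ) ≤ R)]
  have hrR : (r : ℝ) * 8 ≤ R := by
    have : r * 8 ≤ R := by omega
    exact_mod_cast this
  have hrR2 : (R : ℝ) ≤ 16 * r - 1 := by
    have : R + 1 ≤ 16 * r := by omega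
    have : (R : ℝ) + 1 ≤ 16 * r := by exact_mod_cast this
    linarith
  have hE1 : 1 / 4 ≤ bt (j' + d1 + (i1 - r)) (i1 - r) := by
    have hn := bt_near (n := j' + d1 + (i1 - r)) (i := i1 - r) (r := r) (by omega)
    refine le_trans ?_ hn
    have e1 : ((((r + 1) / 2 : ℕ)) : ℝ) ≤ q / 8 := by
      have : ((((r + 1) / 2 : ℕ)) : ℝ) ≤ r := by
        have : (r + 1) / 2 ≤ r := by omega
        exact_mod_cast this
      linarith
    have e2 : q / 2 ≤ √(((j' + d1 + (i1 - r) : ℕ) : ℝ) + 1) := by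
      apply Real.le_sqrt_of_sq_le
      have : m ≤ 2 * (j' + d1 + (i1 - r)) + 2 := by omega
      have : (m : ℝ) ≤ 2 * ((j' + d1 + (i1 - r) : ℕ) : ℝ) + 2 := by exact_mod_cast this
      nlinarith [(Nat.cast_nonneg (j' + d1 + (i1 - r)) : (0:ℝ) ≤ ((j' + d1 + (i1 - r) : ℕ) : ℝ))]
    have e3 : ((((r + 1) / 2 : ℕ)) : ℝ) / √(((j' + d1 + (i1 - r) : ℕ) : ℝ) + 1) ≤ 1 / 4 := by
      rw [div_le_iff₀ (by linarith)]
      linarith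
    linarith
  have hup : ∀ n i : ℕ, m ≤ n + 1 → bin n i ≤ 1 / q := by
    intro n i hn
    refine (bin_upper n i).trans ?_
    have hn' : (m : ℝ) ≤ (n : ℝ) + 1 := by exact_mod_cast hn
    have := Real.sqrt_le_sqrt hn'
    exact one_div_le_one_div_of_le (by linarith) this
  have hb1 := hup (j' + i1) i1 h1
  have hb2 := hup N2 i2 h2
  have n1 := bin_nonneg (j' + i1) i1
  have n2 := bin_nonneg N2 i2
  have n3 := bt_nonneg (N2 + d2 - r) i2
  have hqq : 1 / q * (1 / q) = 1 / m := by rw [← hqsq]; field_simp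
  have hm0 : (0 : ℝ) < 1 / m := by positivity
  by_cases hc : 2 * i2 ≤ N2 + d2 - r
  · have ht := bin_tail (r - d2) hc
    rw [show N2 + d2 - r + (r - d2) = N2 by omega] at ht
    have e1 : q / 32 ≤ ((r - d2 : ℕ) : ℝ) + 1 := by
      have : r ≤ (r - d2) + 1 := by omega
      have : (r : ℝ) ≤ ((r - d2 : ℕ) : ℝ) + 1 := by exact_mod_cast this
      linarith
    have e2 : (2 : ℝ) / (((r - d2 : ℕ) : ℝ) + 1) ≤ 64 * (1 / q) := by
      rw [div_le_iff₀ (by linarith)]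
      have : 64 * (1 / q) * (q / 32) = 2 := by field_simp; norm_num
      rw [← this]; gcongr
    have hq0 : 0 < 1 / q := by positivity
    calc bin (j' + i1) i1 * bin N2 i2 ≤ 1 / q * (bt (N2 + d2 - r) i2 * (64 * (1 / q))) := by
          gcongr
          exact ht.trans (by gcongr)
      _ = 64 * (1 / q * (1 / q)) * bt (N2 + d2 - r) i2 := by ring
      _ = 256 / m * (1 / 4 * bt (N2 + d2 - r) i2) := by rw [hqq]; ring
      _ ≤ _ := by gcongr
  · have e1 := bt_half (n := N2 + d2 - r) (i := i2) (by omega)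
    have hq0 : 0 < 1 / q := by positivity
    calc bin (j' + i1) i1 * bin N2 i2 ≤ 1 / q * (1 / q) := by gcongr
      _ = 1 / m := hqq
      _ ≤ 256 / m * (1 / 4 * (1 / 2)) := by
        rw [show (256 : ℝ) / m * (1 / 4 * (1 / 2)) = 32 * (1 / m) by ring]; linarith
      _ ≤ _ := by gcongr

end FavSites

set_option autoImplicit false
set_option linter.all false
namespace FavSites
open MeasureTheory

theorem meas_ex {P : ℕ → (ℕ → Bool) → Prop}
    (h : ∀ t f g, (∀ s, s < t → f s = g s) → P t f → P t g) : MeasurableSet {b | ∃ t, P t b} := by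
  have : {b | ∃ t, P t b} = ⋃ t, {b | P t b} := by ext b; simp
  rw [this]
  exact MeasurableSet.iUnion fun t => meas_fstbits t (h t)

theorem Trip.congr {x0 : ℤ} {l0 : ℤ → ℕ} {h : ℕ} {t : ℕ} {a e : ℤ} {b b' : ℕ → Bool}
    (hb : ∀ s, s < t → b s = b' s) (hT : Trip x0 l0 h b t a e) : Trip x0 l0 h b' t a e := by
  refine ⟨by rw [← pos_congr hb]; exact hT.1, hT.2.1, fun y => ?_⟩
  rw [← lt_congr hb]; exact hT.2.2 y

theorem first_meas (x0 : ℤ) (l0 : ℤ → ℕ) (h : ℕ) (y : ℤ) : MeasurableSet {b | FirstAt x0 l0 h y b} := by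
  apply meas_ex
  rintro t f g hfg ⟨h1, h2⟩
  refine ⟨fun s hs z => ?_, ?_⟩
  · rw [← lt_congr (fun r hr => hfg r (by omega))]; exact h1 s hs z
  · rw [← lt_congr hfg]; exact h2

def HT (x0 : ℤ) (l0 : ℤ → ℕ) (h : ℕ) (a e : ℤ) (j : ℕ) (t : ℕ) (b : ℕ → Bool) : Prop :=
  Trip x0 l0 h b t a e ∧ up x0 b t a = j ∧ dn x0 b t (a + 1) ≤ up x0 b t (a + 1)

theorem HT.congr {x0 : ℤ} {l0 : ℤ → ℕ} {h : ℕ} {a e : ℤ} {j : ℕ} (t : ℕ) (f g : ℕ → Bool)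
    (hfg : ∀ s, s < t → f s = g s) (hT : HT x0 l0 h a e j t f) : HT x0 l0 h a e j t g := by
  obtain ⟨h1, h2, h3⟩ := hT
  refine ⟨h1.congr hfg, ?_, ?_⟩
  · rw [← up_congr hfg]; exact h2
  · rw [← up_congr hfg, ← dn_congr hfg]; exact h3

def Out (x0 : ℤ) (l0 : ℤ → ℕ) (h : ℕ) (a e : ℤ) (j : ℕ) : Set (ℤ × ℕ → Bool) :=
  {η | ∃ t w, (∀ y, y ≠ a → y ≠ a + 1 → y ≠ a + 2 → FolAt η x0 w t y) ∧ HT x0 l0 h a e j t w}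

theorem Out_dep (x0 : ℤ) (l0 : ℤ → ℕ) (h : ℕ) (a e : ℤ) (j : ℕ) :
    DepOn {p : ℤ × ℕ | p.1 ≠ a ∧ p.1 ≠ a + 1 ∧ p.1 ≠ a + 2} (Out x0 l0 h a e j) := by
  rintro η η' hh ⟨t, w, h1, h2⟩
  refine ⟨t, w, fun y hy1 hy2 hy3 s hs hp => ?_, h2⟩
  rw [h1 y hy1 hy2 hy3 s hs hp]
  exact hh (y, _) ⟨hy1, hy2, hy3⟩

theorem Out_meas (x0 : ℤ) (l0 : ℤ → ℕ) (h : ℕ) (a e : ℤ) (j : ℕ) :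
    MeasurableSet (Out x0 l0 h a e j) := by
  classical
  let ex : (t : ℕ) → (Fin t → Bool) → ℕ → Bool := fun t u i => if hi : i < t then u ⟨i, hi⟩ else false
  have : Out x0 l0 h a e j = ⋃ t : ℕ, ⋃ u : Fin t → Bool,
      {η | (∀ y, y ≠ a → y ≠ a + 1 → y ≠ a + 2 → FolAt η x0 (ex t u) t y) ∧
        HT x0 l0 h a e j t (ex t u)} := by
    ext η
    simp only [Out, Set.mem_iUnion, Set.mem_ofPred_eq]
    constructor
    · rintro ⟨t, w, h1, h2⟩
      have hfg : ∀ s, s < t → w s = ex t (fun i => w i) s := fun s hs => by simp [ex, hs]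
      refine ⟨t, fun i => w i, fun y hy1 hy2 hy3 s hs hp => ?_, h2.congr t _ _ hfg⟩
      have hfg' : ∀ r, r < s → w r = ex t (fun i => w i) r := fun r hr => hfg r (by omega)
      rw [← hfg s hs, ← od_congr hfg']
      exact h1 y hy1 hy2 hy3 s hs (by rw [pos_congr hfg']; exact hp)
    · rintro ⟨t, u, h1, h2⟩
      exact ⟨t, _, h1, h2⟩
  rw [this]
  refine MeasurableSet.iUnion fun t => MeasurableSet.iUnion fun u => ?_
  apply DepOn.meas (s := (Finset.range t).image (idx x0 (ex t u)))
  rintro η η' hh ⟨h1, h2⟩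
  refine ⟨fun y hy1 hy2 hy3 s hs hp => ?_, h2⟩
  rw [h1 y hy1 hy2 hy3 s hs hp]
  apply hh
  simp only [Finset.coe_image, Set.mem_image, Finset.mem_coe, Finset.mem_range]
  exact ⟨s, hs, by simp [idx, hp]⟩

theorem indep4 (a : ℤ) {E0 E1 E2 : Set (ℕ → Bool)} {O : Set (ℤ × ℕ → Bool)}
    (m0 : MeasurableSet E0) (m1 : MeasurableSet E1) (m2 : MeasurableSet E2) (mO : MeasurableSet O)
    (hO : DepOn {p : ℤ × ℕ | p.1 ≠ a ∧ p.1 ≠ a + 1 ∧ p.1 ≠ a + 2} O) :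
    (sg (ℤ × ℕ)).real ({η | sk η a ∈ E0} ∩ ({η | sk η (a + 1) ∈ E1} ∩ ({η | sk η (a + 2) ∈ E2} ∩ O)))
      = (sg ℕ).real E0 * ((sg ℕ).real E1 * ((sg ℕ).real E2 * (sg (ℤ × ℕ)).real O)) := by
  have d2 : DepOn {p : ℤ × ℕ | p.1 ≠ a ∧ p.1 ≠ a + 1} ({η | sk η (a + 2) ∈ E2} ∩ O) := by
    refine DepOn.inter ((sk_dep _ _).mono ?_) (hO.mono ?_)
    · rintro ⟨y, n⟩ h; simp only [Set.mem_ofPred_eq] at *; omega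
    · rintro ⟨y, n⟩ h; simp only [Set.mem_ofPred_eq] at *; omega
  have d1 : DepOn {p : ℤ × ℕ | p.1 ≠ a} ({η | sk η (a + 1) ∈ E1} ∩ ({η | sk η (a + 2) ∈ E2} ∩ O)) := by
    refine DepOn.inter ((sk_dep _ _).mono ?_) (d2.mono ?_)
    · rintro ⟨y, n⟩ h; simp only [Set.mem_ofPred_eq] at *; omega
    · rintro ⟨y, n⟩ h; simp only [Set.mem_ofPred_eq] at *; omega
  rw [indep (S := {p : ℤ × ℕ | p.1 = a}) (T := {p : ℤ × ℕ | p.1 ≠ a}) ?_ (sk_dep _ _) d1 (sk_meas _ m0)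
    ((sk_meas _ m1).inter ((sk_meas _ m2).inter mO)), real_sk _ m0,
    indep (S := {p : ℤ × ℕ | p.1 = a + 1}) (T := {p : ℤ × ℕ | p.1 ≠ a ∧ p.1 ≠ a + 1}) ?_ (sk_dep _ _) d2
      (sk_meas _ m1) ((sk_meas _ m2).inter mO), real_sk _ m1,
    indep (S := {p : ℤ × ℕ | p.1 = a + 2}) ?_ (sk_dep _ _) hO (sk_meas _ m2) mO, real_sk _ m2]
  all_goals
    rw [Set.disjoint_left]
    rintro ⟨y, n⟩ h1 h2
    simp only [Set.mem_ofPred_eq] at *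
    omega

theorem trip_det {x0 : ℤ} {l0 : ℤ → ℕ} {h : ℕ} {a e : ℤ} {j t t' : ℕ} {w w' : ℕ → Bool}
    (h1 : HT x0 l0 h a e j t w) (h2 : HT x0 l0 h a e j t' w') :
    od x0 w t a = od x0 w' t' a ∧ od x0 w t (a + 1) = od x0 w' t' (a + 1) ∧
    od x0 w t (a + 2) = od x0 w' t' (a + 2) ∧ up x0 w t (a + 1) = up x0 w' t' (a + 1) ∧
    up x0 w t (a + 2) = up x0 w' t' (a + 2) := by
  obtain ⟨⟨p1, q1, r1⟩, u1, -⟩ := h1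
  obtain ⟨⟨p2, q2, r2⟩, u2, -⟩ := h2
  have a1 := r1 a
  have a2 := r1 (a + 1)
  have a3 := r1 (a + 2)
  have b1 := r2 a
  have b2 := r2 (a + 1)
  have b3 := r2 (a + 2)
  simp only [true_or, or_true, if_true] at a1 a2 a3 b1 b2 b3
  have o1 := od_lt x0 w t a
  have o2 := od_lt x0 w t (a + 1)
  have o3 := od_lt x0 w t (a + 2)
  have o1' := od_lt x0 w' t' a
  have o2' := od_lt x0 w' t' (a + 1)
  have o3' := od_lt x0 w' t' (a + 2)
  have c1 := crossing x0 w t a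
  have c2 := crossing x0 w t (a + 1)
  have c1' := crossing x0 w' t' a
  have c2' := crossing x0 w' t' (a + 1)
  have s2 := up_add_dn x0 w t (a + 1)
  have s3 := up_add_dn x0 w t (a + 2)
  have s2' := up_add_dn x0 w' t' (a + 1)
  have s3' := up_add_dn x0 w' t' (a + 2)
  rw [show a + 1 + 1 = a + 2 by ring] at c2 c2'
  rw [p1] at o1 o2 o3 c1 c2
  rw [p2] at o1' o2' o3' c1' c2'
  refine ⟨by omega, by omega, by omega, by omega, by omega⟩

set_option maxHeartbeats 1000000 in
theorem trip_core {x0 : ℤ} {l0 : ℤ → ℕ} {h m : ℕ} (hm : 64 ≤ m) (hl : ∀ y, l0 y + m ≤ h)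
    (a e : ℤ) (j : ℕ) :
    (sg ℕ).real {b | ∃ t, HT x0 l0 h a e j t b} ≤ 256 / m * (sg (ℤ × ℕ)).real
      ({η | cu (sk η a) (h - l0 a + (if x0 = a then 1 else 0) - (if e = a then 1 else 0)) = j} ∩
       {η | wlk η x0 ∈ {b | FirstAt x0 l0 h a b ∨ FirstAt x0 l0 h (a + 1) b ∨
        FirstAt x0 l0 h (a + 2) b}}) := by
  classical
  by_cases hne : ∃ w t, HT x0 l0 h a e j t w
  swap
  · have : {b | ∃ t, HT x0 l0 h a e j t b} = ∅ := by
      ext b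
      simp only [Set.mem_ofPred_eq, Set.mem_empty_iff_false, iff_false]
      rintro ⟨t, ht⟩; exact hne ⟨b, t, ht⟩
    rw [this, measureReal_empty]
    positivity
  obtain ⟨w0, t0, h0⟩ := hne
  set N0 := od x0 w0 t0 a with hN0
  set N1 := od x0 w0 t0 (a + 1) with hN1
  set N2 := od x0 w0 t0 (a + 2) with hN2
  set i1 := up x0 w0 t0 (a + 1) with hi1
  set i2 := up x0 w0 t0 (a + 2) with hi2
  have hdet : ∀ t w, HT x0 l0 h a e j t w → od x0 w t a = N0 ∧ od x0 w t (a + 1) = N1 ∧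
      od x0 w t (a + 2) = N2 ∧ up x0 w t (a + 1) = i1 ∧ up x0 w t (a + 2) = i2 :=
    fun t w hw => trip_det hw h0
  have hup : (sg ℕ).real {b | ∃ t, HT x0 l0 h a e j t b} ≤
      bin N0 j * (bin N1 i1 * (bin N2 i2 * (sg (ℤ × ℕ)).real (Out x0 l0 h a e j))) := by
    rw [← real_cu N0 j, ← real_cu N1 i1, ← real_cu N2 i2, ← indep4 a (cu_meas _ _) (cu_meas _ _)
      (cu_meas _ _) (Out_meas _ _ _ _ _ _) (Out_dep _ _ _ _ _ _), real_wlk x0 (meas_ex HT.congr)]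
    refine measureReal_mono ?_
    rintro η ⟨t, ht⟩
    have hf := fol_wlk η x0 t
    obtain ⟨e0, e1, e2, e3, e4⟩ := hdet _ _ ht
    refine ⟨?_, ?_, ?_, ⟨t, _, fun y _ _ _ => hf.at y, ht⟩⟩
    · show cu (sk η a) N0 = j
      rw [← e0, ← hf.up_eq]; exact ht.2.1
    · show cu (sk η (a + 1)) N1 = i1
      rw [← e1, ← hf.up_eq]; exact e3
    · show cu (sk η (a + 2)) N2 = i2
      rw [← e2, ← hf.up_eq]; exact e4
  -- numerology
  obtain ⟨⟨p1, q1, r1⟩, u1, hhalf⟩ := h0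
  have a1 := r1 a
  have a2 := r1 (a + 1)
  have a3 := r1 (a + 2)
  simp only [true_or, or_true, if_true] at a1 a2 a3
  have o1 := od_lt x0 w0 t0 a
  have o2 := od_lt x0 w0 t0 (a + 1)
  have o3 := od_lt x0 w0 t0 (a + 2)
  have c1 := crossing x0 w0 t0 a
  have c2 := crossing x0 w0 t0 (a + 1)
  have s2 := up_add_dn x0 w0 t0 (a + 1)
  have s3 := up_add_dn x0 w0 t0 (a + 2)
  rw [show a + 1 + 1 = a + 2 by ring] at c2
  rw [p1] at o1 o2 o3 c1 c2
  have hl0 := hl a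
  have hl1 := hl (a + 1)
  have hl2 := hl (a + 2)
  have hN0e : h - l0 a + (if x0 = a then 1 else 0) - (if e = a then 1 else 0) = N0 := by omega
  rw [hN0e]
  set r := Nat.sqrt m / 8 with hr
  have hs8 : 8 ≤ Nat.sqrt m := by rw [Nat.le_sqrt]; omega
  have hrm : 8 * Nat.sqrt m ≤ m := by nlinarith [Nat.sqrt_le m]
  set j' := dn x0 w0 t0 (a + 1) with hj'
  have l1 : (if e = a + 1 then 1 else 0) ≤ 1 := by split_ifs <;> omega
  have l2 : (if e = a + 2 then 1 else 0) ≤ 1 := by split_ifs <;> omega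
  have hbp := binprod (m := m) (j' := j') (i1 := i1) (i2 := i2) (N2 := N2)
    (d1 := if a + 1 ≤ e then 1 else 0) (d2 := if a + 2 ≤ e then 1 else 0) hm hr hhalf
    (by omega) (by omega) (by split_ifs <;> omega) (by split_ifs <;> omega)
  rw [show j' + i1 = N1 by omega] at hbp
  set q := i1 - r with hq
  have hlow : bin N0 j * (bt (j + q + (if a + 1 ≤ x0 then 1 else 0)) q *
      (bt (q + (if a + 2 ≤ x0 then 1 else 0) + i2) i2 * (sg (ℤ × ℕ)).real (Out x0 l0 h a e j))) ≤
      (sg (ℤ × ℕ)).real ({η | cu (sk η a) N0 = j} ∩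
       {η | wlk η x0 ∈ {b | FirstAt x0 l0 h a b ∨ FirstAt x0 l0 h (a + 1) b ∨
        FirstAt x0 l0 h (a + 2) b}}) := by
    rw [← real_cu N0 j, ← real_cu_le, ← real_cu_le, ← indep4 a (cu_meas _ _) (cu_le_meas _ _)
      (cu_le_meas _ _) (Out_meas _ _ _ _ _ _) (Out_dep _ _ _ _ _ _)]
    refine measureReal_mono ?_
    rintro η ⟨g0, g1, g2, ⟨t, w, hw, ht⟩⟩
    obtain ⟨e0, e1, e2, e3, e4⟩ := hdet _ _ ht
    simp only [Set.mem_ofPred_eq] at g0 g1 g2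
    refine ⟨g0, ?_⟩
    refine core (h := h) (fun z => by have := hl z; omega) (fun t => fol_wlk η x0 t) hw ht.1 ?_ q ?_ ?_
    · rw [e0, ht.2.1]; exact g0
    · rw [ht.2.1]; exact g1
    · rw [e4]; exact g2
  have x1 : j' + (if a + 1 ≤ e then 1 else 0) + q = j + q + (if a + 1 ≤ x0 then 1 else 0) := by
    clear hup hlow hbp hdet r1
    split_ifs <;> omega
  have x2 : N2 + (if a + 2 ≤ e then 1 else 0) - r = q + (if a + 2 ≤ x0 then 1 else 0) + i2 := by
    have : r ≤ i1 := by omega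
    clear hup hlow hbp hdet r1
    split_ifs <;> omega
  rw [x1, x2] at hbp
  refine hup.trans ?_
  calc bin N0 j * (bin N1 i1 * (bin N2 i2 * (sg (ℤ × ℕ)).real (Out x0 l0 h a e j)))
      = (bin N0 j * (sg (ℤ × ℕ)).real (Out x0 l0 h a e j)) * (bin N1 i1 * bin N2 i2) := by ring
    _ ≤ (bin N0 j * (sg (ℤ × ℕ)).real (Out x0 l0 h a e j)) * _ :=
        mul_le_mul_of_nonneg_left hbp (mul_nonneg (bin_nonneg _ _) measureReal_nonneg)
    _ = 256 / m * (bin N0 j * (bt (j + q + (if a + 1 ≤ x0 then 1 else 0)) q *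
      (bt (q + (if a + 2 ≤ x0 then 1 else 0) + i2) i2 * (sg (ℤ × ℕ)).real (Out x0 l0 h a e j)))) := by
        ring
    _ ≤ _ := mul_le_mul_of_nonneg_left hlow (by positivity)

end FavSites

set_option autoImplicit false
set_option linter.all false
namespace FavSites
open MeasureTheory

def GG (x0 : ℤ) (l0 : ℤ → ℕ) (h : ℕ) (a : ℤ) : Set (ℕ → Bool) :=
  {b | FirstAt x0 l0 h a b ∨ FirstAt x0 l0 h (a + 1) b ∨ FirstAt x0 l0 h (a + 2) b}

theorem GG_meas (x0 : ℤ) (l0 : ℤ → ℕ) (h : ℕ) (a : ℤ) : MeasurableSet (GG x0 l0 h a) :=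
  (first_meas x0 l0 h a).union ((first_meas x0 l0 h (a + 1)).union (first_meas x0 l0 h (a + 2)))

def HH (x0 : ℤ) (l0 : ℤ → ℕ) (h : ℕ) (a : ℤ) : Set (ℕ → Bool) :=
  {b | ∃ t, ∃ e, Trip x0 l0 h b t a e ∧ dn x0 b t (a + 1) ≤ up x0 b t (a + 1)}

theorem HH_meas (x0 : ℤ) (l0 : ℤ → ℕ) (h : ℕ) (a : ℤ) : MeasurableSet (HH x0 l0 h a) := by
  apply meas_ex
  rintro t f g hfg ⟨e, h1, h2⟩
  refine ⟨e, h1.congr hfg, ?_⟩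
  rw [← up_congr hfg, ← dn_congr hfg]; exact h2

theorem half_e {x0 : ℤ} {l0 : ℤ → ℕ} {h m : ℕ} (hm : 64 ≤ m) (hl : ∀ y, l0 y + m ≤ h)
    (a e : ℤ) : (sg ℕ).real (⋃ j ∈ Finset.range (h + 2), {b | ∃ t, HT x0 l0 h a e j t b}) ≤
      256 / m * (sg ℕ).real (GG x0 l0 h a) := by
  refine (measureReal_biUnion_finset_le _ _).trans ?_
  refine (Finset.sum_le_sum fun j _ => trip_core hm hl a e j).trans ?_
  rw [← Finset.mul_sum]
  refine mul_le_mul_of_nonneg_left ?_ (by positivity)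
  rw [← measureReal_biUnion_finset]
  · rw [real_wlk x0 (GG_meas _ _ _ _)]
    refine measureReal_mono ?_
    intro η hη
    simp only [Set.mem_iUnion] at hη
    obtain ⟨j, _, _, h2⟩ := hη
    exact h2
  · intro i _ i' _ hii
    rw [Function.onFun, Set.disjoint_left]
    rintro η ⟨h1, _⟩ ⟨h2, _⟩
    simp only [Set.mem_ofPred_eq] at h1 h2
    omega
  · intro j _
    exact (sk_meas a (cu_meas _ j)).inter (wlk_meas x0 (GG_meas _ _ _ _))

theorem half {x0 : ℤ} {l0 : ℤ → ℕ} {h m : ℕ} (hm : 64 ≤ m) (hl : ∀ y, l0 y + m ≤ h)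
    (a : ℤ) : (sg ℕ).real (HH x0 l0 h a) ≤ 768 / m * (sg ℕ).real (GG x0 l0 h a) := by
  have hsub : HH x0 l0 h a ⊆ (⋃ j ∈ Finset.range (h + 2), {b | ∃ t, HT x0 l0 h a a j t b}) ∪
      ((⋃ j ∈ Finset.range (h + 2), {b | ∃ t, HT x0 l0 h a (a + 1) j t b}) ∪
      (⋃ j ∈ Finset.range (h + 2), {b | ∃ t, HT x0 l0 h a (a + 2) j t b})) := by
    rintro b ⟨t, e, h1, h2⟩
    have hj : up x0 b t a < h + 2 := by
      have c1 := up_add_dn x0 b t a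
      have c2 := od_lt x0 b t a
      have c3 := h1.2.2 a
      simp only [true_or, if_true] at c3
      split_ifs at c2 <;> omega
    have key : ∀ e', e = e' → b ∈ (⋃ j ∈ Finset.range (h + 2), {b | ∃ t, HT x0 l0 h a e' j t b}) := by
      rintro e' rfl
      simp only [Set.mem_iUnion]
      exact ⟨up x0 b t a, Finset.mem_range.2 hj, t, h1, rfl, h2⟩
    rcases h1.2.1 with he | he | he
    · exact Or.inl (key _ he)
    · exact Or.inr (Or.inl (key _ he))
    · exact Or.inr (Or.inr (key _ he))
  refine (measureReal_mono hsub).trans ?_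
  refine (measureReal_union_le _ _).trans ?_
  have i1 := half_e (x0 := x0) hm hl a a
  have i2 := half_e (x0 := x0) hm hl a (a + 1)
  have i3 := half_e (x0 := x0) hm hl a (a + 2)
  have i4 := measureReal_union_le (μ := sg ℕ) (⋃ j ∈ Finset.range (h + 2), {b | ∃ t, HT x0 l0 h a (a + 1) j t b})
    (⋃ j ∈ Finset.range (h + 2), {b | ∃ t, HT x0 l0 h a (a + 2) j t b})
  have : (768 : ℝ) / m * (sg ℕ).real (GG x0 l0 h a) = 3 * (256 / m * (sg ℕ).real (GG x0 l0 h a)) := by ring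
  linarith

/-! reflection -/
def rfl' (b : ℕ → Bool) : ℕ → Bool := fun k => !(b k)

theorem pos_rfl (x0 : ℤ) (b : ℕ → Bool) (t : ℕ) : pos (-x0) (rfl' b) t = - pos x0 b t := by
  induction t with
  | zero => rfl
  | succ t ih =>
    simp only [pos, ih, rfl']
    cases b t <;> simp [stp] <;> ring

theorem lt_rfl (x0 : ℤ) (b : ℕ → Bool) (t : ℕ) (y : ℤ) :
    lt (-x0) (rfl' b) t y = lt x0 b t (-y) := by
  induction t with
  | zero => rfl
  | succ t ih =>
    simp only [lt, ih, pos_rfl]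
    congr 1
    split_ifs <;> first | rfl | omega

theorem up_rfl (x0 : ℤ) (b : ℕ → Bool) (t : ℕ) (y : ℤ) :
    up (-x0) (rfl' b) t y = dn x0 b t (-y) := by
  induction t with
  | zero => rfl
  | succ t ih =>
    simp only [up, dn, ih, pos_rfl, rfl']
    congr 1
    rcases Bool.eq_false_or_eq_true (b t) with hb | hb
    · simp [hb]
    · simp only [hb, Bool.not_false, and_true]
      split_ifs <;> first | rfl | omega

theorem dn_rfl (x0 : ℤ) (b : ℕ → Bool) (t : ℕ) (y : ℤ) :
    dn (-x0) (rfl' b) t y = up x0 b t (-y) := by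
  induction t with
  | zero => rfl
  | succ t ih =>
    simp only [up, dn, ih, pos_rfl, rfl']
    congr 1
    rcases Bool.eq_false_or_eq_true (b t) with hb | hb
    · simp only [hb, Bool.not_true, and_true]
      split_ifs <;> first | rfl | omega
    · simp [hb]

theorem first_rfl {x0 : ℤ} {l0 : ℤ → ℕ} {h : ℕ} {y : ℤ} {b : ℕ → Bool}
    (hf : FirstAt (-x0) (fun z => l0 (-z)) h y (rfl' b)) : FirstAt x0 l0 h (-y) b := by
  obtain ⟨t, h1, h2⟩ := hf
  refine ⟨t, fun s hs z => ?_, ?_⟩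
  · have := h1 s hs (-z)
    simpa only [lt_rfl, neg_neg] using this
  · simpa only [lt_rfl] using h2

theorem half' {x0 : ℤ} {l0 : ℤ → ℕ} {h m : ℕ} (hm : 64 ≤ m) (hl : ∀ y, l0 y + m ≤ h)
    (a : ℤ) : (sg ℕ).real {b | ∃ t, ∃ e, Trip x0 l0 h b t a e} ≤
      1536 / m * (sg ℕ).real (GG x0 l0 h a) := by
  have i1 := half (x0 := x0) hm hl a
  have i2 := half (x0 := -x0) (l0 := fun z => l0 (-z)) (h := h) hm (fun y => hl (-y)) (-a - 2)
  rw [← real_not (HH_meas _ _ _ _), ← real_not (GG_meas _ _ _ _)] at i2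
  have i3 : (sg ℕ).real {η | (fun k => !(η k)) ∈ GG (-x0) (fun z => l0 (-z)) h (-a - 2)} ≤
      (sg ℕ).real (GG x0 l0 h a) := by
    refine measureReal_mono ?_
    rintro b hb
    rcases hb with hb | hb | hb
    · right; right
      have := first_rfl (x0 := x0) hb
      rwa [show - (-a - 2) = a + 2 by ring] at this
    · right; left
      have := first_rfl (x0 := x0) hb
      rwa [show - (-a - 2 + 1) = a + 1 by ring] at this
    · left
      have := first_rfl (x0 := x0) hb
      rwa [show - (-a - 2 + 2) = a by ring] at this
  have i4 : {b | ∃ t, ∃ e, Trip x0 l0 h b t a e} ⊆ HH x0 l0 h a ∪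
      {η | (fun k => !(η k)) ∈ HH (-x0) (fun z => l0 (-z)) h (-a - 2)} := by
    rintro b ⟨t, e, hT⟩
    by_cases hc : dn x0 b t (a + 1) ≤ up x0 b t (a + 1)
    · exact Or.inl ⟨t, e, hT, hc⟩
    · right
      refine ⟨t, -e, ⟨?_, ?_, ?_⟩, ?_⟩
      · have := pos_rfl x0 b t
        rw [hT.1] at this; exact this
      · rcases hT.2.1 with he | he | he <;> omega
      · intro y
        have h1 := hT.2.2 (-y)
        have h2 := lt_rfl x0 b t y
        change lt (-x0) (fun k => !(b k)) t y = _ at h2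
        rw [h2]
        by_cases hy : -y = a ∨ -y = a + 1 ∨ -y = a + 2
        · rw [if_pos hy] at h1
          rw [if_pos (by omega)]; exact h1
        · rw [if_neg hy] at h1
          rw [if_neg (by omega)]; exact h1
      · have h1 := up_rfl x0 b t (-a - 2 + 1)
        have h2 := dn_rfl x0 b t (-a - 2 + 1)
        rw [show - (-a - 2 + 1) = a + 1 by ring] at h1 h2
        change up (-x0) (fun k => !(b k)) t _ = _ at h1
        change dn (-x0) (fun k => !(b k)) t _ = _ at h2
        omega
  have i5 := (measureReal_mono (μ := sg ℕ) i4).trans (measureReal_union_le _ _)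
  have i6 : (768 : ℝ) / m * (sg ℕ).real {η | (fun k => !(η k)) ∈ GG (-x0) (fun z => l0 (-z)) h (-a - 2)}
      ≤ 768 / m * (sg ℕ).real (GG x0 l0 h a) := by gcongr
  have : (1536 : ℝ) / m * (sg ℕ).real (GG x0 l0 h a) = 2 * (768 / m * (sg ℕ).real (GG x0 l0 h a)) := by ring
  linarith

theorem trip_bound {x0 : ℤ} {l0 : ℤ → ℕ} {h m : ℕ} (hm : 1 ≤ m) (hl : ∀ y, l0 y + m ≤ h) :
    (sg ℕ).real {b | ∃ t a e, Trip x0 l0 h b t a e} ≤ 4608 / m := by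
  by_cases hm64 : 64 ≤ m
  swap
  · refine measureReal_le_one.trans ?_
    rw [le_div_iff₀ (by exact_mod_cast hm)]
    have : (m : ℝ) ≤ 64 := by exact_mod_cast (by omega : m ≤ 64)
    linarith
  set F : ℤ → ENNReal := fun a => sg ℕ {b | FirstAt x0 l0 h a b} with hF
  have hFsum : ∑' a, F a ≤ 1 := by
    rw [hF, ← measure_iUnion]
    · exact prob_le_one
    · intro y y' hyy
      rw [Function.onFun, Set.disjoint_left]
      intro b h1 h2
      exact hyy (first_unique (fun z => by have := hl z; omega) h1 h2)
    · exact fun y => first_meas _ _ _ _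
  have hsh : ∀ c : ℤ, ∑' a, F (a + c) ≤ 1 := by
    intro c
    exact (le_of_eq ((Equiv.addRight c).tsum_eq F)).trans hFsum
  have h1 : sg ℕ {b | ∃ t a e, Trip x0 l0 h b t a e} ≤ ENNReal.ofReal (4608 / m) := by
    have hU : {b | ∃ t a e, Trip x0 l0 h b t a e} = ⋃ a, {b | ∃ t, ∃ e, Trip x0 l0 h b t a e} := by
      ext b; simp only [Set.mem_iUnion, Set.mem_ofPred_eq]
      exact ⟨fun ⟨t, a, e, h⟩ => ⟨a, t, e, h⟩, fun ⟨a, t, e, h⟩ => ⟨t, a, e, h⟩⟩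
    rw [hU]
    refine (measure_iUnion_le _).trans ?_
    have hstep : ∀ a, sg ℕ {b | ∃ t, ∃ e, Trip x0 l0 h b t a e} ≤
        ENNReal.ofReal (1536 / m) * (F a + (F (a + 1) + F (a + 2))) := by
      intro a
      have hh := half' (x0 := x0) hm64 hl a
      have : sg ℕ {b | ∃ t, ∃ e, Trip x0 l0 h b t a e} ≤ ENNReal.ofReal (1536 / m) * sg ℕ (GG x0 l0 h a) := by
        have e1 := ENNReal.ofReal_le_ofReal hh
        rw [ENNReal.ofReal_mul (by positivity)] at e1
        simpa [Measure.real, ENNReal.ofReal_toReal] using e1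
      refine this.trans ?_
      gcongr
      exact (measure_union_le {b | FirstAt x0 l0 h a b} _).trans (add_le_add le_rfl
        (measure_union_le {b | FirstAt x0 l0 h (a+1) b} {b | FirstAt x0 l0 h (a+2) b}))
    refine (ENNReal.tsum_le_tsum hstep).trans ?_
    rw [ENNReal.tsum_mul_left, ENNReal.tsum_add, ENNReal.tsum_add]
    have : (4608 : ℝ) / m = (1536 / m) * 3 := by ring
    rw [this, ENNReal.ofReal_mul (by positivity)]
    gcongr
    calc ∑' a, F a + (∑' a, F (a + 1) + ∑' a, F (a + 2)) ≤ 1 + (1 + 1) := by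
          gcongr
          · exact hsh 1
          · exact hsh 2
      _ = ENNReal.ofReal 3 := by norm_num
  exact ENNReal.toReal_le_of_le_ofReal (by positivity) h1

end FavSites

set_option autoImplicit false
set_option linter.all false
namespace FavSites
open MeasureTheory

/-- the first `n + j` entries contain `n` trues, the last one being a true. -/
def Prof (f : ℕ → Bool) (n j : ℕ) : Prop :=
  cu f (n + j) = n ∧ (n = 0 → j = 0) ∧ (0 < n → f (n + j - 1) = true)

def neg (f : ℕ → Bool) : ℕ → Bool := fun i => !(f i)

theorem cu_neg (f : ℕ → Bool) (n : ℕ) : cu (neg f) n = cd f n := by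
  induction n with
  | zero => rfl
  | succ n ih => simp only [cu, cd, ih, neg]; rcases Bool.eq_false_or_eq_true (f n) with h | h <;> simp [h]

theorem cd_neg (f : ℕ → Bool) (n : ℕ) : cd (neg f) n = cu f n := by
  have h1 := cu_neg f n
  have h2 := cu_add_cd f n
  have h3 := cu_add_cd (neg f) n
  omega

theorem cu_zero (f : ℕ → Bool) : cu f 0 = 0 := rfl

theorem Prof.det {f : ℕ → Bool} {n j m : ℕ} (h : Prof f n j) (hm : m ≤ n + j) (hc : n ≤ cu f m) :
    m = n + j := by
  obtain ⟨h1, h2, h3⟩ := h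
  rcases Nat.eq_zero_or_pos n with h0 | h0
  · have := h2 h0; omega
  · by_contra hne
    have hle : m ≤ n + j - 1 := by omega
    have h4 := cu_mono f hle
    have h5 : cu f (n + j - 1 + 1) = cu f (n + j - 1) + if f (n + j - 1) = true then 1 else 0 := rfl
    rw [h3 h0, show n + j - 1 + 1 = n + j by omega, h1] at h5
    simp at h5
    omega

theorem Prof.unique {f : ℕ → Bool} {n j j' : ℕ} (h : Prof f n j) (h' : Prof f n j') : j = j' := by
  rcases le_total j j' with hj | hj
  · have := h'.det (m := n + j) (by omega) h.1.ge; omega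
  · have := h.det (m := n + j') (by omega) h'.1.ge; omega

theorem Prof.cd {f : ℕ → Bool} {n j : ℕ} (h : Prof f n j) : cd f (n + j) = j := by
  have := cu_add_cd f (n + j); have := h.1; omega

theorem prof_zero (f : ℕ → Bool) : Prof f 0 0 := ⟨rfl, fun _ => rfl, fun h => absurd h (lt_irrefl _)⟩

theorem fwd {η : ℤ × ℕ → Bool} {x : ℤ} (hx : 1 ≤ x) (u d : ℤ → ℕ)
    (hcr : ∀ y, (u y : ℤ) + (if y + 1 ≤ 0 then 1 else 0) = d (y + 1) + (if y + 1 ≤ x then 1 else 0))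
    (F : Finset ℤ) (hF : ∀ z, z ∉ F → u z + d z = 0)
    (hR : ∀ y, x ≤ y → Prof (neg (sk η y)) (d y) (u y))
    (hL : ∀ y, y < x → Prof (sk η y) (u y) (d y)) (hd : 1 ≤ d x) {b : ℕ → Bool}
    (hb : ∀ t, Fol η 0 b t) :
    ∃ s, pos 0 b s = x ∧ (∀ y, up 0 b s y = u y ∧ dn 0 b s y = d y) ∧
      ∀ s', s' < s → up 0 b s' (x - 1) < u (x - 1) := by
  classical
  have hcu : ∀ y, cu (sk η y) (u y + d y) = u y := by
    intro y
    rcases lt_or_ge y x with h | h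
    · exact (hL y h).1
    · have := (hR y h).cd; rwa [cd_neg, add_comm] at this
  have hcd : ∀ y, cd (sk η y) (u y + d y) = d y := by
    intro y; have := cu_add_cd (sk η y) (u y + d y); have := hcu y; omega
  have hex : ∃ T, ∃ z, u z + d z < od 0 b T z := by
    by_contra hcon
    push Not at hcon
    exact exceeds 0 b (fun z => u z + d z) F hF hcon
  obtain ⟨z0, hz0⟩ := Nat.find_spec hex
  have hmin := fun T hT => Nat.find_min hex (m := T) hT
  obtain ⟨s, hs⟩ : ∃ s, Nat.find hex = s + 1 := by
    refine Nat.exists_eq_succ_of_ne_zero ?_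
    intro h0
    rw [h0] at hz0
    simp [od] at hz0
  rw [hs] at hz0
  have hle : ∀ z, od 0 b s z ≤ u z + d z := by
    intro z; have := hmin s (by omega); push Not at this; exact this z
  have hp : pos 0 b s = z0 := by
    by_contra hne
    simp only [od, hne, if_false] at hz0
    have := hle z0; omega
  have hzx : z0 = x := by
    by_contra hne
    have := (lap (hb s) (fun z => u z + d z) {x}ᶜ ?_ (fun z _ => hle z) s le_rfl).2 z0 hne
    · simp only [od] at hz0
      rw [hp] at this hz0
      omega
    · intro y hy
      have hy' : y ≠ x := hy
      rw [hcu, hcd]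
      have c1 := hcr (y - 1)
      have c2 := hcr y
      rw [show y - 1 + 1 = y by ring] at c1
      split_ifs at * <;> omega
  subst hzx
  have hod : od 0 b s z0 = u z0 + d z0 := by
    simp only [od, hp, if_true] at hz0
    have := hle z0; omega
  have hall : ∀ y, od 0 b s y = u y + d y → up 0 b s y = u y ∧ dn 0 b s y = d y := by
    intro y hy
    rw [(hb s).up_eq, (hb s).dn_eq, hy]; exact ⟨hcu y, hcd y⟩
  have hright : ∀ n : ℕ, od 0 b s (z0 + n) = u (z0 + n) + d (z0 + n) := by
    intro n
    induction n with
    | zero => simpa using hod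
    | succ n ih =>
      have h1 := (hall _ ih).1
      have c1 := crossing 0 b s (z0 + n)
      have c2 := hcr (z0 + n)
      rw [hp] at c1
      have h2 : dn 0 b s (z0 + n + 1) = d (z0 + n + 1) := by omega
      have h3 := (hb s).dn_eq (z0 + n + 1)
      have h4 := hle (z0 + n + 1)
      have h5 := (hR (z0 + n + 1) (by omega)).det (m := od 0 b s (z0 + n + 1)) (by omega)
        (by rw [cu_neg]; omega)
      push_cast
      rw [← add_assoc]; omega
  have hleft : ∀ n : ℕ, od 0 b s (z0 - n) = u (z0 - n) + d (z0 - n) := by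
    intro n
    induction n with
    | zero => simpa using hod
    | succ n ih =>
      have h1 := (hall _ ih).2
      have c1 := crossing 0 b s (z0 - n - 1)
      have c2 := hcr (z0 - n - 1)
      rw [hp] at c1
      rw [show z0 - n - 1 + 1 = z0 - n by ring] at c1 c2
      have h2 : up 0 b s (z0 - n - 1) = u (z0 - n - 1) := by omega
      have h3 := (hb s).up_eq (z0 - n - 1)
      have h4 := hle (z0 - n - 1)
      have h5 := (hL (z0 - n - 1) (by omega)).det (m := od 0 b s (z0 - n - 1)) (by omega)
        (by omega)
      push_cast
      rw [show z0 - (n + 1) = z0 - n - 1 by ring]; omega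
  refine ⟨s, hp, fun y => hall y ?_, ?_⟩
  · rcases le_total z0 y with h | h
    · obtain ⟨n, hn⟩ := Int.eq_ofNat_of_zero_le (sub_nonneg.2 h)
      have := hright n
      rwa [← hn, show z0 + (y - z0) = y by ring] at this
    · obtain ⟨n, hn⟩ := Int.eq_ofNat_of_zero_le (sub_nonneg.2 h)
      have := hleft n
      rwa [← hn, show z0 - (z0 - y) = y by ring] at this
  · intro s' hs'
    by_contra hge
    push Not at hge
    have c0 := hcr (z0 - 1)
    have c1 := crossing 0 b s' (z0 - 1)
    rw [show z0 - 1 + 1 = z0 by ring] at c0 c1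
    have m1 := dn_mono 0 b z0 hs'.le
    have m2 := od_mono 0 b z0 hs'.le
    dsimp only at m1 m2
    have e1 := (hall _ hod).2
    have hge' : z0 ≤ pos 0 b s' ∧ dn 0 b s' z0 = d z0 := by
      split_ifs at * <;> omega
    have h3 := (hb s').dn_eq z0
    have hods' : od 0 b s' z0 = u z0 + d z0 := by
      have := (hR z0 le_rfl).det (m := od 0 b s' z0) (by omega) (by rw [cu_neg]; omega)
      omega
    have hposle : ∀ τ, τ ≤ s → od 0 b τ z0 = u z0 + d z0 → pos 0 b τ ≤ z0 := by
      intro τ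
      induction τ with
      | zero => intro _ _; simp only [pos]; omega
      | succ τ ih =>
        intro hτ ho
        have ho' := ho
        simp only [od] at ho
        by_cases hpz : pos 0 b τ = z0
        · rw [if_pos hpz] at ho
          have hbτ := hb (τ + 1) τ (by omega)
          rw [hpz] at hbτ
          have hl := (hR z0 le_rfl).2.2 (by omega)
          have : b τ = false := by
            rw [hbτ]
            simp only [neg, sk] at hl
            rw [show od 0 b τ z0 = d z0 + u z0 - 1 by omega]
            simpa using hl
          simp only [pos, this, stp_false]; omega
        · rw [if_neg hpz] at ho
          have := ih (by omega) (by omega)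
          simp only [pos, stp]
          split_ifs <;> omega
    have hpe : pos 0 b s' = z0 := le_antisymm (hposle s' hs'.le hods') hge'.1
    have m3 := od_mono 0 b z0 (Nat.succ_le_of_lt hs')
    dsimp only at m3
    simp only [Nat.succ_eq_add_one, od, hpe, if_true] at m3
    omega

end FavSites

set_option autoImplicit false
set_option linter.all false
namespace FavSites
open MeasureTheory

noncomputable def q (n j : ℕ) : ℝ :=
  if n = 0 then (if j = 0 then 1 else 0) else bin (n + j - 1) j / 2

theorem q_nonneg (n j : ℕ) : 0 ≤ q n j := by
  unfold q
  split_ifs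
  · exact zero_le_one
  · exact le_rfl
  · exact div_nonneg (bin_nonneg _ _) (by norm_num)

theorem Prof.congr {f g : ℕ → Bool} {n j : ℕ} (h : ∀ s, s < n + j → f s = g s) (hf : Prof f n j) :
    Prof g n j := by
  refine ⟨by rw [← cu_congr h]; exact hf.1, hf.2.1, fun hn => ?_⟩
  rw [← h _ (by omega)]; exact hf.2.2 hn

theorem prof_meas (n j : ℕ) : MeasurableSet {f | Prof f n j} :=
  meas_fstbits (n + j) fun f g h hf => Prof.congr h hf

theorem real_prof (n j : ℕ) : (sg ℕ).real {f | Prof f n j} = q n j := by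
  rcases Nat.eq_zero_or_pos n with h0 | h0
  · subst h0
    rcases Nat.eq_zero_or_pos j with h1 | h1
    · subst h1
      have : {f | Prof f 0 0} = Set.univ := by
        ext f; simp only [Set.mem_ofPred_eq, Set.mem_univ, iff_true]; exact prof_zero f
      rw [this]; simp [q]
    · have : {f | Prof f 0 j} = ∅ := by
        ext f; simp only [Set.mem_ofPred_eq, Set.mem_empty_iff_false, iff_false]
        intro h; have := h.2.1 rfl; omega
      rw [this]; simp [q, h1.ne']
  · have : {f | Prof f n j} = {f | cu f (n + j - 1) = n - 1} ∩ {f | f (n + j - 1) = true} := by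
      ext f
      simp only [Set.mem_ofPred_eq, Set.mem_inter_iff]
      have h5 : cu f (n + j - 1 + 1) = cu f (n + j - 1) + if f (n + j - 1) = true then 1 else 0 := rfl
      rw [show n + j - 1 + 1 = n + j by omega] at h5
      constructor
      · rintro ⟨h1, h2, h3⟩
        have := h3 h0
        rw [if_pos this] at h5
        exact ⟨by omega, this⟩
      · rintro ⟨h1, h2⟩
        rw [if_pos h2] at h5
        exact ⟨by omega, by omega, fun _ => h2⟩
    rw [this, indep_bit (n + j - 1) true, real_cu, q, if_neg h0.ne']
    · unfold bin
      rw [← Nat.choose_symm_of_eq_add (show n + j - 1 = j + (n - 1) by omega)]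
    · intro f g h hf
      simp only [Set.mem_ofPred_eq] at *
      rw [← cu_congr h]; exact hf

def flp (c : Bool) (f : ℕ → Bool) : ℕ → Bool := if c then f else neg f

def PS (c : Bool) (n j : ℕ) : Set (ℕ → Bool) := {f | Prof (flp c f) n j}

theorem PS_meas (c : Bool) (n j : ℕ) : MeasurableSet (PS c n j) := by
  cases c
  · refine meas_fstbits (n + j) fun f g h hf => ?_
    refine Prof.congr (f := neg f) (fun s hs => ?_) hf
    simp only [flp, neg, h s hs]; rfl
  · exact prof_meas n j

theorem PS_real (c : Bool) (n j : ℕ) : (sg ℕ).real (PS c n j) = q n j := by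
  cases c
  · rw [← real_prof, ← real_not (prof_meas n j)]; rfl
  · exact real_prof n j

/-- chain of profiles along the sites `s i, s (i+1), …` -/
def Ch (c : Bool) (s : ℕ → ℤ) (bon : ℕ → ℕ) (b : ℕ) : ℕ → ℕ → ℕ → Set (ℤ × ℕ → Bool)
  | 0, _, d => {_η | d = 0}
  | M + 1, i, d => ⋃ d' ∈ Finset.range b,
      ({η | sk η (s i) ∈ PS c (d + bon i) d'} ∩ Ch c s bon b M (i + 1) d')

noncomputable def W (bon : ℕ → ℕ) (b : ℕ) : ℕ → ℕ → ℕ → ℝ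
  | 0, _, d => if d = 0 then 1 else 0
  | M + 1, i, d => ∑ d' ∈ Finset.range b, q (d + bon i) d' * W bon b M (i + 1) d'

theorem Ch_dep (c : Bool) (s : ℕ → ℤ) (bon : ℕ → ℕ) (b : ℕ) (M i d : ℕ) :
    DepOn {p : ℤ × ℕ | ∃ j, i ≤ j ∧ p.1 = s j} (Ch c s bon b M i d) := by
  induction M generalizing i d with
  | zero => intro η η' _ h; exact h
  | succ M ih =>
    intro η η' hh h
    simp only [Ch, Set.mem_iUnion, exists_prop] at h ⊢
    obtain ⟨d', hd', h1, h2⟩ := h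
    refine ⟨d', hd', ?_, ?_⟩
    · exact sk_dep (s i) _ η η' (fun p hp => hh p ⟨i, le_rfl, hp⟩) h1
    · exact ih (i + 1) d' η η' (fun p ⟨j, hj, hp⟩ => hh p ⟨j, by omega, hp⟩) h2

theorem Ch_meas (c : Bool) (s : ℕ → ℤ) (bon : ℕ → ℕ) (b : ℕ) (M i d : ℕ) :
    MeasurableSet (Ch c s bon b M i d) := by
  induction M generalizing i d with
  | zero => exact MeasurableSet.const _
  | succ M ih =>
    exact Finset.measurableSet_biUnion _ fun d' _ => (sk_meas _ (PS_meas _ _ _)).inter (ih _ _)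

theorem chain_step {c : Bool} {z : ℤ} {n : ℕ} (D : Finset ℕ) (T : ℕ → Set (ℤ × ℕ → Bool)) {S : Set (ℤ × ℕ)}
    (hS : ∀ p ∈ S, p.1 ≠ z) (hT : ∀ d, DepOn S (T d)) (mT : ∀ d, MeasurableSet (T d)) :
    (sg (ℤ × ℕ)).real (⋃ d' ∈ D, ({η | sk η z ∈ PS c n d'} ∩ T d')) =
      ∑ d' ∈ D, q n d' * (sg (ℤ × ℕ)).real (T d') := by
  rw [measureReal_biUnion_finset]
  · refine Finset.sum_congr rfl fun d' _ => ?_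
    rw [indep (S := {p : ℤ × ℕ | p.1 = z}) (T := S) ?_ (sk_dep z _) (hT d')
      (sk_meas _ (PS_meas _ _ _)) (mT d'), real_sk z (PS_meas _ _ _), PS_real]
    rw [Set.disjoint_left]
    intro p hp hp'
    exact hS p hp' hp
  · intro d1 _ d2 _ hne
    rw [Function.onFun, Set.disjoint_left]
    rintro η ⟨h1, -⟩ ⟨h2, -⟩
    exact hne (Prof.unique h1 h2)
  · exact fun d' _ => (sk_meas _ (PS_meas _ _ _)).inter (mT d')

theorem Ch_real (c : Bool) (s : ℕ → ℤ) (hs : Function.Injective s) (bon : ℕ → ℕ) (b : ℕ) (M i d : ℕ) :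
    (sg (ℤ × ℕ)).real (Ch c s bon b M i d) = W bon b M i d := by
  induction M generalizing i d with
  | zero =>
    by_cases h : d = 0
    · simp [Ch, W, h]
    · simp [Ch, W, h]
  | succ M ih =>
    simp only [Ch, W]
    rw [chain_step (S := {p : ℤ × ℕ | ∃ j, i + 1 ≤ j ∧ p.1 = s j}) _ _ _ (fun d' => Ch_dep c s bon b M (i + 1) d')
      (fun d' => Ch_meas c s bon b M (i + 1) d')]
    · exact Finset.sum_congr rfl fun d' _ => by rw [ih]
    · rintro p ⟨j, hj, hp⟩ h
      rw [hp] at h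
      have := hs h
      omega

theorem Ch_seq {c : Bool} {s : ℕ → ℤ} {bon : ℕ → ℕ} {b : ℕ} (hb : 0 < b) {M i d : ℕ}
    (hbon : ∀ j, i + M ≤ j → bon j = 0)
    {η : ℤ × ℕ → Bool} (h : η ∈ Ch c s bon b M i d) :
    ∃ v : ℕ → ℕ, v 0 = d ∧ (∀ j, v (j + 1) < b) ∧ (∀ j, M ≤ j → v j = 0) ∧
      ∀ j, sk η (s (i + j)) ∈ PS c (v j + bon (i + j)) (v (j + 1)) := by
  induction M generalizing i d with
  | zero =>
    have hd : d = 0 := h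
    refine ⟨fun _ => 0, hd.symm, fun _ => hb, fun _ _ => rfl, fun j => ?_⟩
    rw [hbon _ (by omega)]
    exact prof_zero _
  | succ M ih =>
    simp only [Ch, Set.mem_iUnion, exists_prop] at h
    obtain ⟨d', hd', h1, h2⟩ := h
    obtain ⟨v, h3, h4, h5, h6⟩ := ih (i := i + 1) (fun j hj => hbon j (by omega)) h2
    refine ⟨fun j => if j = 0 then d else v (j - 1), rfl, ?_, ?_, ?_⟩
    · intro j
      rcases Nat.eq_zero_or_pos j with hj | hj
      · subst hj; simp [h3]; exact Finset.mem_range.1 hd'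
      · obtain ⟨j', rfl⟩ : ∃ j', j = j' + 1 := ⟨j - 1, by omega⟩
        simpa using h4 j'
    · intro j hj
      show (if j = 0 then d else v (j - 1)) = 0
      rw [if_neg (by omega)]
      exact h5 _ (by omega)
    · intro j
      rcases Nat.eq_zero_or_pos j with hj | hj
      · subst hj; simp [h3]; exact h1
      · obtain ⟨j', rfl⟩ : ∃ j', j = j' + 1 := ⟨j - 1, by omega⟩
        have := h6 j'
        rw [show i + 1 + j' = i + (j' + 1) by ring] at this
        simpa using this

end FavSites

set_option autoImplicit false
set_option linter.all false
namespace FavSites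
open MeasureTheory

def Aev (x h k t : ℕ) (b : ℕ → Bool) : Prop :=
  Trip 0 (fun _ => 0) h b t x x ∧ up 0 b t ((x : ℤ) - 1) = k + 1 ∧
    ∀ s, s < t → up 0 b s ((x : ℤ) - 1) < k + 1

theorem split_int (x y : ℤ) : (∃ n : ℕ, y = x + n) ∨ ∃ n : ℕ, y = x - 1 - n := by
  rcases le_or_gt x y with h | h
  · exact Or.inl ⟨(y - x).toNat, by omega⟩
  · exact Or.inr ⟨(x - 1 - y).toNat, by omega⟩

theorem fwd' {η : ℤ × ℕ → Bool} {x h k M : ℕ} (hx : 1 ≤ x) (hk : 1 ≤ k) (hkh : k + 1 ≤ h)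
    (r v : ℕ → ℕ) (r0 : r 0 = k) (r1 : r 1 = h - 1 - k) (r2 : r 2 = k + 1) (r3 : r 3 = h - 1 - k)
    (rs : ∀ n, 3 ≤ n → r n + r (n + 1) < h) (v0 : v 0 = k) (vs : ∀ n, v n + v (n + 1) + 1 < h)
    (hrM : ∀ n, M ≤ n → r n = 0) (hvM : ∀ n, M ≤ n → v n = 0)
    (hr : ∀ n : ℕ, Prof (neg (sk η (x + n))) (r n) (r (n + 1)))
    (hv : ∀ n : ℕ, Prof (sk η (x - 1 - n)) (v n + if n < x then 1 else 0) (v (n + 1))) :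
    ∃ t, Aev x h k t (wlk η 0) := by
  classical
  set d : ℤ → ℕ := fun y => if (x : ℤ) ≤ y then r (y - x).toNat else v (x - y).toNat with hdd
  set u : ℤ → ℕ := fun y => if (x : ℤ) ≤ y then r (y - x + 1).toNat else
    v (x - y - 1).toNat + if 0 ≤ y then 1 else 0 with huu
  have dR : ∀ n : ℕ, d (x + n) = r n := fun n => by
    simp only [hdd]; rw [if_pos (by omega)]; congr 1; omega
  have uR : ∀ n : ℕ, u (x + n) = r (n + 1) := fun n => by
    simp only [huu]; rw [if_pos (by omega)]; congr 1; omega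
  have dL : ∀ n : ℕ, d (x - 1 - n) = v (n + 1) := fun n => by
    simp only [hdd]; rw [if_neg (by omega)]; congr 1; omega
  have uL : ∀ n : ℕ, u (x - 1 - n) = v n + if n < x then 1 else 0 := fun n => by
    simp only [huu]; rw [if_neg (by omega)]
    have : ((x : ℤ) - (x - 1 - n) - 1).toNat = n := by omega
    rw [this]
    congr 1
    split_ifs <;> omega
  have dL' : ∀ n : ℕ, d (x - 1 - n + 1) = v n := fun n => by
    cases n with
    | zero =>
      have := dR 0
      rw [v0, ← r0, ← this]; congr 1; push_cast; ring
    | succ n => rw [← dL n]; congr 1; push_cast; ring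
  have hcr : ∀ y, (u y : ℤ) + (if y + 1 ≤ 0 then 1 else 0) = d (y + 1) + (if y + 1 ≤ (x : ℤ) then 1 else 0) := by
    intro y
    rcases split_int x y with ⟨n, rfl⟩ | ⟨n, rfl⟩
    · have := dR (n + 1)
      rw [uR, show (x : ℤ) + n + 1 = x + (n + 1 : ℕ) by push_cast; ring, this]
      split_ifs <;> omega
    · rw [uL, dL']
      push_cast
      split_ifs <;> omega
  have key := fwd (η := η) (x := x) (by omega) u d hcr
    (Finset.Icc (- 1 - M : ℤ) (x + M)) ?_ ?_ ?_ ?_ (fun t => fol_wlk η 0 t)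
  · obtain ⟨s, hp, hs, hf⟩ := key
    have hlt : ∀ y, lt 0 (wlk η 0) s y = u (y - 1) + d (y + 1) := fun y => by
      rw [lt_eq, (hs _).1, (hs _).2]
    have hu1 : u ((x : ℤ) - 1) = k + 1 := by
      have := uL 0
      rw [if_pos (by omega), v0] at this
      rw [← this]; congr 1; push_cast; ring
    refine ⟨s, ⟨hp, Or.inl rfl, ?_⟩, by rw [(hs _).1, hu1], by rw [hu1] at hf; exact hf⟩
    intro y
    simp only [zero_add]
    rw [hlt]
    rcases split_int x y with ⟨n, rfl⟩ | ⟨n, rfl⟩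
    · have e1 : d ((x : ℤ) + n + 1) = r (n + 1) := by
        have := dR (n + 1); rw [← this]; congr 1
      rw [e1]
      rcases Nat.eq_zero_or_pos n with hn | hn
      · subst hn
        rw [if_pos (by simp), show (x : ℤ) + (0 : ℕ) - 1 = x - 1 by push_cast; ring, hu1, zero_add, r1]
        omega
      · obtain ⟨m, rfl⟩ : ∃ m, n = m + 1 := ⟨n - 1, by omega⟩
        have e2 : u ((x : ℤ) + (m + 1 : ℕ) - 1) = r (m + 1) := by
          rw [← uR m]; congr 1; push_cast; ring
        rw [e2]
        by_cases hm : m < 2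
        · rw [if_pos (by omega)]
          interval_cases m
          · rw [r1, r2]; omega
          · rw [r2, r3]; omega
        · rw [if_neg (by omega)]
          exact rs (m + 1) (by omega)
    · rw [if_neg (by omega), dL', show (x : ℤ) - 1 - n - 1 = x - 1 - (n + 1 : ℕ) by push_cast; ring, uL]
      have := vs n
      split_ifs <;> omega
  · intro z hz
    rcases split_int x z with ⟨n, rfl⟩ | ⟨n, rfl⟩
    · rw [uR, dR]
      have : M ≤ n := by
        by_contra hc; exact hz (Finset.mem_Icc.2 ⟨by omega, by omega⟩)
      rw [hrM _ this, hrM _ (by omega)]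
    · rw [uL, dL]
      have : M ≤ n := by
        by_contra hc; exact hz (Finset.mem_Icc.2 ⟨by omega, by omega⟩)
      have h1 := hvM n this
      have h2 := hvM (n + 1) (by omega)
      have h3 := hv n
      have : ¬ n < x := by
        intro hnx
        exact hz (Finset.mem_Icc.2 ⟨by omega, by omega⟩)
      rw [h1, h2, if_neg this]
  · intro y hy
    rcases split_int x y with ⟨n, rfl⟩ | ⟨n, rfl⟩
    · rw [dR, uR]; exact hr n
    · omega
  · intro y hy
    rcases split_int x y with ⟨n, rfl⟩ | ⟨n, rfl⟩
    · omega
    · rw [uL, dL]; exact hv n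
  · have := dR 0
    rw [r0] at this
    simp at this; omega

end FavSites

set_option autoImplicit false
set_option linter.all false
namespace FavSites
open MeasureTheory

theorem Aev.congr {x h k : ℕ} (t : ℕ) (f g : ℕ → Bool) (hfg : ∀ s, s < t → f s = g s)
    (hA : Aev x h k t f) : Aev x h k t g := by
  refine ⟨hA.1.congr hfg, ?_, fun s hs => ?_⟩
  · rw [← up_congr hfg]; exact hA.2.1
  · rw [← up_congr (fun r hr => hfg r (by omega))]; exact hA.2.2 s hs

theorem Aev_meas (x h k : ℕ) : MeasurableSet {b | ∃ t, Aev x h k t b} :=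
  meas_ex fun t f g hfg hA => hA.congr t f g hfg

def bonx (x : ℕ) : ℕ → ℕ := fun i => if i < x then 1 else 0

theorem Aev_lower {x h k M b : ℕ} (Ds : Finset ℕ) (hx : 1 ≤ x) (hk : 1 ≤ k) (hkh : k + 1 ≤ h) (hb : 0 < b)
    (hDb : h - 1 - k + b ≤ h) (h2b : 2 * b ≤ h) (hDs : ∀ V ∈ Ds, V < b ∧ k + V + 1 < h) :
    q k (h - 1 - k) * (q (h - 1 - k) (k + 1) * (q (k + 1) (h - 1 - k) * (W (fun _ => 0) b M 0 (h - 1 - k) *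
      ∑ V ∈ Ds, q (k + 1) V * W (bonx x) b (x - 1 + M) 1 V))) ≤ (sg ℕ).real {b | ∃ t, Aev x h k t b} := by
  set D := h - 1 - k with hD
  let sl : ℕ → ℤ := fun i => (x : ℤ) - 1 - i
  let sr : ℕ → ℤ := fun i => (x : ℤ) + 3 + i
  have isl : Function.Injective sl := fun i j hij => by simp only [sl] at hij; omega
  have isr : Function.Injective sr := fun i j hij => by simp only [sr] at hij; omega
  let LS : Set (ℤ × ℕ → Bool) := ⋃ V ∈ Ds, ({η | sk η ((x : ℤ) - 1) ∈ PS true (k + 1) V} ∩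
    Ch true sl (bonx x) b (x - 1 + M) 1 V)
  let RS : Set (ℤ × ℕ → Bool) := Ch false sr (fun _ => 0) b M 0 D
  have mL : MeasurableSet LS := Finset.measurableSet_biUnion _ fun d' _ =>
    (sk_meas _ (PS_meas _ _ _)).inter (Ch_meas _ _ _ _ _ _ _)
  have mR : MeasurableSet RS := Ch_meas _ _ _ _ _ _ _
  have dR : DepOn {p : ℤ × ℕ | (x : ℤ) + 3 ≤ p.1} RS := by
    refine (Ch_dep _ _ _ _ _ _ _).mono ?_
    rintro p ⟨j, -, hp⟩
    simp only [Set.mem_ofPred_eq, hp, sr]; omega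
  have dL : DepOn {p : ℤ × ℕ | p.1 ≤ (x : ℤ) - 1} LS := by
    intro η η' hh h
    simp only [LS, Set.mem_iUnion, exists_prop] at h ⊢
    obtain ⟨d', hd', h1, h2⟩ := h
    refine ⟨d', hd', ?_, ?_⟩
    · exact sk_dep _ _ η η' (fun p hp => hh p (by simp only [Set.mem_ofPred_eq] at *; omega)) h1
    · refine Ch_dep _ _ _ _ _ _ _ η η' (fun p ⟨j, hj, hp⟩ => hh p ?_) h2
      simp only [Set.mem_ofPred_eq, hp, sl]; omega
  have rL : (sg (ℤ × ℕ)).real LS = ∑ V ∈ Ds, q (k + 1) V * W (bonx x) b (x - 1 + M) 1 V := by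
    simp only [LS]
    rw [chain_step (S := {p : ℤ × ℕ | ∃ j, 1 ≤ j ∧ p.1 = sl j}) Ds
      (fun V => Ch true sl (bonx x) b (x - 1 + M) 1 V) _ (fun d' => Ch_dep _ _ _ _ _ _ _)
      (fun d' => Ch_meas _ _ _ _ _ _ _)]
    · exact Finset.sum_congr rfl fun d' _ => by rw [Ch_real _ _ isl]
    · rintro p ⟨j, hj, hp⟩ h
      rw [hp] at h
      simp only [sl] at h
      omega
  have rRL : (sg (ℤ × ℕ)).real (RS ∩ LS) = W (fun _ => 0) b M 0 D *
      ∑ V ∈ Ds, q (k + 1) V * W (bonx x) b (x - 1 + M) 1 V := by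
    rw [indep ?_ dR dL mR mL, rL, Ch_real _ _ isr]
    rw [Set.disjoint_left]
    intro p hp hp'
    simp only [Set.mem_ofPred_eq] at *; omega
  have hi := indep4 (x : ℤ) (PS_meas false k D) (PS_meas false D (k + 1)) (PS_meas false (k + 1) D)
    (mR.inter mL) (O := RS ∩ LS) ?_
  · rw [PS_real, PS_real, PS_real, rRL] at hi
    rw [← hi, real_wlk 0 (Aev_meas x h k)]
    refine measureReal_mono ?_
    rintro η ⟨h0, h1, h2, hr, hl⟩
    obtain ⟨r', r'0, r'b, r'M, r'P⟩ := Ch_seq hb (fun _ _ => rfl) hr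
    simp only [LS, Set.mem_iUnion, exists_prop] at hl
    obtain ⟨V, hV, h3, h4⟩ := hl
    obtain ⟨v', v'0, v'b, v'M, v'P⟩ := Ch_seq hb
      (fun j hj => by simp only [bonx]; rw [if_neg (by omega)]) h4
    have hVV := hDs V hV
    refine fwd' (M := x + M + 4) hx hk hkh
      (fun n => if n = 0 then k else if n = 1 then D else if n = 2 then k + 1 else r' (n - 3))
      (fun n => if n = 0 then k else v' (n - 1)) rfl rfl rfl r'0 ?_ rfl ?_ ?_ ?_ ?_ ?_
    · intro n hn
      obtain ⟨m, rfl⟩ : ∃ m, n = m + 3 := ⟨n - 3, by omega⟩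
      have e1 : r' m + r' (m + 1) < h := by
        cases m with
        | zero => have := r'b 0; rw [r'0]; omega
        | succ m => have := r'b m; have := r'b (m + 1); omega
      simpa using e1
    · intro n
      rcases n with _ | n
      · have : k + v' 0 + 1 < h := by rw [v'0]; omega
        simpa using this
      · have e1 : v' n + v' (n + 1) + 1 < h := by
          have b2 := v'b n
          rcases n with _ | n
          · rw [v'0]; omega
          · have b1 := v'b n
            omega
        simpa using e1
    · intro n hn
      have := r'M (n - 3) (by omega)
      rw [if_neg (by omega), if_neg (by omega), if_neg (by omega), this]
    · intro n hn
      have := v'M (n - 1) (by omega)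
      rw [if_neg (by omega), this]
    · intro n
      rcases n with _ | _ | _ | n
      · have := h0; simp only [Set.mem_ofPred_eq, PS, flp] at this
        simpa using this
      · have := h1; simp only [Set.mem_ofPred_eq, PS, flp] at this
        simpa using this
      · have := h2; simp only [Set.mem_ofPred_eq, PS, flp] at this
        simpa [r'0] using this
      · have := r'P n
        simp only [PS, flp, sr, Set.mem_ofPred_eq] at this
        have e : (x : ℤ) + 3 + ((0 + n : ℕ) : ℤ) = x + ((n + 1 + 1 + 1 : ℕ) : ℤ) := by push_cast; ring
        rw [e] at this
        simpa using this
    · intro n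
      rcases n with _ | n
      · have := h3; simp only [Set.mem_ofPred_eq, PS, flp] at this
        have hx' : 0 < x := hx
        simpa [hx', v'0] using this
      · have := v'P n
        simp only [PS, flp, sl, Set.mem_ofPred_eq, bonx] at this
        rw [add_comm 1 n] at this
        simpa using this
  · refine (dR.mono ?_).inter (dL.mono ?_)
    · intro p hp; simp only [Set.mem_ofPred_eq] at *; omega
    · intro p hp; simp only [Set.mem_ofPred_eq] at *; omega

end FavSites

set_option autoImplicit false
set_option linter.all false
namespace FavSites
open MeasureTheory

theorem hs_congr {f g : ℕ → ℝ} {s s' : ℝ} (h : HasSum f s) (hf : ∀ j, g j = f j) (hs : s' = s) :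
    HasSum g s' := by
  have : g = f := funext hf
  rw [this, hs]; exact h

theorem q_succ (m j : ℕ) : q (m + 1) j = (m + j).choose j / 2 ^ (m + j + 1) := by
  rw [q, if_neg (by omega), bin, show m + 1 + j - 1 = m + j by omega, pow_succ, div_div]

theorem q_sum (n : ℕ) : HasSum (fun j => q n j) 1 := by
  cases n with
  | zero =>
    have : (fun j => q 0 j) = fun j => if j = 0 then (1:ℝ) else 0 := by
      funext j; simp [q]
    rw [this]
    exact hasSum_ite_eq 0 1
  | succ m =>
    have h := hasSum_choose_mul_geometric_of_norm_lt_one (𝕜 := ℝ) m (r := 1/2) (by norm_num)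
    have h2 := h.mul_right ((1/2 : ℝ) ^ (m + 1))
    refine hs_congr h2 (fun j => ?_) ?_
    · rw [q_succ, add_comm m j, Nat.choose_symm_add, div_eq_mul_inv, mul_assoc, ← pow_add]
      congr 1
      rw [one_div, inv_pow, add_assoc]
    · rw [show (1 - 1/2 : ℝ) = 1/2 by norm_num]; field_simp

theorem q_choose (m l : ℕ) : HasSum (fun j => (j.choose l : ℝ) * q (m + 1) j) ((m + l).choose l) := by
  have h := (q_sum (m + l + 1)).mul_left (((m + l).choose l : ℕ) : ℝ)
  rw [mul_one] at h
  have e : (fun j => (((m + l).choose l : ℕ) : ℝ) * q (m + l + 1) j) =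
      fun j => ((j + l).choose l : ℝ) * q (m + 1) (j + l) := by
    funext j
    rw [q_succ, q_succ]
    have h1 := Nat.choose_mul (n := m + (j + l)) (k := j + l) (s := j) (by omega)
    rw [show m + (j + l) - j = m + l by omega, show j + l - j = l by omega] at h1
    have h2 : (((m + (j + l)).choose (j + l) : ℕ) : ℝ) * ((j + l).choose j : ℕ) =
      ((m + (j + l)).choose j : ℕ) * ((m + l).choose l : ℕ) := by exact_mod_cast h1
    have h3 : (j + l).choose l = (j + l).choose j := Nat.choose_symm_add.symm
    rw [h3, show m + l + j = m + (j + l) by ring]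
    field_simp
    linarith
  rw [e] at h
  have := (hasSum_nat_add_iff (f := fun j => (j.choose l : ℝ) * q (m + 1) j) l).1 h
  refine hs_congr this (fun j => rfl) ?_
  rw [Finset.sum_eq_zero, add_zero]
  intro i hi
  rw [Nat.choose_eq_zero_of_lt (Finset.mem_range.1 hi)]; simp

theorem choose_three (j : ℕ) : (j.choose 3 : ℝ) = j * (j - 1) * (j - 2) / 6 := by
  induction j with
  | zero => simp
  | succ j ih =>
    rw [Nat.choose_succ_succ' j 2]
    push_cast
    rw [ih, Nat.cast_choose_two]; ring

theorem q_poly (n : ℕ) (a0 a1 a2 a3 : ℝ) :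
    HasSum (fun j : ℕ => q n j * (a0 + a1 * j + a2 * j ^ 2 + a3 * j ^ 3))
      (a0 + a1 * n + a2 * (n ^ 2 + 2 * n) + a3 * (n ^ 3 + 6 * n ^ 2 + 6 * n)) := by
  cases n with
  | zero =>
    have : (fun j : ℕ => q 0 j * (a0 + a1 * j + a2 * j ^ 2 + a3 * j ^ 3)) = fun j => if j = 0 then a0 else 0 := by
      funext j
      by_cases h : j = 0
      · simp [q, h]
      · simp [q, h]
    rw [this]
    convert hasSum_ite_eq 0 a0 using 1
    simp
  | succ m =>
    have h0 := (q_choose m 0).mul_left a0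
    have h1 := (q_choose m 1).mul_left (a1 + a2 + a3)
    have h2 := (q_choose m 2).mul_left (2 * a2 + 6 * a3)
    have h3 := (q_choose m 3).mul_left (6 * a3)
    have := ((h0.add h1).add h2).add h3
    refine hs_congr this (fun j => ?_) ?_
    · rw [choose_three, Nat.cast_choose_two, Nat.choose_one_right, Nat.choose_zero_right]
      push_cast; ring
    · rw [choose_three, Nat.cast_choose_two, Nat.choose_one_right, Nat.choose_zero_right]
      push_cast; ring

theorem trunc {f : ℕ → ℝ} {s : ℝ} {b : ℕ} (h : HasSum f s) (hf : ∀ j, b ≤ j → f j ≤ 0) :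
    s ≤ ∑ j ∈ Finset.range b, f j := by
  have := sum_le_hasSum (Finset.range b) (f := fun j => - f j) (fun j hj => ?_) h.neg
  · rw [Finset.sum_neg_distrib] at this; linarith
  · have := hf j (by simpa using hj); linarith

theorem q_trunc_le (n b : ℕ) : ∑ j ∈ Finset.range b, q n j ≤ 1 - q n b := by
  have := sum_le_hasSum (Finset.range (b + 1)) (fun j _ => q_nonneg n j) (q_sum n)
  rw [Finset.sum_range_succ] at this; linarith

theorem W_nonneg (bon : ℕ → ℕ) (b M i d : ℕ) : 0 ≤ W bon b M i d := by
  induction M generalizing i d with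
  | zero => simp only [W]; split_ifs <;> norm_num
  | succ M ih => exact Finset.sum_nonneg fun j _ => mul_nonneg (q_nonneg _ _) (ih _ _)

theorem W_congr (bon bon' : ℕ → ℕ) (b M i i' d : ℕ) (h : ∀ j, bon (i + j) = bon' (i' + j)) :
    W bon b M i d = W bon' b M i' d := by
  induction M generalizing i i' d with
  | zero => rfl
  | succ M ih =>
    simp only [W]
    have h0 := h 0
    simp only [add_zero] at h0
    rw [h0]
    refine Finset.sum_congr rfl fun j _ => ?_
    rw [ih (i + 1) (i' + 1)]
    intro l
    have := h (l + 1)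
    rwa [show i + (l + 1) = i + 1 + l by ring, show i' + (l + 1) = i' + 1 + l by ring] at this

theorem W_zero_zero (b M i : ℕ) (hb : 0 < b) : W (fun _ => 0) b M i 0 = 1 := by
  induction M generalizing i with
  | zero => simp [W]
  | succ M ih =>
    simp only [W]
    rw [Finset.sum_eq_single_of_mem 0 (Finset.mem_range.2 hb)]
    · rw [ih]; simp [q]
    · intro j _ hj; simp [q, hj]

theorem q_zero_right (d : ℕ) : q d 0 = (1 / 2) ^ d := by
  cases d with
  | zero => simp [q]
  | succ d => rw [q_succ]; simp

theorem R_lower (b : ℕ) (hb : 0 < b) (M i d : ℕ) (hd : d < b) :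
    ((b : ℝ) - d) / b ≤ W (fun _ => 0) b M i d + (1 - (1 / 2) ^ b) ^ M := by
  have hb' : (0 : ℝ) < b := by exact_mod_cast hb
  have hρ : (0 : ℝ) ≤ 1 - (1 / 2) ^ b := by
    have : ((1 : ℝ) / 2) ^ b ≤ 1 := pow_le_one₀ (by norm_num) (by norm_num)
    linarith
  induction M generalizing i d with
  | zero =>
    have := W_nonneg (fun _ => 0) b 0 i d
    rw [div_le_iff₀ hb', pow_zero]
    have : (0:ℝ) ≤ d := by positivity
    nlinarith
  | succ M ih =>
    rcases Nat.eq_zero_or_pos d with h0 | h0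
    · subst h0
      rw [W_zero_zero b _ _ hb]
      have : (0:ℝ) ≤ (1 - (1 / 2) ^ b) ^ (M + 1) := pow_nonneg hρ _
      simp only [Nat.cast_zero, sub_zero, div_self hb'.ne']; linarith
    have h1 := q_poly d 1 (-1 / b) 0 0
    have h2 := trunc (b := b) h1 (fun j hj => ?_)
    · have h3 : ∀ j ∈ Finset.range b, q d j * (1 + -1 / b * j + 0 * j ^ 2 + 0 * j ^ 3) ≤
          q (d + 0) j * W (fun _ => 0) b M (i + 1) j +
            (if j = 0 then 0 else q d j) * (1 - (1 / 2) ^ b) ^ M := by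
        intro j hj
        have e : (1 + -1 / b * j + 0 * j ^ 2 + 0 * j ^ 3 : ℝ) = ((b : ℝ) - j) / b := by
          field_simp; ring
        rw [e, add_zero]
        by_cases hj0 : j = 0
        · subst hj0
          rw [W_zero_zero b _ _ hb]
          simp [hb'.ne']
        · rw [if_neg hj0, ← mul_add]
          exact mul_le_mul_of_nonneg_left (ih _ _ (Finset.mem_range.1 hj)) (q_nonneg _ _)
      have h4 := h2.trans (Finset.sum_le_sum h3)
      rw [Finset.sum_add_distrib, ← Finset.sum_mul] at h4
      have h5 : ∑ j ∈ Finset.range b, (if j = 0 then 0 else q d j) ≤ 1 - (1 / 2) ^ b := by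
        have := q_trunc_le d b
        have hq := q_nonneg d b
        have e : ∑ j ∈ Finset.range b, (if j = 0 then 0 else q d j) + q d 0 = ∑ j ∈ Finset.range b, q d j := by
          obtain ⟨c, rfl⟩ : ∃ c, b = c + 1 := ⟨b - 1, by omega⟩
          rw [Finset.sum_range_succ', Finset.sum_range_succ']
          simp
        rw [q_zero_right] at e
        have : ((1 : ℝ) / 2) ^ b ≤ (1 / 2) ^ d := pow_le_pow_of_le_one (by norm_num) (by norm_num) hd.le
        linarith
      have h6 := mul_le_mul_of_nonneg_right h5 (pow_nonneg hρ M)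
      have e2 : ((b : ℝ) - d) / b = 1 + -1 / b * d := by field_simp; ring
      rw [pow_succ']
      simp only [W] 
      rw [e2]
      linarith
    · have : (1 + -1 / b * j + 0 * j ^ 2 + 0 * j ^ 3 : ℝ) ≤ 0 := by
        have : (b : ℝ) ≤ j := by exact_mod_cast hj
        have e : (1 + -1 / b * j + 0 * j ^ 2 + 0 * j ^ 3 : ℝ) = ((b : ℝ) - j) / b := by
          field_simp; ring
        rw [e]; exact div_nonpos_of_nonpos_of_nonneg (by linarith) hb'.le
      exact mul_nonpos_of_nonneg_of_nonpos (q_nonneg _ _) this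

noncomputable def Lx (b M : ℕ) : ℕ → ℕ → ℝ
  | 0, d => W (fun _ => 0) b M 0 d
  | n + 1, d => ∑ j ∈ Finset.range b, q (d + 1) j * Lx b M n j

theorem W_Lx (b M n i d : ℕ) : W (bonx (i + n)) b (n + M) i d = Lx b M n d := by
  induction n generalizing i d with
  | zero =>
    simp only [Lx, zero_add, add_zero]
    exact W_congr _ _ _ _ _ _ _ fun j => by simp [bonx]
  | succ n ih =>
    rw [show n + 1 + M = (n + M) + 1 by ring]
    simp only [W, Lx]
    refine Finset.sum_congr rfl fun j _ => ?_
    rw [show i + (n + 1) = i + 1 + n by ring, ih]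
    have : i < i + 1 + n := by omega
    simp [bonx, this]

noncomputable def phi (b : ℝ) (v : ℝ) : ℝ := (b - v) + (b - v) ^ 2 / (2 * b) + (b - v) ^ 3 / (8 * b ^ 2)

theorem phi_sign {b v : ℝ} (hb : 0 < b) : phi b v = (b - v) * (1 + (b - v) / (2 * b) + ((b - v) / b) ^ 2 / 8) := by
  unfold phi; field_simp

theorem phi_quad (z : ℝ) : 0 ≤ 1 + z / 2 + z ^ 2 / 8 := by nlinarith [sq_nonneg (z + 2)]

theorem phi_nonpos {b v : ℝ} (hb : 0 < b) (hv : b ≤ v) : phi b v ≤ 0 := by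
  rw [phi_sign hb]
  have := phi_quad ((b - v) / b)
  have e : (b - v) / (2 * b) = (b - v) / b / 2 := by field_simp
  rw [e]
  exact mul_nonpos_of_nonpos_of_nonneg (by linarith) this

theorem phi_step (b : ℕ) (hb : 0 < b) (v : ℕ) (hv : v < b) :
    phi b v ≤ ∑ j ∈ Finset.range b, q (v + 1) j * phi b j + 5 * ((b - v) / b) := by
  have hb' : (1 : ℝ) ≤ b := by exact_mod_cast hb
  have hb0 : (0 : ℝ) < b := by linarith
  have hv' : (v : ℝ) + 1 ≤ b := by exact_mod_cast hv
  have h1 := q_poly (v + 1) (b + b ^ 2 / (2 * b) + b ^ 3 / (8 * b ^ 2))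
    (-1 - 2 * b / (2 * b) - 3 * b ^ 2 / (8 * b ^ 2)) (1 / (2 * b) + 3 * b / (8 * b ^ 2)) (- 1 / (8 * b ^ 2))
  have e : (fun j : ℕ => q (v + 1) j * ((b + b ^ 2 / (2 * b) + b ^ 3 / (8 * b ^ 2) : ℝ) +
    (-1 - 2 * b / (2 * b) - 3 * b ^ 2 / (8 * b ^ 2)) * j + (1 / (2 * b) + 3 * b / (8 * b ^ 2)) * j ^ 2 +
     (- 1 / (8 * b ^ 2)) * j ^ 3)) = fun j : ℕ => q (v + 1) j * phi b j := by
    funext j; unfold phi; field_simp; ring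
  rw [e] at h1
  have h2 := trunc (b := b) h1 (fun j hj => mul_nonpos_of_nonneg_of_nonpos (q_nonneg _ _)
    (phi_nonpos hb0 (by exact_mod_cast hj)))
  refine le_trans ?_ (add_le_add h2 le_rfl)
  obtain ⟨w, hw⟩ : ∃ w : ℝ, w = b - v := ⟨_, rfl⟩
  have hvw : (v : ℝ) = b - w := by linarith
  have hw1 : 1 ≤ w := by linarith
  have hwb : w ≤ b := by have : (0 : ℝ) ≤ v := by positivity
                         linarith
  unfold phi
  push_cast
  rw [hvw]
  rw [← sub_nonneg]
  have key : 0 ≤ (40 * b * w - (16 * b * w + 9 * w ^ 2 - 6 * b * w - 21 * w + 13) : ℝ) := by nlinarith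
  have := div_nonneg key (by positivity : (0 : ℝ) ≤ 8 * b ^ 2)
  convert this using 1
  field_simp
  ring

end FavSites

set_option autoImplicit false
set_option linter.all false
namespace FavSites
open MeasureTheory

theorem Lx_nonneg (b M n d : ℕ) : 0 ≤ Lx b M n d := by
  induction n generalizing d with
  | zero => exact W_nonneg _ _ _ _ _
  | succ n ih => exact Finset.sum_nonneg fun j _ => mul_nonneg (q_nonneg _ _) (ih _)

theorem pot_iter (b M : ℕ) (hb : 0 < b)
    (hR : ∀ d, d < b → ((b : ℝ) - d) / (2 * b) ≤ W (fun _ => 0) b M 0 d) (X v : ℕ) (hv : v < b) :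
    phi b v ≤ 2 * b * (1 - (1 / 4) ^ b) ^ X + 10 * ∑ n ∈ Finset.range X, Lx b M n v := by
  have hb' : (1 : ℝ) ≤ b := by exact_mod_cast hb
  have hb0 : (0 : ℝ) < b := by linarith
  have hρ : (0 : ℝ) ≤ 1 - (1 / 4) ^ b := by
    have : ((1 : ℝ) / 4) ^ b ≤ 1 := pow_le_one₀ (by norm_num) (by norm_num)
    linarith
  induction X generalizing v with
  | zero =>
    have hv' : (v : ℝ) + 1 ≤ b := by exact_mod_cast hv
    have hv0 : (0 : ℝ) ≤ v := by positivity
    rw [phi_sign hb0]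
    simp only [pow_zero, mul_one, Finset.range_zero, Finset.sum_empty, mul_zero, add_zero]
    have h1 : (b - v) / (2 * b) ≤ (1 / 2 : ℝ) := by
      rw [div_le_iff₀ (by positivity)]; linarith
    have h2 : ((b - v) / b : ℝ) ≤ 1 := by
      rw [div_le_iff₀ hb0]; linarith
    have h3 : (0 : ℝ) ≤ (b - v) / b := div_nonneg (by linarith) hb0.le
    have h4 : ((b - v) / b : ℝ) ^ 2 ≤ 1 := pow_le_one₀ h3 h2
    have h5 : (0 : ℝ) ≤ 1 + (b - v) / (2 * b) + ((b - v) / b) ^ 2 / 8 := by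
      have : (0 : ℝ) ≤ (b - v) / (2 * b) := div_nonneg (by linarith) (by positivity)
      positivity
    calc ((b : ℝ) - v) * (1 + (b - v) / (2 * b) + ((b - v) / b) ^ 2 / 8) ≤ b * 2 := by
          apply mul_le_mul <;> linarith
      _ = 2 * b := by ring
  | succ X ih =>
    have h1 := phi_step b hb v hv
    have h2 : ∑ j ∈ Finset.range b, q (v + 1) j * phi b j ≤ ∑ j ∈ Finset.range b,
        (q (v + 1) j * (2 * b * (1 - (1 / 4) ^ b) ^ X) + 10 * ∑ n ∈ Finset.range X, q (v + 1) j * Lx b M n j) := by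
      refine Finset.sum_le_sum fun j hj => ?_
      rw [← Finset.mul_sum]
      have := mul_le_mul_of_nonneg_left (ih j (Finset.mem_range.1 hj)) (q_nonneg (v + 1) j)
      linarith
    rw [Finset.sum_add_distrib, ← Finset.sum_mul, ← Finset.mul_sum, Finset.sum_comm] at h2
    have h3 : ∑ j ∈ Finset.range b, q (v + 1) j ≤ 1 - (1 / 4) ^ b := by
      have := q_trunc_le (v + 1) b
      have h4 : ((1 : ℝ) / 4) ^ b ≤ q (v + 1) b := by
        rw [q_succ]
        have hc : (1 : ℝ) ≤ (v + b).choose b := by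
          exact_mod_cast Nat.choose_pos (by omega)
        have hp : (2 : ℝ) ^ (v + b + 1) ≤ 4 ^ b := by
          rw [show (4 : ℝ) = 2 ^ 2 by norm_num, ← pow_mul]
          exact pow_le_pow_right₀ (by norm_num) (by omega)
        rw [one_div, inv_pow, le_div_iff₀ (by positivity)]
        calc ((4 : ℝ) ^ b)⁻¹ * 2 ^ (v + b + 1) ≤ (4 ^ b)⁻¹ * 4 ^ b := by gcongr
          _ = 1 := by field_simp
          _ ≤ _ := hc
      linarith
    have h4 := mul_le_mul_of_nonneg_right h3 (show (0 : ℝ) ≤ 2 * b * (1 - (1 / 4) ^ b) ^ X from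
      mul_nonneg (by positivity) (pow_nonneg hρ _))
    rw [Finset.sum_range_succ']
    have h5 := hR v hv
    have e : (5 : ℝ) * ((b - v) / b) = 10 * ((b - v) / (2 * b)) := by field_simp; ring
    rw [e] at h1
    simp only [Lx]
    rw [pow_succ']
    linarith

theorem pot (b : ℕ) (hb : 0 < b) : ∃ M X : ℕ,
    (∀ d, d < b → ((b : ℝ) - d) / (2 * b) ≤ W (fun _ => 0) b M 0 d) ∧
    ∀ v, v < b → ((b : ℝ) - v) / 20 ≤ ∑ n ∈ Finset.range X, Lx b M n v := by
  have hb' : (1 : ℝ) ≤ b := by exact_mod_cast hb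
  have hb0 : (0 : ℝ) < b := by linarith
  obtain ⟨M, hM⟩ := exists_pow_lt_of_lt_one (show (0 : ℝ) < 1 / (2 * b) by positivity)
    (show (1 - (1 / 2) ^ b : ℝ) < 1 by have : (0 : ℝ) < (1 / 2) ^ b := by positivity
                                       linarith)
  obtain ⟨X, hX⟩ := exists_pow_lt_of_lt_one (show (0 : ℝ) < 1 / (4 * b) by positivity)
    (show (1 - (1 / 4) ^ b : ℝ) < 1 by have : (0 : ℝ) < (1 / 4) ^ b := by positivity
                                       linarith)
  have hR : ∀ d, d < b → ((b : ℝ) - d) / (2 * b) ≤ W (fun _ => 0) b M 0 d := by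
    intro d hd
    have h1 := R_lower b hb M 0 d hd
    have hd' : (d : ℝ) + 1 ≤ b := by exact_mod_cast hd
    have h2 : 1 / (2 * b) ≤ ((b : ℝ) - d) / (2 * b) := by gcongr; linarith
    have e : ((b : ℝ) - d) / b = 2 * (((b : ℝ) - d) / (2 * b)) := by field_simp
    linarith
  refine ⟨M, X, hR, fun v hv => ?_⟩
  have h1 := pot_iter b M hb hR X v hv
  have hv' : (v : ℝ) + 1 ≤ b := by exact_mod_cast hv
  have h2 : 2 * b * (1 - (1 / 4) ^ b : ℝ) ^ X ≤ 1 / 2 := by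
    calc 2 * b * (1 - (1 / 4) ^ b : ℝ) ^ X ≤ 2 * b * (1 / (4 * b)) := by gcongr
      _ = 1 / 2 := by field_simp; norm_num
  have h3 : ((b : ℝ) - v) ≤ phi b v := by
    unfold phi
    have : (0 : ℝ) ≤ b - v := by linarith
    have : (0 : ℝ) ≤ (b - v) ^ 2 / (2 * b) + (b - v) ^ 3 / (8 * b ^ 2) := by positivity
    linarith
  linarith

/-- lower bound on the binomial mass near the centre -/
theorem bin_ratio (m J j : ℕ) (hJ : J < m) (hj : j ≤ J) :
    bin (2 * m) m ≤ bin (2 * m) (m + j) * (((m : ℝ) + J) / (m - J)) ^ j := by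
  have hJ' : (J : ℝ) + 1 ≤ m := by exact_mod_cast hJ
  induction j with
  | zero => simp
  | succ j ih =>
    have h1 := ih (by omega)
    have hj' : (j : ℝ) + 1 ≤ J := by exact_mod_cast hj
    have h2 := Nat.choose_succ_right_eq (2 * m) (m + j)
    have h3 : ((2 * m).choose (m + j + 1) : ℝ) * (m + j + 1) = (2 * m).choose (m + j) * (m - j) := by
      have : ((2 * m - (m + j) : ℕ) : ℝ) = m - j := by
        rw [show 2 * m - (m + j) = m - j by omega, Nat.cast_sub (by omega)]
      rw [← this]; exact_mod_cast h2
    have h4 : bin (2 * m) (m + j) = bin (2 * m) (m + j + 1) * ((m + j + 1) / (m - j)) := by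
      have : (0 : ℝ) < m - j := by linarith
      unfold bin
      field_simp
      linarith
    have h5 : ((m : ℝ) + j + 1) / (m - j) ≤ (m + J) / (m - J) := by
      apply div_le_div₀ <;> linarith
    have hn := bin_nonneg (2 * m) (m + j + 1)
    have hp : (0 : ℝ) ≤ (m + J) / (m - J) := div_nonneg (by positivity) (by linarith)
    calc bin (2 * m) m ≤ bin (2 * m) (m + j) * (((m : ℝ) + J) / (m - J)) ^ j := h1
      _ = bin (2 * m) (m + j + 1) * ((m + j + 1) / (m - j)) * (((m : ℝ) + J) / (m - J)) ^ j := by rw [h4]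
      _ ≤ bin (2 * m) (m + j + 1) * ((m + J) / (m - J)) * (((m : ℝ) + J) / (m - J)) ^ j := by gcongr
      _ = _ := by rw [pow_succ', ← add_assoc]; ring

/-- `bin (2 * m) (m+j) ≥ exp (-K) / (2 √m)` when `2 j^2 ≤ K (m-j)` -/
theorem bin_lower_even (m j : ℕ) (K : ℝ) (hj : j < m) (hK : 2 * (j : ℝ) ^ 2 ≤ K * (m - j)) :
    Real.exp (-K) / (2 * Real.sqrt m) ≤ bin (2 * m) (m + j) := by
  have hj' : (j : ℝ) + 1 ≤ m := by exact_mod_cast hj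
  have hj0 : (0 : ℝ) ≤ j := by positivity
  have hm0 : (0 : ℝ) < m := by linarith
  have h1 := bin_ratio m j j hj le_rfl
  have h2 : ((m : ℝ) + j) / (m - j) ≤ Real.exp (2 * j / (m - j)) := by
    have := Real.add_one_le_exp (2 * (j : ℝ) / (m - j))
    have hp : (0 : ℝ) < m - j := by linarith
    have e : ((m : ℝ) + j) / (m - j) = 2 * j / (m - j) + 1 := by field_simp; ring
    rw [e]; exact this
  have hp : (0 : ℝ) < m - j := by linarith
  have h3 : (((m : ℝ) + j) / (m - j)) ^ j ≤ Real.exp K := by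
    calc (((m : ℝ) + j) / (m - j)) ^ j ≤ Real.exp (2 * j / (m - j)) ^ j := by gcongr
      _ = Real.exp (j * (2 * j / (m - j))) := by rw [Real.exp_nat_mul]
      _ ≤ Real.exp K := by
        apply Real.exp_le_exp.2
        rw [← mul_div_assoc, div_le_iff₀ hp]; linarith
  have h4 := cb_lower m (by omega)
  have h5 : 1 / (2 * Real.sqrt m) ≤ bin (2 * m) m := by
    rw [div_le_iff₀ (by positivity)]
    have hs := Real.sq_sqrt hm0.le
    have hb := bin_nonneg (2 * m) m
    by_contra hc
    push Not at hc
    have h0 : 0 ≤ bin (2 * m) m * (2 * Real.sqrt m) := by positivity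
    have : (bin (2 * m) m * (2 * Real.sqrt m)) ^ 2 < 1 := by nlinarith
    rw [mul_pow, mul_pow, hs] at this
    linarith
  have hb := bin_nonneg (2 * m) (m + j)
  have h6 : 1 / (2 * Real.sqrt m) ≤ bin (2 * m) (m + j) * Real.exp K :=
    h5.trans (h1.trans (mul_le_mul_of_nonneg_left h3 hb))
  rw [Real.exp_neg, div_eq_mul_one_div, mul_comm]
  have he := Real.exp_pos K
  rw [← div_eq_mul_inv, div_le_iff₀ he]; exact h6

theorem bin_symm (n i : ℕ) (h : i ≤ n) : bin n (n - i) = bin n i := by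
  unfold bin; rw [Nat.choose_symm h]

theorem bin_half_le (n i : ℕ) : bin n i / 2 ≤ bin (n + 1) i := by
  have h : (n.choose i : ℝ) ≤ (n + 1).choose i := by exact_mod_cast Nat.choose_le_choose i (Nat.le_succ n)
  unfold bin
  rw [pow_succ, div_div]; gcongr

end FavSites

set_option autoImplicit false
set_option linter.all false
namespace FavSites
open MeasureTheory

theorem bin_lower (h n i : ℕ) (s : ℝ) (hs : s = Real.sqrt h) (hs32 : 32 ≤ s) (hn1 : h ≤ 2 * n) (hn2 : n ≤ h)
    (hi1 : 2 * (i : ℝ) - n ≤ 4 * s) (hi2 : (n : ℝ) - 2 * i ≤ 4 * s) :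
    Real.exp (-144) / 4 / s ≤ bin n i := by
  have hss : s ^ 2 = h := by rw [hs]; exact Real.sq_sqrt (by positivity)
  have hn1' : (h : ℝ) ≤ 2 * n := by exact_mod_cast hn1
  have hn2' : (n : ℝ) ≤ h := by exact_mod_cast hn2
  have hin : i ≤ n := by
    have : (i : ℝ) ≤ n := by nlinarith
    exact_mod_cast this
  -- the case i ≥ n/2
  have main : ∀ i : ℕ, i ≤ n → n ≤ 2 * i → 2 * (i : ℝ) - n ≤ 4 * s → Real.exp (-144) / 4 / s ≤ bin n i := by
    intro i hin hi hi1
    have key : ∀ m j : ℕ, n ≤ 2 * m + 1 → 2 * m ≤ n → (j : ℝ) ≤ 3 * s →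
        Real.exp (-144) / 2 / s ≤ bin (2 * m) (m + j) := by
      intro m j h1 h2 h3
      have h1' : (n : ℝ) ≤ 2 * m + 1 := by exact_mod_cast h1
      have h2' : 2 * (m : ℝ) ≤ n := by exact_mod_cast h2
      have hj0 : (0 : ℝ) ≤ j := by positivity
      have hmj : (h : ℝ) / 8 ≤ m - j := by nlinarith
      have hjm : j < m := by
        have : (j : ℝ) < m := by nlinarith
        exact_mod_cast this
      have := bin_lower_even m j 144 hjm (by nlinarith)
      refine le_trans ?_ this
      rw [div_div]
      have hm0 : (0 : ℝ) < m := by nlinarith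
      have : Real.sqrt m ≤ s := by
        rw [hs]; apply Real.sqrt_le_sqrt; linarith
      have : 0 < Real.sqrt m := Real.sqrt_pos.2 hm0
      gcongr
    rcases Nat.even_or_odd' n with ⟨m, hm | hm⟩
    · obtain ⟨j, rfl⟩ : ∃ j, i = m + j := ⟨i - m, by omega⟩
      have hm' : (n : ℝ) = 2 * m := by exact_mod_cast hm
      have h3 := key m j (by omega) (by omega) (by push_cast at hi1; linarith)
      rw [hm]
      have e : Real.exp (-144) / 4 / s ≤ Real.exp (-144) / 2 / s := by
        have := Real.exp_pos (-144)
        gcongr; norm_num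
      linarith
    · obtain ⟨j, rfl⟩ : ∃ j, i = m + j := ⟨i - m, by omega⟩
      have hm' : (n : ℝ) = 2 * m + 1 := by exact_mod_cast hm
      have h3 := key m j (by omega) (by omega) (by push_cast at hi1; linarith)
      have h4 := bin_half_le (2 * m) (m + j)
      rw [hm]
      have e : Real.exp (-144) / 4 / s = Real.exp (-144) / 2 / s / 2 := by ring
      linarith
  by_cases hi : n ≤ 2 * i
  · exact main i hin hi hi1
  · rw [← bin_symm n i hin]
    refine main (n - i) (by omega) (by omega) ?_
    rw [Nat.cast_sub hin]; linarith

def inJ (h k : ℕ) : Prop :=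
  ((h : ℝ) + Real.sqrt h) / 2 < (k : ℝ) ∧ (k : ℝ) < ((h : ℝ) + 2 * Real.sqrt h) / 2

theorem q_pos_eq (n j : ℕ) (hn : 1 ≤ n) : q n j = bin (n + j - 1) j / 2 := by
  rw [q, if_neg (by omega)]

theorem card_Icc_lower (a c : ℝ) (ha : 0 ≤ a) (hc : 0 ≤ c) :
    c - a - 1 ≤ (Finset.Icc ⌈a⌉₊ ⌊c⌋₊).card := by
  rw [Nat.card_Icc]
  have h1 := Nat.ceil_lt_add_one ha
  have h2 := Nat.lt_floor_add_one c
  rcases le_total (⌈a⌉₊) (⌊c⌋₊ + 1) with h | h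
  · rw [Nat.cast_sub h]; push_cast; linarith
  · have : ((⌊c⌋₊ : ℝ)) + 1 ≤ ⌈a⌉₊ := by exact_mod_cast h
    have : (0 : ℝ) ≤ ((⌊c⌋₊ + 1 - ⌈a⌉₊ : ℕ) : ℝ) := by positivity
    linarith

set_option maxHeartbeats 1000000 in
theorem sum_x_lower (h : ℕ) (s : ℝ) (hs : s = Real.sqrt h) (hs32 : 32 ≤ s) : ∃ X : ℕ, ∀ k, inJ h k →
    (Real.exp (-144) / 4) ^ 4 / (1280 * s ^ 3) ≤
      ∑ n ∈ Finset.range X, (sg ℕ).real {b | ∃ t, Aev (n + 1) h k t b} := by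
  set c := Real.exp (-144) / 4 with hc
  have hc0 : 0 < c := by positivity
  have hs0 : 0 < s := by linarith
  have hss : s ^ 2 = h := by rw [hs]; exact Real.sq_sqrt (by positivity)
  have hh : (1024 : ℝ) ≤ h := by nlinarith
  have hhn : 1024 ≤ h := by exact_mod_cast hh
  set b := h / 2 with hb
  have hb1 : (h : ℝ) ≤ 2 * b + 1 := by exact_mod_cast (by omega : h ≤ 2 * b + 1)
  have hb2 : 2 * (b : ℝ) ≤ h := by exact_mod_cast (by omega : 2 * b ≤ h)
  obtain ⟨M, X, hR, hL⟩ := pot b (by omega)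
  refine ⟨X, fun k hk => ?_⟩
  obtain ⟨hk1, hk2⟩ := hk
  rw [← hs] at hk1 hk2
  have hkh : k + 1 ≤ h := by
    have : (k : ℝ) + 1 ≤ h := by nlinarith
    exact_mod_cast this
  have hk0 : 1 ≤ k := by
    have : (1 : ℝ) ≤ k := by nlinarith
    exact_mod_cast this
  set D := h - 1 - k with hD
  have hDr : (D : ℝ) = h - 1 - k := by
    have : D + 1 + k = h := by omega
    have : (D : ℝ) + 1 + k = h := by exact_mod_cast this
    linarith
  have hD1 : 1 ≤ D := by
    have : (1 : ℝ) ≤ D := by rw [hDr]; nlinarith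
    exact_mod_cast this
  have hDb : D < b := by
    have : (D : ℝ) < b := by rw [hDr]; linarith
    exact_mod_cast this
  set Ds := Finset.Icc ⌈(h : ℝ) / 2 - 2 * s⌉₊ ⌊(h : ℝ) / 2 - s - 1⌋₊ with hDs
  have hVV : ∀ V ∈ Ds, (h : ℝ) / 2 - 2 * s ≤ V ∧ (V : ℝ) ≤ h / 2 - s - 1 := by
    intro V hV
    rw [hDs, Finset.mem_Icc] at hV
    exact ⟨Nat.ceil_le.1 hV.1, (Nat.le_floor_iff (by nlinarith)).1 hV.2⟩
  have hVb : ∀ V ∈ Ds, V < b ∧ k + V + 1 < h := by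
    intro V hV
    obtain ⟨h1, h2⟩ := hVV V hV
    constructor
    · have : (V : ℝ) < b := by linarith
      exact_mod_cast this
    · have : (k : ℝ) + V + 1 < h := by linarith
      exact_mod_cast this
  have q1 : c / s / 2 ≤ q k D := by
    rw [q_pos_eq _ _ hk0]
    have := bin_lower h (k + D - 1) D s hs hs32 (by omega) (by omega) ?_ ?_
    · linarith
    all_goals
      have e : ((k + D - 1 : ℕ) : ℝ) = h - 2 := by
        rw [show k + D - 1 = h - 2 by omega, Nat.cast_sub (by omega)]; norm_num
      rw [e, hDr]; linarith
  have q2 : c / s / 2 ≤ q D (k + 1) := by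
    rw [q_pos_eq _ _ hD1]
    have := bin_lower h (D + (k + 1) - 1) (k + 1) s hs hs32 (by omega) (by omega) ?_ ?_
    · linarith
    all_goals
      have e : ((D + (k + 1) - 1 : ℕ) : ℝ) = h - 1 := by
        rw [show D + (k + 1) - 1 = h - 1 by omega, Nat.cast_sub (by omega)]; norm_num
      rw [e]; push_cast; linarith
  have q3 : c / s / 2 ≤ q (k + 1) D := by
    rw [q_pos_eq _ _ (by omega)]
    have := bin_lower h (k + 1 + D - 1) D s hs hs32 (by omega) (by omega) ?_ ?_
    · linarith
    all_goals
      have e : ((k + 1 + D - 1 : ℕ) : ℝ) = h - 1 := by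
        rw [show k + 1 + D - 1 = h - 1 by omega, Nat.cast_sub (by omega)]; norm_num
      rw [e, hDr]; linarith
  have q4 : ∀ V ∈ Ds, c / s / 2 ≤ q (k + 1) V := by
    intro V hV
    obtain ⟨h1, h2⟩ := hVV V hV
    have h3 := hVb V hV
    rw [q_pos_eq _ _ (by omega), show k + 1 + V - 1 = k + V by omega]
    have := bin_lower h (k + V) V s hs hs32 ?_ (by omega) ?_ ?_
    · linarith
    · have : (h : ℝ) ≤ 2 * (k + V) := by nlinarith
      exact_mod_cast this
    all_goals push_cast; linarith
  have hW : 1 / (2 * s) ≤ W (fun _ => 0) b M 0 D := by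
    refine le_trans ?_ (hR D hDb)
    have hb0 : (0 : ℝ) < 2 * b := by linarith
    rw [div_le_div_iff₀ (by positivity) hb0]
    rw [hDr]
    nlinarith
  have hcard : s / 2 ≤ (Ds.card : ℝ) := by
    have := card_Icc_lower ((h : ℝ) / 2 - 2 * s) ((h : ℝ) / 2 - s - 1) (by nlinarith) (by nlinarith)
    rw [← hDs] at this
    linarith
  have hLsum : (s / 2) * ((c / s / 2) * (s / 20)) ≤ ∑ V ∈ Ds, q (k + 1) V * ∑ n ∈ Finset.range X, Lx b M n V := by
    calc (s / 2) * ((c / s / 2) * (s / 20)) ≤ Ds.card * ((c / s / 2) * (s / 20)) := by gcongr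
      _ = ∑ V ∈ Ds, ((c / s / 2) * (s / 20)) := by rw [Finset.sum_const, nsmul_eq_mul]
      _ ≤ _ := by
        refine Finset.sum_le_sum fun V hV => ?_
        have h1 := hL V (hVb V hV).1
        have h2 := (hVV V hV).2
        refine mul_le_mul (q4 V hV) (le_trans ?_ h1) (by positivity) (q_nonneg _ _)
        linarith
  calc c ^ 4 / (1280 * s ^ 3) = (c / s / 2) * ((c / s / 2) * ((c / s / 2) * ((1 / (2 * s)) *
        ((s / 2) * ((c / s / 2) * (s / 20)))))) := by field_simp; norm_num
    _ ≤ q k D * (q D (k + 1) * (q (k + 1) D * (W (fun _ => 0) b M 0 D *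
        ∑ V ∈ Ds, q (k + 1) V * ∑ n ∈ Finset.range X, Lx b M n V))) := by
      have := W_nonneg (fun _ => 0) b M 0 D
      have := q_nonneg k D
      have := q_nonneg D (k + 1)
      have := q_nonneg (k + 1) D
      gcongr
    _ = ∑ n ∈ Finset.range X, q k D * (q D (k + 1) * (q (k + 1) D * (W (fun _ => 0) b M 0 D *
        ∑ V ∈ Ds, q (k + 1) V * Lx b M n V))) := by
      rw [← Finset.mul_sum, ← Finset.mul_sum, ← Finset.mul_sum, ← Finset.mul_sum, Finset.sum_comm]
      simp only [Finset.mul_sum]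
    _ ≤ _ := by
      refine Finset.sum_le_sum fun n _ => ?_
      have key := Aev_lower (x := n + 1) (h := h) (k := k) (M := M) (b := b) Ds (by omega) hk0 hkh (by omega)
        (by omega) (by omega) hVb
      have hsum : ∀ V, W (bonx (n + 1)) b (n + 1 - 1 + M) 1 V = Lx b M n V := by
        intro V
        rw [← W_Lx b M n 1 V, add_comm 1 n, Nat.add_sub_cancel]
      simp only [hsum] at key
      exact key

theorem trip_unique {h : ℕ} {b : ℕ → Bool} {t t' : ℕ} {x x' : ℕ} (hT : Trip 0 (fun _ => 0) h b t x x)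
    (hT' : Trip 0 (fun _ => 0) h b t' x' x') : t = t' ∧ x = x' := by
  have main : ∀ {t t' : ℕ} {x x' : ℕ}, Trip 0 (fun _ => 0) h b t x x →
      Trip 0 (fun _ => 0) h b t' x' x' → t ≤ t' → t = t' ∧ x = x' := by
    intro t t' x x' hT hT' htt
    have g : ∀ y : ℤ, (y = x ∨ y = x + 1 ∨ y = x + 2) → (y = x' ∨ y = x' + 1 ∨ y = x' + 2) := by
      intro y hy
      by_contra hc
      have h1 := hT.2.2 y
      have h2 := hT'.2.2 y
      rw [if_pos hy] at h1
      rw [if_neg hc] at h2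
      have := lt_mono 0 b y htt
      dsimp only at this
      omega
    have g1 := g x (by omega)
    have g2 := g (x + 2) (by omega)
    have hxx : x = x' := by omega
    subst hxx
    refine ⟨?_, rfl⟩
    by_contra hne
    obtain ⟨r, rfl⟩ : ∃ r, t' = r + 1 := ⟨t' - 1, by omega⟩
    have h1 := hT.2.2 x
    have h2 := hT'.2.2 x
    rw [if_pos (by omega)] at h1 h2
    have := lt_mono 0 b x (show t ≤ r by omega)
    dsimp only at this
    have h3 := hT'.1
    have h4 : lt 0 b (r+1) x = lt 0 b r x + if pos 0 b (r+1) = x then 1 else 0 := rfl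
    rw [if_pos h3] at h4
    simp only [zero_add] at h1 h2
    omega
  rcases le_total t t' with h' | h'
  · exact main hT hT' h'
  · have := main hT' hT h'; exact ⟨this.1.symm, this.2.symm⟩

def BB (h : ℕ) : Set (ℕ → Bool) := {b | ∃ t, ∃ x k, 1 ≤ x ∧ inJ h k ∧ Aev x h k t b}

theorem BB_meas (h : ℕ) : MeasurableSet (BB h) := by
  apply meas_ex
  rintro t f g hfg ⟨x, k, h1, h2, h3⟩
  exact ⟨x, k, h1, h2, h3.congr t f g hfg⟩

theorem BB_lower (h : ℕ) (hh : 1024 ≤ h) : (Real.exp (-144) / 4) ^ 4 / 5120 / h ≤ (sg ℕ).real (BB h) := by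
  classical
  obtain ⟨s, hs⟩ : ∃ s, s = Real.sqrt h := ⟨_, rfl⟩
  have hh' : (1024 : ℝ) ≤ h := by exact_mod_cast hh
  have hs32 : 32 ≤ s := by
    rw [hs]; apply Real.le_sqrt_of_sq_le; linarith
  have hss : s ^ 2 = h := by rw [hs]; exact Real.sq_sqrt (by positivity)
  obtain ⟨X, hX⟩ := sum_x_lower h s hs hs32
  set c := Real.exp (-144) / 4 with hc
  have hc0 : 0 < c := by positivity
  set Ks := Finset.Icc ⌈((h : ℝ) + s) / 2 + 1 / 8⌉₊ ⌊((h : ℝ) + 2 * s) / 2 - 1 / 8⌋₊ with hKs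
  have hK : ∀ k ∈ Ks, inJ h k := by
    intro k hk
    rw [hKs, Finset.mem_Icc] at hk
    have h1 := Nat.ceil_le.1 hk.1
    have h2 := (Nat.le_floor_iff (by nlinarith)).1 hk.2
    unfold inJ
    rw [← hs]
    constructor <;> linarith
  have hcard : s / 4 ≤ (Ks.card : ℝ) := by
    have := card_Icc_lower (((h : ℝ) + s) / 2 + 1 / 8) (((h : ℝ) + 2 * s) / 2 - 1 / 8) (by nlinarith) (by nlinarith)
    rw [← hKs] at this
    linarith
  have hsub : (⋃ p ∈ Ks ×ˢ Finset.range X, {b | ∃ t, Aev (p.2 + 1) h p.1 t b}) ⊆ BB h := by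
    intro b hb
    simp only [Set.mem_iUnion, exists_prop] at hb
    obtain ⟨p, hp, t, ht⟩ := hb
    exact ⟨t, p.2 + 1, p.1, by omega, hK _ (Finset.mem_product.1 hp).1, ht⟩
  refine le_trans ?_ (measureReal_mono hsub)
  rw [measureReal_biUnion_finset]
  · rw [Finset.sum_product]
    calc c ^ 4 / 5120 / h = (s / 4) * (c ^ 4 / (1280 * s ^ 3)) := by rw [← hss]; field_simp; norm_num
      _ ≤ Ks.card * (c ^ 4 / (1280 * s ^ 3)) := by gcongr
      _ = ∑ k ∈ Ks, (c ^ 4 / (1280 * s ^ 3)) := by rw [Finset.sum_const, nsmul_eq_mul]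
      _ ≤ _ := Finset.sum_le_sum fun k hk => hX k (hK k hk)
  · rintro ⟨k, n⟩ _ ⟨k', n'⟩ _ hne
    rw [Function.onFun, Set.disjoint_left]
    rintro b ⟨t, ht⟩ ⟨t', ht'⟩
    obtain ⟨e1, e2⟩ := trip_unique ht.1 ht'.1
    subst e1
    have e3 := ht.2.1
    have e4 := ht'.2.1
    dsimp only at *
    apply hne
    rw [e2] at e3
    have : k = k' := by omega
    have : n = n' := by omega
    subst_vars; rfl
  · exact fun p _ => Aev_meas _ _ _

end FavSites

set_option autoImplicit false
set_option linter.all false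
namespace FavSites
open MeasureTheory

def ext0 (t : ℕ) (v : Fin t → Bool) : ℕ → Bool := fun s => if h : s < t then v ⟨s, h⟩ else false

theorem smarkov_t {P : (ℕ → Bool) → Prop} (t : ℕ) (hP : ∀ f g, (∀ s, s < t → f s = g s) → P f → P g)
    (G : Set (ℕ → Bool)) (mG : MeasurableSet G) (c : ℝ) (hc : 0 ≤ c)
    (hF : ∀ w, P w → ∃ F, MeasurableSet F ∧ (sg ℕ).real F ≤ c ∧
      ∀ b, (∀ s, s < t → w s = b s) → b ∈ G → (fun i => b (t + i)) ∈ F) :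
    (sg ℕ).real ({b | P b} ∩ G) ≤ c * (sg ℕ).real {b | P b} := by
  classical
  set Vs := Finset.univ.filter (fun v : Fin t → Bool => P (ext0 t v)) with hVs
  have hEq : {b | P b} = ⋃ v ∈ Vs, cyl (Finset.range t) (ext0 t v) := by
    ext b
    simp only [Set.mem_iUnion, exists_prop, Set.mem_ofPred_eq, cyl, Finset.mem_range, hVs, Finset.mem_filter, Finset.mem_univ, true_and]
    constructor
    · intro hb
      have : ∀ s, s < t → b s = ext0 t (fun i => b i) s := by
        intro s hs; simp [ext0, hs]
      exact ⟨fun i => b i, hP _ _ this hb, this⟩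
    · rintro ⟨v, hv, hb⟩
      exact hP _ _ (fun s hs => (hb s hs).symm) hv
  have h1 : (sg ℕ).real {b | P b} = ∑ v ∈ Vs, (sg ℕ).real (cyl (Finset.range t) (ext0 t v)) := by
    rw [hEq, measureReal_biUnion_finset]
    · intro v _ v' _ hne
      rw [Function.onFun, Set.disjoint_left]
      intro b hb hb'
      apply hne
      ext i
      have e1 := hb i (Finset.mem_range.2 i.2)
      have e2 := hb' i (Finset.mem_range.2 i.2)
      rw [e1] at e2
      simpa [ext0] using e2
    · exact fun v _ => cyl_meas _ _
  have h2 : ({b | P b} ∩ G) = ⋃ v ∈ Vs, (cyl (Finset.range t) (ext0 t v) ∩ G) := by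
    rw [hEq]; simp only [Set.iUnion_inter]
  rw [h2, h1, Finset.mul_sum]
  refine (measureReal_biUnion_finset_le _ _).trans (Finset.sum_le_sum fun v hv => ?_)
  obtain ⟨F, mF, hFc, hFG⟩ := hF _ (Finset.mem_filter.1 hv).2
  calc (sg ℕ).real (cyl (Finset.range t) (ext0 t v) ∩ G)
      ≤ (sg ℕ).real (cyl (Finset.range t) (ext0 t v) ∩ {b | (fun i => b (t + i)) ∈ F}) := by
        refine measureReal_mono ?_
        rintro b ⟨hb, hbG⟩
        exact ⟨hb, hFG b (fun s hs => (hb s (Finset.mem_range.2 hs)).symm) hbG⟩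
    _ = (sg ℕ).real (cyl (Finset.range t) (ext0 t v)) * (sg ℕ).real F := markov _ _ mF
    _ ≤ c * _ := by
      rw [mul_comm]
      exact mul_le_mul_of_nonneg_right hFc measureReal_nonneg

theorem smarkov {P : ℕ → (ℕ → Bool) → Prop} (hP : ∀ t f g, (∀ s, s < t → f s = g s) → P t f → P t g)
    (hu : ∀ t t' b, P t b → P t' b → t = t')
    (G : Set (ℕ → Bool)) (mG : MeasurableSet G) (c : ℝ) (hc : 0 ≤ c)
    (hF : ∀ t w, P t w → ∃ F, MeasurableSet F ∧ (sg ℕ).real F ≤ c ∧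
      ∀ b, (∀ s, s < t → w s = b s) → b ∈ G → (fun i => b (t + i)) ∈ F) :
    (sg ℕ).real ({b | ∃ t, P t b} ∩ G) ≤ c * (sg ℕ).real {b | ∃ t, P t b} := by
  have e : {b | ∃ t, P t b} = ⋃ t, {b | P t b} := by ext b; simp
  have key : (sg ℕ) ({b | ∃ t, P t b} ∩ G) ≤ ENNReal.ofReal c * (sg ℕ) {b | ∃ t, P t b} := by
    rw [e, Set.iUnion_inter]
    refine (measure_iUnion_le _).trans ?_
    rw [measure_iUnion, ← ENNReal.tsum_mul_left]
    · refine ENNReal.tsum_le_tsum fun t => ?_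
      have := smarkov_t t (hP t) G mG c hc (hF t)
      rw [Measure.real, Measure.real] at this
      rw [← ENNReal.ofReal_toReal (measure_ne_top (sg ℕ) {b | P t b}), ← ENNReal.ofReal_mul hc,
        ← ENNReal.ofReal_toReal (measure_ne_top (sg ℕ) ({b | P t b} ∩ G))]
      exact ENNReal.ofReal_le_ofReal this
    · intro t t' hne
      rw [Function.onFun, Set.disjoint_left]
      exact fun b h1 h2 => hne (hu t t' b h1 h2)
    · exact fun t => meas_fstbits t (hP t)
  have := ENNReal.toReal_mono (ENNReal.mul_ne_top ENNReal.ofReal_ne_top (measure_ne_top _ _)) key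
  rwa [ENNReal.toReal_mul, ENNReal.toReal_ofReal hc] at this

theorem pos_shift (x0 : ℤ) (b : ℕ → Bool) (t i : ℕ) :
    pos x0 b (t + i) = pos (pos x0 b t) (fun j => b (t + j)) i := by
  induction i with
  | zero => rfl
  | succ i ih => rw [← add_assoc]; simp only [pos, ih]

theorem lt_shift (x0 : ℤ) (b : ℕ → Bool) (t i : ℕ) (y : ℤ) :
    lt x0 b (t + i) y = lt x0 b t y + lt (pos x0 b t) (fun j => b (t + j)) i y := by
  induction i with
  | zero => rfl
  | succ i ih =>
    have h1 : lt x0 b (t + (i + 1)) y = lt x0 b (t + i) y + if pos x0 b (t + (i + 1)) = y then 1 else 0 := rfl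
    rw [h1, ih, pos_shift, add_assoc]; rfl

theorem trip_meas (x0 : ℤ) (l0 : ℤ → ℕ) (h : ℕ) : MeasurableSet {b | ∃ t a e, Trip x0 l0 h b t a e} := by
  apply meas_ex
  rintro t f g hfg ⟨a, e, hT⟩
  exact ⟨a, e, hT.congr hfg⟩

theorem BB_upper (h : ℕ) (hh : 1 ≤ h) : (sg ℕ).real (BB h) ≤ 4608 / h := by
  refine le_trans ?_ (trip_bound (x0 := 0) (l0 := fun _ => 0) (h := h) (m := h) hh (fun y => by simp))
  refine measureReal_mono ?_
  rintro b ⟨t, x, k, _, _, hA⟩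
  exact ⟨t, x, x, hA.1⟩

theorem BB_pair (h h' : ℕ) (hh : h < h') :
    (sg ℕ).real (BB h ∩ BB h') ≤ 4608 / ((h' - h : ℕ) : ℝ) * (sg ℕ).real (BB h) := by
  refine smarkov (P := fun t b => ∃ x k, 1 ≤ x ∧ inJ h k ∧ Aev x h k t b) ?_ ?_ _ (BB_meas h') _ (by positivity) ?_
  · rintro t f g hfg ⟨x, k, h1, h2, h3⟩
    exact ⟨x, k, h1, h2, h3.congr t f g hfg⟩
  · rintro t t' b ⟨x, k, _, _, hA⟩ ⟨x', k', _, _, hA'⟩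
    exact (trip_unique hA.1 hA'.1).1
  · rintro t w ⟨x, k, _, _, hA⟩
    have hle : ∀ y, lt 0 w t y ≤ h := by
      intro y
      have := hA.1.2.2 y
      simp only [zero_add] at this
      split_ifs at this <;> omega
    refine ⟨{b | ∃ s a e, Trip (pos 0 w t) (fun y => lt 0 w t y) h' b s a e}, trip_meas _ _ _, ?_, ?_⟩
    · exact trip_bound (by omega) (fun y => by have := hle y; omega)
    · rintro b hb ⟨t', x', k', _, _, hA'⟩
      have htt : t ≤ t' := by
        by_contra hc
        have h1 := hA'.1.2.2 x'
        simp only [zero_add, true_or, if_true] at h1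
        have h2 := lt_mono 0 b x' (show t' ≤ t by omega)
        dsimp only at h2
        rw [← lt_congr hb] at h2
        have := hle x'
        omega
      obtain ⟨i, rfl⟩ := Nat.exists_eq_add_of_le htt
      refine ⟨i, x', x', ?_, Or.inl rfl, fun y => ?_⟩
      · rw [pos_congr hb, ← pos_shift]; exact hA'.1.1
      · have h1 := hA'.1.2.2 y
        simp only [zero_add] at h1
        rw [lt_shift] at h1
        dsimp only
        rw [pos_congr hb, lt_congr hb]
        exact h1

end FavSites

set_option autoImplicit false
set_option linter.all false
namespace FavSites
open MeasureTheory

theorem second_moment {α : Type*} [MeasurableSpace α] (ν : Measure α) [IsProbabilityMeasure ν]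
    (I : Finset ℕ) (B : ℕ → Set α) (mB : ∀ h, MeasurableSet (B h)) :
    (∑ h ∈ I, ν.real (B h)) ^ 2 ≤ ν.real (⋃ h ∈ I, B h) * ∑ h ∈ I, ∑ h' ∈ I, ν.real (B h ∩ B h') := by
  classical
  set U := ⋃ h ∈ I, B h with hU
  have mU : MeasurableSet U := Finset.measurableSet_biUnion _ fun h _ => mB h
  have hintg : ∀ s : Set α, MeasurableSet s → Integrable (s.indicator (fun _ => (1 : ℝ))) ν :=
    fun s hs => (integrable_const 1).indicator hs
  have hval : ∀ s : Set α, MeasurableSet s → ∫ a, s.indicator (fun _ => (1 : ℝ)) a ∂ν = ν.real s := by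
    intro s hs
    rw [integral_indicator hs]; simp
  have key : ∀ l : ℝ, 0 ≤ ν.real U * (l * l) + (-2 * ∑ h ∈ I, ν.real (B h)) * l +
      ∑ h ∈ I, ∑ h' ∈ I, ν.real (B h ∩ B h') := by
    intro l
    have h0 : 0 ≤ ∫ a, ((∑ h ∈ I, ∑ h' ∈ I, (B h ∩ B h').indicator (fun _ => (1 : ℝ)) a)
        - (2 * l) * (∑ h ∈ I, (B h).indicator (fun _ => (1 : ℝ)) a) + (l * l) * U.indicator (fun _ => (1 : ℝ)) a) ∂ν := by
      apply integral_nonneg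
      intro a
      dsimp only [Pi.zero_apply]
      set X := ∑ h ∈ I, (B h).indicator (fun _ => (1 : ℝ)) a with hX
      have e1 : (∑ h ∈ I, ∑ h' ∈ I, (B h ∩ B h').indicator (fun _ => (1 : ℝ)) a) = X * X := by
        rw [hX, Finset.sum_mul_sum]
        refine Finset.sum_congr rfl fun h _ => Finset.sum_congr rfl fun h' _ => ?_
        by_cases h1 : a ∈ B h <;> by_cases h2 : a ∈ B h' <;> simp [Set.indicator, h1, h2]
      rw [e1]
      by_cases ha : a ∈ U
      · rw [Set.indicator_of_mem ha]; nlinarith [sq_nonneg (X - l)]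
      · have : X = 0 := by
          rw [hX]
          refine Finset.sum_eq_zero fun h hh => Set.indicator_of_notMem (fun hb => ha ?_) _
          rw [hU]; exact Set.mem_biUnion hh hb
        rw [Set.indicator_of_notMem ha, this]; simp
    have i1 : Integrable (fun a => ∑ h ∈ I, ∑ h' ∈ I, (B h ∩ B h').indicator (fun _ => (1 : ℝ)) a) ν :=
      integrable_finsetSum _ fun h _ => integrable_finsetSum _ fun h' _ => hintg _ ((mB h).inter (mB h'))
    have i2 : Integrable (fun a => ∑ h ∈ I, (B h).indicator (fun _ => (1 : ℝ)) a) ν :=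
      integrable_finsetSum _ fun h _ => hintg _ (mB h)
    have i3 : Integrable (fun a => (∑ h ∈ I, ∑ h' ∈ I, (B h ∩ B h').indicator (fun _ => (1 : ℝ)) a) -
        (2 * l) * ∑ h ∈ I, (B h).indicator (fun _ => (1 : ℝ)) a) ν := i1.sub (i2.const_mul _)
    rw [integral_add i3 ((hintg U mU).const_mul _), integral_sub i1 (i2.const_mul _),
      integral_const_mul, integral_const_mul, hval U mU,
      integral_finsetSum _ (fun h _ => hintg _ (mB h)),
      integral_finsetSum _ (fun h _ => integrable_finsetSum _ fun h' _ => hintg _ ((mB h).inter (mB h')))] at h0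
    have e2 : ∀ h, ∫ a, ∑ h' ∈ I, (B h ∩ B h').indicator (fun _ => (1 : ℝ)) a ∂ν = ∑ h' ∈ I, ν.real (B h ∩ B h') := by
      intro h
      rw [integral_finsetSum _ fun h' _ => hintg _ ((mB h).inter (mB h'))]
      exact Finset.sum_congr rfl fun h' _ => hval _ ((mB h).inter (mB h'))
    simp only [e2, hval _ (mB _)] at h0
    linarith
  have := discrim_le_zero key
  rw [discrim] at this
  nlinarith

noncomputable def Kh (H : ℕ) : ℝ := ∑ i ∈ Finset.range H, 1 / ((i : ℝ) + 1)

theorem Kh_mono {a b : ℕ} (h : a ≤ b) : Kh a ≤ Kh b := by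
  unfold Kh
  exact Finset.sum_le_sum_of_subset_of_nonneg (Finset.range_mono h) fun i _ _ => by positivity

theorem Kh_nonneg (a : ℕ) : 0 ≤ Kh a := Finset.sum_nonneg fun i _ => by positivity

theorem sum_inner (C : ℝ) (h H : ℕ) :
    ∑ h' ∈ Finset.range H, (if h < h' then C / ((h' - h : ℕ) : ℝ) else 0) = C * Kh (H - h - 1) := by
  induction H with
  | zero => simp [Kh]
  | succ H ih =>
    rw [Finset.sum_range_succ, ih]
    split_ifs with hc
    · rw [show H + 1 - h - 1 = (H - h - 1) + 1 by omega]
      conv_rhs => rw [Kh, Finset.sum_range_succ, ← Kh]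
      have : ((H - h : ℕ) : ℝ) = ((H - h - 1 : ℕ) : ℝ) + 1 := by
        exact_mod_cast (by omega : H - h = H - h - 1 + 1)
      rw [this]; ring
    · rw [show H + 1 - h - 1 = H - h - 1 by omega, add_zero]

theorem tail_lower : ∃ δ : ℝ, 0 < δ ∧ ∀ n, δ ≤ (sg ℕ).real (⋃ h, ⋃ (_ : n ≤ h), BB h) := by
  set c := (Real.exp (-144) / 4) ^ 4 / 5120 with hc
  have hc0 : 0 < c := by positivity
  set C : ℝ := 4608 with hC
  refine ⟨c / (2 * (1 + 2 * C)), by positivity, ?_⟩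
  suffices hs : ∀ n, 1024 ≤ n → c / (2 * (1 + 2 * C)) ≤ (sg ℕ).real (⋃ h, ⋃ (_ : n ≤ h), BB h) by
    intro n
    refine (hs (max n 1024) (le_max_right _ _)).trans (measureReal_mono ?_ (measure_ne_top _ _))
    intro b hb
    simp only [Set.mem_iUnion, exists_prop] at *
    obtain ⟨h, h1, h2⟩ := hb
    exact ⟨h, le_trans (le_max_left _ _) h1, h2⟩
  intro n hn
  have ht := Real.tendsto_sum_range_one_div_nat_succ_atTop
  obtain ⟨H, hH⟩ := (ht.eventually_ge_atTop (max 1 (2 * Kh n))).exists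
  change _ ≤ Kh H at hH
  have hH1 : 1 ≤ Kh H := le_trans (le_max_left _ _) hH
  have hH2 : 2 * Kh n ≤ Kh H := le_trans (le_max_right _ _) hH
  have hnH : n ≤ H := by
    by_contra hcon
    have := Kh_mono (show H ≤ n by omega)
    linarith
  set I := Finset.Ico n H with hI
  set p : ℕ → ℝ := fun h => (sg ℕ).real (BB h) with hp
  set s := ∑ h ∈ I, p h with hs
  have hp0 : ∀ h, 0 ≤ p h := fun h => measureReal_nonneg
  have hlow : c * (Kh H - Kh n) ≤ s := by
    rw [Kh, Kh, ← Finset.sum_Ico_eq_sub _ hnH, Finset.mul_sum]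
    refine Finset.sum_le_sum fun h hh => ?_
    have := BB_lower h (by have := (Finset.mem_Ico.1 hh).1; omega)
    refine le_trans ?_ this
    rw [← hc, mul_one_div]
    have : (0 : ℝ) < h := by exact_mod_cast (by have := (Finset.mem_Ico.1 hh).1; omega : 0 < h)
    gcongr
    linarith
  have hs0 : 0 < s := lt_of_lt_of_le (mul_pos hc0 (by linarith)) hlow
  have hpair : ∀ h h', (sg ℕ).real (BB h ∩ BB h') ≤ (if h = h' then p h else 0) +
      (if h < h' then C / ((h' - h : ℕ) : ℝ) else 0) * p h + (if h' < h then C / ((h - h' : ℕ) : ℝ) else 0) * p h' := by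
    intro h h'
    rcases lt_trichotomy h h' with h1 | h1 | h1
    · rw [if_neg (by omega), if_pos h1, if_neg (by omega)]
      have := BB_pair h h' h1
      simpa using this
    · subst h1
      simp [hp]
    · rw [if_neg (by omega), if_neg (by omega), if_pos h1]
      have := BB_pair h' h h1
      rw [Set.inter_comm] at this
      simpa using this
  have hinner : ∀ h, ∑ h' ∈ I, (if h < h' then C / ((h' - h : ℕ) : ℝ) else 0) ≤ C * Kh H := by
    intro h
    calc _ ≤ ∑ h' ∈ Finset.range H, (if h < h' then C / ((h' - h : ℕ) : ℝ) else 0) := by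
          refine Finset.sum_le_sum_of_subset_of_nonneg ?_ ?_
          · intro i hi; rw [hI, Finset.mem_Ico] at hi; exact Finset.mem_range.2 hi.2
          · intro i _ _; split_ifs <;> positivity
      _ = C * Kh (H - h - 1) := sum_inner C h H
      _ ≤ _ := by
        have := Kh_mono (show H - h - 1 ≤ H by omega)
        gcongr
  have hsec : ∑ h ∈ I, ∑ h' ∈ I, (sg ℕ).real (BB h ∩ BB h') ≤ s * (1 + 2 * (C * Kh H)) := by
    have hA : ∑ h ∈ I, ∑ h' ∈ I, (if h < h' then C / ((h' - h : ℕ) : ℝ) else 0) * p h ≤ s * (C * Kh H) := by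
      rw [hs, Finset.sum_mul]
      refine Finset.sum_le_sum fun h _ => ?_
      rw [← Finset.sum_mul, mul_comm]
      exact mul_le_mul_of_nonneg_left (hinner h) (hp0 h)
    have hB : ∑ h ∈ I, ∑ h' ∈ I, (if h' < h then C / ((h - h' : ℕ) : ℝ) else 0) * p h' ≤ s * (C * Kh H) := by
      rw [Finset.sum_comm]; exact hA
    have hD : ∑ h ∈ I, ∑ h' ∈ I, (if h = h' then p h else 0) = s := by
      refine Finset.sum_congr rfl fun h hh => ?_
      rw [Finset.sum_ite_eq, if_pos hh]
    calc _ ≤ ∑ h ∈ I, ∑ h' ∈ I, ((if h = h' then p h else 0) +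
      (if h < h' then C / ((h' - h : ℕ) : ℝ) else 0) * p h + (if h' < h then C / ((h - h' : ℕ) : ℝ) else 0) * p h') :=
          Finset.sum_le_sum fun h _ => Finset.sum_le_sum fun h' _ => hpair h h'
      _ = s + ∑ h ∈ I, ∑ h' ∈ I, (if h < h' then C / ((h' - h : ℕ) : ℝ) else 0) * p h
          + ∑ h ∈ I, ∑ h' ∈ I, (if h' < h then C / ((h - h' : ℕ) : ℝ) else 0) * p h' := by
          simp only [Finset.sum_add_distrib]; rw [hD]
      _ ≤ _ := by linarith
  have hsm := second_moment (sg ℕ) I BB BB_meas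
  set u := (sg ℕ).real (⋃ h ∈ I, BB h) with hu
  have hu0 : 0 ≤ u := measureReal_nonneg
  have h1 : s ^ 2 ≤ u * (s * (1 + 2 * (C * Kh H))) := hsm.trans (mul_le_mul_of_nonneg_left hsec hu0)
  have h2 : s ≤ u * (1 + 2 * (C * Kh H)) := by
    have : s * s ≤ s * (u * (1 + 2 * (C * Kh H))) := by linarith
    exact le_of_mul_le_mul_left this hs0
  have h3 : c * Kh H / 2 ≤ u * ((1 + 2 * C) * Kh H) := by
    have e1 : c * (Kh H / 2) ≤ c * (Kh H - Kh n) := by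
      apply mul_le_mul_of_nonneg_left _ hc0.le; linarith
    have e2 : u * (1 + 2 * (C * Kh H)) ≤ u * ((1 + 2 * C) * Kh H) := by
      apply mul_le_mul_of_nonneg_left _ hu0; linarith
    linarith
  have h4 : c / (2 * (1 + 2 * C)) ≤ u := by
    rw [div_le_iff₀ (by positivity)]
    have : Kh H * c ≤ Kh H * (u * (2 * (1 + 2 * C))) := by linarith
    exact le_of_mul_le_mul_left this (by linarith)
  refine h4.trans (measureReal_mono ?_ (measure_ne_top _ _))
  intro b hb
  simp only [Set.mem_iUnion, exists_prop] at *
  obtain ⟨h, h1, h2⟩ := hb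
  exact ⟨h, (Finset.mem_Ico.1 h1).1, h2⟩

theorem limsup_lower : ∃ δ : ℝ, 0 < δ ∧ ENNReal.ofReal δ ≤ (sg ℕ) (⋂ n, ⋃ h, ⋃ (_ : n ≤ h), BB h) := by
  obtain ⟨δ, h0, hδ⟩ := tail_lower
  refine ⟨δ, h0, ?_⟩
  have ht : Filter.Tendsto (fun n => (sg ℕ) (⋃ h, ⋃ (_ : n ≤ h), BB h)) Filter.atTop
      (nhds ((sg ℕ) (⋂ n, ⋃ h, ⋃ (_ : n ≤ h), BB h))) := by
    apply tendsto_measure_iInter_atTop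
    · intro n
      exact (MeasurableSet.iUnion fun h => MeasurableSet.iUnion fun _ => BB_meas h).nullMeasurableSet
    · intro n n' hnn b hb
      simp only [Set.mem_iUnion, exists_prop] at *
      obtain ⟨h, h1, h2⟩ := hb
      exact ⟨h, le_trans hnn h1, h2⟩
    · exact ⟨0, measure_ne_top _ _⟩
  refine ge_of_tendsto' ht fun n => ?_
  rw [← ENNReal.ofReal_toReal (measure_ne_top (sg ℕ) (⋃ h, ⋃ (_ : n ≤ h), BB h))]
  exact ENNReal.ofReal_le_ofReal (hδ n)

end FavSites

set_option autoImplicit false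
set_option linter.all false
namespace FavSites
open MeasureTheory

theorem card_step (p : ℕ → Prop) [DecidablePred p] (t : ℕ) :
    ((Finset.Icc 1 (t + 1)).filter p).card = ((Finset.Icc 1 t).filter p).card + if p (t + 1) then 1 else 0 := by
  have : Finset.Icc 1 (t + 1) = insert (t + 1) (Finset.Icc 1 t) := by
    ext i; simp only [Finset.mem_Icc, Finset.mem_insert]; omega
  rw [this, Finset.filter_insert]
  split_ifs
  · rw [Finset.card_insert_of_notMem]; simp
  · rfl

end FavSites

open MeasureTheory ProbabilityTheory
open scoped Classical ENNReal

/-- There is a constant `δ > 0` such that `P(N = ∞) ≥ δ`, where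
`N = lim_{H→∞} N_H = Σ_{h=1}^∞ Σ_{k ∈ I_h ∩ ℤ} Σ_{x=1}^∞ 1_{A_{x,h}^{(k)}}`. -/
theorem N_infinite_with_positive_probability
    {Ω : Type*} [MeasurableSpace Ω] (μ : Measure Ω) [IsProbabilityMeasure μ]
    -- i.i.d. steps, each uniform on {−1, 1}
    (ξ : ℕ → Ω → ℤ) (hξmeas : ∀ i, Measurable (ξ i))
    (hξindep : iIndepFun ξ μ)
    (hξ1 : ∀ i, μ {ω | ξ i ω = 1} = 1 / 2)
    (hξ2 : ∀ i, μ {ω | ξ i ω = -1} = 1 / 2)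
    -- the simple random walk
    (S : ℕ → Ω → ℤ) (hS : ∀ t ω, S t ω = ∑ i ∈ Finset.range t, ξ i ω)
    -- local times
    (L : ℕ → ℤ → Ω → ℕ)
    (hL : ∀ t x ω, L t x ω = ((Finset.Icc 1 t).filter fun k => S k ω = x).card)
    -- favorite (most visited) sites
    (Fav : ℕ → Ω → Set ℤ)
    (hFav : ∀ t ω, Fav t ω = {y : ℤ | ∀ z : ℤ, L t z ω ≤ L t y ω})
    -- upcrossing counts
    (U : ℕ → ℤ → Ω → ℕ)
    (hU : ∀ t x ω, U t x ω =
      ((Finset.Icc 1 t).filter fun k => S k ω = x ∧ S (k - 1) ω = x - 1).card)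
    -- inverse upcrossing local times
    (TU : ℕ → ℤ → Ω → ℕ)
    (hTU : ∀ k x ω, TU k x ω = sInf {t : ℕ | 1 ≤ t ∧ U t x ω = k})
    -- the event of three consecutive favorite sites x, x+1, x+2, with local time h at x,
    -- at the inverse upcrossing time T_U(k+1, x)
    (A : ℕ → ℕ → ℕ → Set Ω)
    (hA : ∀ x h k, A x h k = {ω |
      Fav (TU (k + 1) (x : ℤ) ω) ω = {(x : ℤ), (x : ℤ) + 1, (x : ℤ) + 2} ∧
      L (TU (k + 1) (x : ℤ) ω) (x : ℤ) ω = h})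
    -- membership of k in the window I_h = ((h+√h)/2, (h+2√h)/2)
    (inI : ℕ → ℕ → Prop)
    (hinI : ∀ h k, inI h k ↔
      ((h : ℝ) + Real.sqrt h) / 2 < (k : ℝ) ∧ (k : ℝ) < ((h : ℝ) + 2 * Real.sqrt h) / 2)
    -- the count N of instances of three consecutive favorite sites
    (N : Ω → ℝ≥0∞)
    (hN : ∀ ω, N ω = ∑' (h : ℕ) (k : ℕ) (x : ℕ),
      if 1 ≤ h ∧ 1 ≤ x ∧ inI h k ∧ ω ∈ A x h k then (1 : ℝ≥0∞) else 0) :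
    ∃ δ : ℝ, 0 < δ ∧ ENNReal.ofReal δ ≤ μ {ω | N ω = ∞} := by
  set β : Ω → ℕ → Bool := fun ω i => decide (ξ i ω = 1) with hβ
  have hβm : Measurable β := by
    rw [measurable_pi_iff]
    intro i
    have : Measurable (fun z : ℤ => decide (z = 1)) := measurable_of_countable _
    exact this.comp (hξmeas i)
  have hmap : μ.map β = FavSites.sg ℕ := by
    have : IsProbabilityMeasure (μ.map β) := Measure.isProbabilityMeasure_map hβm.aemeasurable
    apply FavSites.eq_sg
    intro s w
    rw [Measure.map_apply hβm (FavSites.cyl_meas s w)]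
    have e : β ⁻¹' FavSites.cyl s w = ⋂ i ∈ s, (ξ i) ⁻¹' (if w i = true then {1} else {1}ᶜ) := by
      ext ω
      simp only [Set.mem_preimage, FavSites.cyl, Set.mem_ofPred_eq, Set.mem_iInter]
      refine forall₂_congr fun i _ => ?_
      cases hw : w i <;> simp [hβ]
    rw [e, hξindep.measure_inter_preimage_eq_mul _ (fun i _ => by split_ifs <;> measurability)]
    rw [Finset.prod_congr rfl (g := fun _ => (2 : ℝ≥0∞)⁻¹), Finset.prod_const]
    intro i _
    have h1 : μ (ξ i ⁻¹' {1}) = 2⁻¹ := by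
      have := hξ1 i
      rw [one_div] at this
      exact this
    split_ifs
    · exact h1
    · rw [Set.preimage_compl, prob_compl_eq_one_sub ((hξmeas i) (measurableSet_singleton 1)), h1]
      exact ENNReal.one_sub_inv_two
  have hae : ∀ᵐ ω ∂μ, ∀ i, ξ i ω = 1 ∨ ξ i ω = -1 := by
    rw [ae_all_iff]
    intro i
    have m1 : MeasurableSet {ω | ξ i ω = 1} := (hξmeas i) (measurableSet_singleton 1)
    have m2 : MeasurableSet {ω | ξ i ω = -1} := (hξmeas i) (measurableSet_singleton (-1))
    have hu : μ ({ω | ξ i ω = 1} ∪ {ω | ξ i ω = -1}) = 1 := by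
      rw [measure_union _ m2, hξ1, hξ2, ENNReal.add_halves]
      rw [Set.disjoint_left]
      intro ω h1 h2
      simp only [Set.mem_ofPred_eq] at h1 h2
      omega
    rw [← prob_compl_eq_zero_iff (m1.union m2)] at hu
    exact hu
  obtain ⟨δ, hδ0, hδ⟩ := FavSites.limsup_lower
  refine ⟨δ, hδ0, hδ.trans ?_⟩
  have mLS : MeasurableSet (⋂ n, ⋃ h, ⋃ (_ : n ≤ h), FavSites.BB h) :=
    MeasurableSet.iInter fun n => MeasurableSet.iUnion fun h => MeasurableSet.iUnion fun _ => FavSites.BB_meas h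
  rw [← hmap, Measure.map_apply hβm mLS]
  apply measure_mono_ae
  filter_upwards [hae] with ω hω hlim
  have hlim' : ∀ n, ∃ h, n ≤ h ∧ β ω ∈ FavSites.BB h := by
    intro n
    have := Set.mem_iInter.1 hlim n
    simpa only [Set.mem_iUnion, exists_prop] using this
  have hst : ∀ i, ξ i ω = FavSites.stp (β ω i) := by
    intro i
    rcases hω i with h | h <;> simp [hβ, FavSites.stp, h]
  have hSp : ∀ t, S t ω = FavSites.pos 0 (β ω) t := by
    intro t
    rw [hS]
    induction t with
    | zero => rfl
    | succ t ih => rw [Finset.sum_range_succ, ih, hst]; rfl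
  have hLl : ∀ t y, L t y ω = FavSites.lt 0 (β ω) t y := by
    intro t y
    rw [hL]
    induction t with
    | zero => rfl
    | succ t ih =>
      rw [FavSites.card_step, ih, hSp]
      rfl
  have hUu : ∀ t y, U t y ω = FavSites.up 0 (β ω) t (y - 1) := by
    intro t y
    rw [hU]
    induction t with
    | zero => rfl
    | succ t ih =>
      rw [FavSites.card_step, ih, Nat.add_sub_cancel, hSp, hSp]
      simp only [FavSites.up, FavSites.pos, FavSites.stp]
      congr 1
      refine if_congr ?_ rfl rfl
      by_cases hb : β ω t = true
      · rw [if_pos hb]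
        constructor
        · exact fun h => ⟨h.2, hb⟩
        · exact fun h => ⟨by omega, h.1⟩
      · rw [if_neg hb]
        constructor
        · intro h; omega
        · exact fun h => absurd h.2 hb
  have hone : ∀ h, 1 ≤ h → β ω ∈ FavSites.BB h → (1 : ℝ≥0∞) ≤ ∑' (k : ℕ) (x : ℕ),
      if 1 ≤ h ∧ 1 ≤ x ∧ inI h k ∧ ω ∈ A x h k then (1 : ℝ≥0∞) else 0 := by
    rintro h hh ⟨t, x, k, hx, hk, hT, hup, hmin⟩
    have hTU' : TU (k + 1) (x : ℤ) ω = t := by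
      rw [hTU]
      have ht1 : 1 ≤ t := by
        rcases Nat.eq_zero_or_pos t with rfl | h'
        · simp only [FavSites.up] at hup; omega
        · exact h'
      have hmem : t ∈ {t : ℕ | 1 ≤ t ∧ U t x ω = k + 1} := ⟨ht1, by rw [hUu]; exact hup⟩
      apply le_antisymm (Nat.sInf_le hmem)
      apply le_csInf ⟨t, hmem⟩
      rintro s ⟨_, hs⟩
      rw [hUu] at hs
      by_contra hc
      have := hmin s (by omega)
      omega
    have hT3 := hT.2.2
    simp only [zero_add] at hT3
    have hmemA : ω ∈ A x h k := by
      rw [hA]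
      refine ⟨?_, ?_⟩
      · rw [hTU', hFav]
        ext y
        simp only [Set.mem_ofPred_eq, Set.mem_insert_iff, Set.mem_singleton_iff, hLl]
        constructor
        · intro hy
          by_contra hc
          have h1 := hT3 y
          rw [if_neg hc] at h1
          have h2 := hT3 x
          rw [if_pos (Or.inl rfl)] at h2
          have := hy x
          omega
        · intro hy z
          have h1 := hT3 y
          rw [if_pos hy] at h1
          have h2 := hT3 z
          rw [h1]
          split_ifs at h2 <;> omega
      · rw [hTU', hLl]
        have h2 := hT3 x
        rwa [if_pos (Or.inl rfl)] at h2
    have hI : inI h k := (hinI h k).2 hk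
    refine le_trans ?_ (ENNReal.le_tsum k)
    refine le_trans ?_ (ENNReal.le_tsum x)
    rw [if_pos ⟨hh, hx, hI, hmemA⟩]
  change N ω = ∞
  rw [hN]
  by_contra hne
  have hfin := ENNReal.finite_const_le_of_tsum_ne_top hne one_ne_zero
  obtain ⟨M, hM⟩ := hfin.bddAbove
  obtain ⟨h, hh, hb⟩ := hlim' (M + 1)
  have := hM (hone h (by omega) hb)
  omega
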